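/- arXiv:1403.1126 — 2 statements merged into one kernel-verified Lean document; each statement's English description precedes it below -/
import Mathlib

section
/- Let I be an arbitrary index set, Ωᵢ ⊂ ℂ bounded domains with (closure Ωᵢ)° = Ωᵢ, ℂ \ closure(Ωᵢ) connected, and constants Mᵢ < ∞ so that any two points of Ωᵢ can be joined in Ωᵢ by a path of length at most Mᵢ. Then every function f : ∏ᵢ closure(Ωᵢ) → ℂ continuous in the product topology and separately holomorphic on ∏ᵢ Ωᵢ is a uniform limit of polynomials, each depending on finitely many of the variables. -/
/-- Two points are joined in `Ω` by a path of length at most `M`. -/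
def JoinedLe (Ω : Set ℂ) (M : ℝ) (z w : ℂ) : Prop :=
  ∃ γ : ℝ → ℂ, ContinuousOn γ (Set.Icc 0 1) ∧ γ 0 = z ∧ γ 1 = w ∧
    (∀ t ∈ Set.Icc (0:ℝ) 1, γ t ∈ Ω) ∧ eVariationOn γ (Set.Icc 0 1) ≤ ENNReal.ofReal M

section Aux

open Set Filter Topology MeasureTheory Metric

/-- uniform approximability on `K` by polynomials -/
def PolyApprox (K : Set ℂ) (h : ℂ → ℂ) : Prop :=
  ∀ ε > 0, ∃ p : Polynomial ℂ, ∀ z ∈ K, ‖p.eval z - h z‖ ≤ ε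

theorem PolyApprox.poly {K : Set ℂ} (p : Polynomial ℂ) : PolyApprox K (fun z => p.eval z) :=
  fun ε hε => ⟨p, fun z _ => by simpa using hε.le⟩

theorem PolyApprox.const {K : Set ℂ} (c : ℂ) : PolyApprox K (fun _ => c) :=
  fun ε hε => ⟨Polynomial.C c, fun z _ => by simpa using hε.le⟩

theorem PolyApprox.id {K : Set ℂ} : PolyApprox K (fun z => z) :=
  fun ε hε => ⟨Polynomial.X, fun z _ => by simpa using hε.le⟩

theorem PolyApprox.congr {K : Set ℂ} {f g : ℂ → ℂ} (hf : PolyApprox K f) (h : ∀ z ∈ K, g z = f z) :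
    PolyApprox K g := by
  intro ε hε
  obtain ⟨p, hp⟩ := hf ε hε
  exact ⟨p, fun z hz => by rw [h z hz]; exact hp z hz⟩

theorem PolyApprox.add {K : Set ℂ} {f g : ℂ → ℂ} (hf : PolyApprox K f) (hg : PolyApprox K g) :
    PolyApprox K (fun z => f z + g z) := by
  intro ε hε
  obtain ⟨p, hp⟩ := hf (ε / 2) (by positivity)
  obtain ⟨q, hq⟩ := hg (ε / 2) (by positivity)
  refine ⟨p + q, fun z hz => ?_⟩
  have := norm_add_le (p.eval z - f z) (q.eval z - g z)
  have h1 := hp z hz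
  have h2 := hq z hz
  rw [Polynomial.eval_add, show p.eval z + q.eval z - (f z + g z) = (p.eval z - f z) + (q.eval z - g z) by ring]
  linarith

theorem PolyApprox.bdd {K : Set ℂ} (hK : IsCompact K) {f : ℂ → ℂ} (hf : PolyApprox K f) :
    ∃ B > 0, ∀ z ∈ K, ‖f z‖ ≤ B := by
  obtain ⟨p, hp⟩ := hf 1 one_pos
  obtain ⟨C, hC⟩ := hK.exists_bound_of_continuousOn (f := fun z => p.eval z) p.continuous.continuousOn
  refine ⟨|C| + 1, by positivity, fun z hz => ?_⟩
  have h1 := hp z hz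
  have h2 := hC z hz
  have h3 : ‖f z‖ ≤ ‖p.eval z‖ + ‖p.eval z - f z‖ := by
    have := norm_sub_le (p.eval z) (p.eval z - f z)
    simpa using this
  have := le_abs_self C
  linarith

theorem PolyApprox.mul {K : Set ℂ} (hK : IsCompact K) {f g : ℂ → ℂ} (hf : PolyApprox K f)
    (hg : PolyApprox K g) : PolyApprox K (fun z => f z * g z) := by
  intro ε hε
  obtain ⟨B, hB0, hB⟩ := hg.bdd hK
  obtain ⟨p, hp⟩ := hf (ε / 2 / B) (by positivity)
  obtain ⟨C, hC⟩ := hK.exists_bound_of_continuousOn (f := fun z => p.eval z) p.continuous.continuousOn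
  obtain ⟨q, hq⟩ := hg (ε / 2 / (|C| + 1)) (by positivity)
  refine ⟨p * q, fun z hz => ?_⟩
  have h1 := hp z hz
  have h2 := hq z hz
  have h3 := hB z hz
  have h4 : ‖p.eval z‖ ≤ |C| + 1 := (hC z hz).trans ((le_abs_self C).trans (by linarith))
  rw [Polynomial.eval_mul, show p.eval z * q.eval z - (f z * g z) =
    p.eval z * (q.eval z - g z) + (p.eval z - f z) * g z by ring]
  calc _ ≤ ‖p.eval z * (q.eval z - g z)‖ + ‖(p.eval z - f z) * g z‖ := norm_add_le _ _
    _ = ‖p.eval z‖ * ‖q.eval z - g z‖ + ‖p.eval z - f z‖ * ‖g z‖ := by simp only [norm_mul]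
    _ ≤ (|C| + 1) * (ε / 2 / (|C| + 1)) + (ε / 2 / B) * B := by gcongr
    _ = ε := by field_simp; ring

theorem PolyApprox.sum {K : Set ℂ} {ι : Type*} (s : Finset ι) {f : ι → ℂ → ℂ}
    (hf : ∀ i ∈ s, PolyApprox K (f i)) : PolyApprox K (fun z => ∑ i ∈ s, f i z) := by
  classical
  induction s using Finset.induction_on with
  | empty => simpa using PolyApprox.const 0
  | insert a s ha ih =>
    simp only [Finset.sum_insert ha]
    exact (hf a (by simp)).add (ih fun i hi => hf i (by simp [hi]))

theorem PolyApprox.pow {K : Set ℂ} (hK : IsCompact K) {f : ℂ → ℂ} (hf : PolyApprox K f) (n : ℕ) :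
    PolyApprox K (fun z => f z ^ n) := by
  induction n with
  | zero => simpa using PolyApprox.const 1
  | succ n ih => simpa only [pow_succ] using ih.mul hK hf

theorem PolyApprox.of_lim {K : Set ℂ} {f : ℂ → ℂ}
    (h : ∀ ε > 0, ∃ g, PolyApprox K g ∧ ∀ z ∈ K, ‖g z - f z‖ ≤ ε) : PolyApprox K f := by
  intro ε hε
  obtain ⟨g, hg, hgf⟩ := h (ε / 2) (by positivity)
  obtain ⟨p, hp⟩ := hg (ε / 2) (by positivity)
  refine ⟨p, fun z hz => ?_⟩
  have := norm_add_le (p.eval z - g z) (g z - f z)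
  rw [sub_add_sub_cancel] at this
  have h1 := hp z hz
  have h2 := hgf z hz
  linarith

theorem PolyApprox.inv {K : Set ℂ} (hK : IsCompact K) (hc : IsConnected Kᶜ) {q : ℂ} (hq : q ∉ K) :
    PolyApprox K (fun z => (z - q)⁻¹) := by
  have : CompactSpace K := isCompact_iff_compactSpace.mp hK
  let S : Subalgebra ℂ C(K, ℂ) := (polynomialFunctions K).topologicalClosure
  have hS : IsClosed (S : Set C(K, ℂ)) := (polynomialFunctions K).isClosed_topologicalClosure
  let X : C(K, ℂ) := Polynomial.toContinuousMapOnAlgHom K Polynomial.X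
  have hX : X ∈ S := (polynomialFunctions K).le_topologicalClosure ⟨Polynomial.X, by simp, rfl⟩
  have hXv : ∀ z : K, X z = z := fun z => by simp [X]
  have hr : Set.range X = K := by
    ext z; constructor
    · rintro ⟨w, rfl⟩; rw [hXv]; exact w.2
    · intro hz; exact ⟨⟨z, hz⟩, hXv _⟩
  have hsp : spectrum ℂ X = K := by rw [ContinuousMap.spectrum_eq_range, hr]
  have hsp2 : spectrum ℂ (⟨X, hX⟩ : S) = K := by
    refine Eq.trans ?_ hsp
    have : CompleteSpace S := hS.completeSpace_coe
    have : IsClosed (S : Set C(K,ℂ)) := hS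
    exact Subalgebra.spectrum_eq_of_isPreconnected_compl S ⟨X, hX⟩ (by
      rw [hsp]; exact hc.isPreconnected)
  have hu : IsUnit (algebraMap ℂ S q - ⟨X, hX⟩) := by
    by_contra h
    exact hq (hsp2 ▸ (spectrum.mem_iff.mpr h))
  obtain ⟨v, hv⟩ := hu.exists_right_inv
  intro ε hε
  have hvS : (v : C(K, ℂ)) ∈ closure (polynomialFunctions K : Set C(K, ℂ)) := v.2
  obtain ⟨g, ⟨p, hp, hpg⟩, hgv⟩ := Metric.mem_closure_iff.mp hvS ε hε
  refine ⟨-p, fun z hz => ?_⟩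
  have h1 : (q - z) * (v : C(K, ℂ)) ⟨z, hz⟩ = 1 := by
    have := congrArg (fun a : S => (a : C(K, ℂ)) ⟨z, hz⟩) hv
    simpa [hXv] using this
  have hne : q - z ≠ 0 := left_ne_zero_of_mul_eq_one h1
  have h2 : (v : C(K, ℂ)) ⟨z, hz⟩ = -(z - q)⁻¹ := by
    rw [← inv_neg, neg_sub]; exact (eq_inv_of_mul_eq_one_right h1)
  have h3 := (ContinuousMap.dist_apply_le_dist (f := (v : C(K, ℂ))) (g := g) ⟨z, hz⟩).trans hgv.le
  have h4 : g ⟨z, hz⟩ = p.eval z := by rw [← hpg]; simp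
  rw [h2, h4, dist_eq_norm] at h3
  rw [Polynomial.eval_neg]
  refine le_of_eq_of_le (congrArg norm ?_) h3
  ring

/-- principal square root -/
noncomputable def msqrt (x : ℂ) : ℂ := x ^ (((2 : ℕ) : ℂ)⁻¹)

theorem msqrt_sq (x : ℂ) : msqrt x ^ 2 = x := Complex.cpow_nat_inv_pow x two_ne_zero

theorem msqrt_cont {x : ℂ} (hx : x ∈ Complex.slitPlane) : ContinuousAt msqrt x :=
  continuousAt_id.cpow continuousAt_const hx

theorem msqrt_one : msqrt 1 = 1 := by simp [msqrt]

theorem PolyApprox.sqrt {K : Set ℂ} (hK : IsCompact K) {h : ℂ → ℂ} (hh : PolyApprox K h)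
    (hb : ∀ z ∈ K, ‖h z‖ ≤ 1 / 2) : PolyApprox K (fun z => msqrt (1 + h z)) := by
  have hd : DifferentiableOn ℂ (fun w => msqrt (1 + w)) (Metric.closedBall 0 ((3 / 4 : NNReal) : ℝ)) := by
    intro w hw
    apply DifferentiableAt.differentiableWithinAt
    refine DifferentiableAt.cpow (by fun_prop) (by fun_prop) (Complex.mem_slitPlane_of_norm_lt_one ?_)
    have : ‖w‖ ≤ 3 / 4 := by simpa using hw
    linarith
  have hp := hd.hasFPowerSeriesOnBall (by positivity)
  apply PolyApprox.of_lim
  intro ε hε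
  have hu := hp.tendstoUniformlyOn (r' := 5 / 8) (by norm_cast; rw [← NNReal.coe_lt_coe]; push_cast; norm_num)
  rw [Metric.tendstoUniformlyOn_iff] at hu
  obtain ⟨n, hn⟩ := (hu ε hε).exists
  refine ⟨fun z => (cauchyPowerSeries (fun w => msqrt (1 + w)) 0 ((3 / 4 : NNReal) : ℝ)).partialSum n (h z),
    ?_, fun z hz => ?_⟩
  rotate_left
  · have := hn (h z) (by
      have := hb z hz
      simp; linarith)
    rw [zero_add, dist_comm, dist_eq_norm] at this
    exact this.le
  · simp only [FormalMultilinearSeries.partialSum, FormalMultilinearSeries.apply_eq_pow_smul_coeff, smul_eq_mul]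
    exact PolyApprox.sum _ fun i _ => (hh.pow hK i).mul hK (PolyApprox.const _)

/-- a branch of the square root of `(z-a)/(z-b)` -/
def GoodPair (K : Set ℂ) (c : ℂ) (δ : ℝ) (a b : ℂ) : Prop :=
  ∃ S : ℂ → ℂ, ContinuousOn S {z | 2 * δ ≤ ‖z - c‖} ∧ Tendsto S (Bornology.cobounded ℂ) (𝓝 1) ∧
    PolyApprox K S ∧ ∀ z, (z ∈ K ∨ 2 * δ ≤ ‖z - c‖) → S z ^ 2 = (z - a) / (z - b)

theorem GoodPair.refl {K : Set ℂ} {c : ℂ} {δ : ℝ} (hδ : 0 < δ) (hc : c ∉ K) : GoodPair K c δ c c := by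
  refine ⟨fun _ => 1, continuousOn_const, tendsto_const_nhds, PolyApprox.const 1, fun z hz => ?_⟩
  have : z - c ≠ 0 := by
    rcases hz with hz | hz
    · intro h; exact hc (by rwa [← sub_eq_zero.mp h])
    · intro h; rw [h, norm_zero] at hz; linarith
  field_simp

theorem GoodPair.trans {K : Set ℂ} (hK : IsCompact K) {c : ℂ} {δ : ℝ} {a b d : ℂ} (hb : b ∉ K)
    (hbc : ‖b - c‖ < 2 * δ) (h1 : GoodPair K c δ a b) (h2 : GoodPair K c δ b d) : GoodPair K c δ a d := by
  obtain ⟨S, hS1, hS2, hS3, hS4⟩ := h1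
  obtain ⟨T, hT1, hT2, hT3, hT4⟩ := h2
  refine ⟨fun z => S z * T z, hS1.mul hT1, by simpa using hS2.mul hT2, hS3.mul hK hT3, fun z hz => ?_⟩
  have : z - b ≠ 0 := by
    rcases hz with hz | hz
    · intro h; exact hb (by rwa [← sub_eq_zero.mp h])
    · intro h; rw [sub_eq_zero.mp h] at hz; linarith
  rw [mul_pow, hS4 z hz, hT4 z hz]
  field_simp

theorem tendsto_inv_sub_cob (b : ℂ) : Tendsto (fun z : ℂ => (z - b)⁻¹) (Bornology.cobounded ℂ) (𝓝 0) := by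
  apply tendsto_inv₀_cobounded.comp
  rw [← tendsto_norm_atTop_iff_cobounded]
  have h := tendsto_norm_cobounded_atTop (E := ℂ)
  refine tendsto_atTop_mono (f := fun z => ‖z‖ + -‖b‖) (fun z => ?_) (tendsto_atTop_add_const_right _ _ h)
  have := norm_sub_norm_le z b
  linarith

theorem GoodPair.step {K : Set ℂ} (hK : IsCompact K) (hKc : IsConnected Kᶜ) {c : ℂ} {δ : ℝ} {a b : ℂ}
    (hb : b ∉ K) (hac : ‖a - c‖ < 2 * δ) (hbc : ‖b - c‖ < 2 * δ)
    (hst : ∀ z ∈ K, ‖b - a‖ ≤ ‖z - b‖ / 2) : GoodPair K c δ a b := by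
  have hne : ∀ z, (z ∈ K ∨ 2 * δ ≤ ‖z - c‖) → z - b ≠ 0 := by
    intro z hz
    rcases hz with hz | hz
    · intro h; exact hb (by rwa [← sub_eq_zero.mp h])
    · intro h; rw [sub_eq_zero.mp h] at hz; linarith
  refine ⟨fun z => msqrt (1 + (b - a) * (z - b)⁻¹), ?_, ?_, ?_, fun z hz => ?_⟩
  · intro z hz
    have hzb := hne z (Or.inr hz)
    apply ContinuousAt.continuousWithinAt
    apply ContinuousAt.comp (f := fun z => 1 + (b - a) * (z - b)⁻¹) (g := msqrt)
    · apply msqrt_cont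
      by_contra hx
      rw [Complex.mem_slitPlane_iff] at hx
      push Not at hx
      set x := 1 + (b - a) * (z - b)⁻¹ with hxdef
      obtain ⟨hx1, hx2⟩ := hx
      set t := -x.re with ht
      have hxt : x = -(t : ℂ) := by
        apply Complex.ext <;> simp [ht, hx2]
      have ht0 : 0 ≤ t := by linarith
      have hz2 : z - a = -(t : ℂ) * (z - b) := by
        rw [← hxt, hxdef]; field_simp; ring
      have hz3 : (1 + t : ℂ) * (z - c) = (a - c) + t * (b - c) := by
        linear_combination hz2
      have hn := congrArg norm hz3
      have h1t : ‖(1 + t : ℂ)‖ = 1 + t := by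
        rw [show (1 + t : ℂ) = ((1 + t : ℝ) : ℂ) by push_cast; rfl, Complex.norm_real, Real.norm_of_nonneg (by linarith)]
      rw [norm_mul, h1t] at hn
      have h2 : ‖(a - c) + t * (b - c)‖ ≤ ‖a - c‖ + t * ‖b - c‖ := by
        refine (norm_add_le _ _).trans ?_
        rw [norm_mul, Complex.norm_real, Real.norm_of_nonneg ht0]
      have hz' : 2 * δ ≤ ‖z - c‖ := hz
      nlinarith
    · exact continuousAt_const.add (continuousAt_const.mul ((continuousAt_id.sub continuousAt_const).inv₀ hzb))
  · have h1 : Tendsto (fun z : ℂ => 1 + (b - a) * (z - b)⁻¹) (Bornology.cobounded ℂ) (𝓝 1) := by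
      simpa using tendsto_const_nhds.add ((tendsto_inv_sub_cob b).const_mul (b - a))
    have h2 := (msqrt_cont (x := 1) (by simp)).tendsto.comp h1
    rwa [msqrt_one] at h2
  · apply PolyApprox.sqrt hK ((PolyApprox.const _).mul hK (PolyApprox.inv hK hKc hb))
    intro z hz
    have h0 := norm_pos_iff.mpr (hne z (Or.inl hz))
    rw [norm_mul, norm_inv, ← div_eq_mul_inv, div_le_iff₀ h0]
    linarith [hst z hz]
  · rw [msqrt_sq]
    have := hne z hz
    field_simp
    ring

theorem exists_goodPair {K : Set ℂ} (hK : IsCompact K) (hKn : K.Nonempty) (hKc : IsConnected Kᶜ) {c : ℂ}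
    {δ : ℝ} (hδ : 0 < δ) (hc : c ∉ K) :
    ∃ b, δ ≤ ‖b - c‖ ∧ ‖b - c‖ < 2 * δ ∧ GoodPair K c δ c b := by
  by_contra hno
  push Not at hno
  let W : Set ℂ := {q | q ∉ K ∧ ‖q - c‖ < δ ∧ GoodPair K c δ c q}
  have hloc : ∀ q ∉ K, ∃ ρ > 0, ∀ x ∈ ball q ρ, ∀ y ∈ ball q ρ, x ∈ W → y ∈ W := by
    intro q hq
    have hd : 0 < infDist q K := (hK.isClosed.notMem_iff_infDist_pos hKn).mp hq
    refine ⟨min (infDist q K / 8) (δ / 2), by positivity, fun x hx y hy hxW => ?_⟩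
    rw [mem_ball, lt_min_iff, dist_eq_norm] at hx hy
    have hz : ∀ z ∈ K, infDist q K - infDist q K / 8 < ‖z - y‖ := by
      intro z hz
      have h1 := infDist_le_dist_of_mem (x := q) hz
      rw [dist_eq_norm] at h1
      have h2 := norm_sub_le (y - q) (y - z)
      rw [sub_sub_sub_cancel_left, norm_sub_rev z q, norm_sub_rev y z] at h2
      linarith
    have hyK : y ∉ K := by
      intro h
      have := hz y h
      rw [sub_self, norm_zero] at this
      linarith
    have hyx : ‖y - x‖ ≤ ‖y - q‖ + ‖x - q‖ := by
      have := norm_sub_le (y - q) (x - q)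
      rwa [sub_sub_sub_cancel_right] at this
    obtain ⟨hx1, hx2, hx3⟩ := hxW
    have hyc : ‖y - c‖ < 2 * δ := by
      have := norm_add_le (y - x) (x - c)
      rw [sub_add_sub_cancel] at this
      linarith
    have hg : GoodPair K c δ c y := by
      refine GoodPair.trans hK hx1 (by linarith) hx3 (GoodPair.step hK hKc hyK (by linarith) hyc ?_)
      intro z hz'
      have := hz z hz'
      linarith
    refine ⟨hyK, ?_, hg⟩
    by_contra h
    exact hno y (not_lt.mp h) hyc hg
  have hWo : IsOpen W := by
    rw [Metric.isOpen_iff]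
    intro q hq
    obtain ⟨ρ, hρ, h⟩ := hloc q hq.1
    exact ⟨ρ, hρ, fun y hy => h q (mem_ball_self hρ) y hy hq⟩
  have hVo : IsOpen (Kᶜ \ W) := by
    rw [Metric.isOpen_iff]
    intro q hq
    obtain ⟨ρ, hρ, h⟩ := hloc q hq.1
    obtain ⟨ρ', hρ', h'⟩ := Metric.isOpen_iff.mp hK.isClosed.isOpen_compl q hq.1
    refine ⟨min ρ ρ', by positivity, fun y hy => ⟨h' (ball_subset_ball (min_le_right _ _) hy), fun hyW => ?_⟩⟩
    exact hq.2 (h y (ball_subset_ball (min_le_left _ _) hy) q (mem_ball_self hρ) hyW)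
  have hsub : Kᶜ ⊆ W := by
    refine hKc.isPreconnected.subset_left_of_subset_union hWo hVo ?_ ?_ ⟨c, hc, hc, by simpa using hδ, GoodPair.refl hδ hc⟩
    · exact disjoint_sdiff_right
    · intro x hx
      by_cases h : x ∈ W
      · exact Or.inl h
      · exact Or.inr ⟨hx, h⟩
  have hb : Bornology.IsBounded (univ : Set ℂ) := by
    refine (hK.isBounded.union (isBounded_ball (x := c) (r := δ))).subset fun x _ => ?_
    by_cases h : x ∈ K
    · exact Or.inl h
    · right; rw [mem_ball, dist_eq_norm]; exact (hsub h).2.1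
  exact NormedSpace.unbounded_univ ℂ ℂ hb

theorem kernel_far {u s d ζ : ℂ} {δ : ℝ} (hδ : 0 < δ) (hs : s ^ 2 = u ^ 2 - d ^ 2 / 4) (hd0 : d ≠ 0)
    (hd : ‖d‖ ≤ 2 * δ) (hu : 9 * δ ≤ ‖u‖) (hζ : ‖ζ‖ ≤ 3 * δ) (hre : 0 ≤ (s / u).re) :
    ‖(8 / d ^ 2 * (u - s)) + ζ * (8 / d ^ 2 * (u - s)) ^ 2 - (u - ζ)⁻¹‖ ≤ 16 * δ ^ 2 / ‖u‖ ^ 3 := by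
  have hupos : 0 < ‖u‖ := by linarith
  have hu0 : u ≠ 0 := norm_pos_iff.mp hupos
  set r := s / u with hr
  have hsr : s = r * u := by rw [hr]; field_simp
  have hr1 : 1 ≤ ‖1 + r‖ := by
    have := Complex.abs_re_le_norm (1 + r)
    rw [Complex.add_re, Complex.one_re, abs_of_nonneg (by linarith)] at this
    linarith
  have hr0 : 1 + r ≠ 0 := norm_pos_iff.mp (by linarith)
  have he : (1 - r) * (1 + r) = d ^ 2 / (4 * u ^ 2) := by
    rw [hsr] at hs
    field_simp
    linear_combination (-4) * hs
  have hen : ‖1 - r‖ ≤ δ ^ 2 / ‖u‖ ^ 2 := by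
    have h1 := congrArg norm he
    rw [norm_mul, norm_div, norm_mul, norm_pow, norm_pow] at h1
    have h2 : ‖d‖ ^ 2 / (‖(4 : ℂ)‖ * ‖u‖ ^ 2) ≤ δ ^ 2 / ‖u‖ ^ 2 := by
      rw [show ‖(4 : ℂ)‖ = 4 by simp, div_le_div_iff₀ (by positivity) (by positivity)]
      have : ‖d‖ ^ 2 ≤ (2 * δ) ^ 2 := by gcongr
      nlinarith [sq_nonneg ‖u‖, pow_pos hupos 2]
    have := norm_nonneg (1 - r)
    nlinarith
  set g := 8 / d ^ 2 * (u - s) with hg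
  have hg1 : g = 2 / u / (1 + r) := by
    rw [eq_div_iff hr0, hg, hsr]
    have : 8 / d ^ 2 * (u - r * u) * (1 + r) = 8 / d ^ 2 * u * ((1 - r) * (1 + r)) := by ring
    rw [this, he]; field_simp; norm_num
  have hh : g - 1 / u = (1 / u) * (1 - r) / (1 + r) := by
    rw [hg1]; field_simp; ring
  have hgn : ‖g‖ ≤ 2 / ‖u‖ := by
    rw [hg1, norm_div, norm_div]
    rw [show ‖(2 : ℂ)‖ = 2 by simp]
    exact div_le_self (by positivity) hr1
  have hhn : ‖g - 1 / u‖ ≤ δ ^ 2 / ‖u‖ ^ 3 := by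
    rw [hh, norm_div, norm_mul, norm_div, norm_one]
    refine (div_le_self (by positivity) hr1).trans ?_
    calc 1 / ‖u‖ * ‖1 - r‖ ≤ 1 / ‖u‖ * (δ ^ 2 / ‖u‖ ^ 2) := by gcongr
      _ = _ := by field_simp
  have huz : 2 / 3 * ‖u‖ ≤ ‖u - ζ‖ := by
    have := norm_sub_norm_le u ζ
    linarith
  have huz0 : u - ζ ≠ 0 := norm_pos_iff.mp (by linarith)
  have hid : g + ζ * g ^ 2 - (u - ζ)⁻¹ =
      (g - 1 / u) + ζ * (g - 1 / u) * (g + 1 / u) - ζ ^ 2 / (u ^ 2 * (u - ζ)) := by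
    field_simp
    ring
  rw [hid]
  have h1 : ‖ζ * (g - 1 / u) * (g + 1 / u)‖ ≤ (3 * δ) * (δ ^ 2 / ‖u‖ ^ 3) * (2 / ‖u‖ + 1 / ‖u‖) := by
    rw [norm_mul, norm_mul]
    have : ‖g + 1 / u‖ ≤ 2 / ‖u‖ + 1 / ‖u‖ := by
      refine (norm_add_le _ _).trans ?_
      rw [norm_div, norm_one]; gcongr
    gcongr
  have h1' : (3 * δ) * (δ ^ 2 / ‖u‖ ^ 3) * (2 / ‖u‖ + 1 / ‖u‖) ≤ δ ^ 2 / ‖u‖ ^ 3 := by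
    have : (3 * δ) * (2 / ‖u‖ + 1 / ‖u‖) ≤ 1 := by
      rw [← add_div, mul_div_assoc', div_le_one hupos]; linarith
    calc _ = (δ ^ 2 / ‖u‖ ^ 3) * ((3 * δ) * (2 / ‖u‖ + 1 / ‖u‖)) := by ring
      _ ≤ (δ ^ 2 / ‖u‖ ^ 3) * 1 := by gcongr
      _ = _ := mul_one _
  have h2 : ‖ζ ^ 2 / (u ^ 2 * (u - ζ))‖ ≤ (3 * δ) ^ 2 / (‖u‖ ^ 2 * (2 / 3 * ‖u‖)) := by
    rw [norm_div, norm_mul, norm_pow, norm_pow]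
    gcongr
  have h2' : (3 * δ) ^ 2 / (‖u‖ ^ 2 * (2 / 3 * ‖u‖)) = 27 / 2 * (δ ^ 2 / ‖u‖ ^ 3) := by
    field_simp; ring
  have h3 := norm_sub_le ((g - 1 / u) + ζ * (g - 1 / u) * (g + 1 / u)) (ζ ^ 2 / (u ^ 2 * (u - ζ)))
  have h4 := norm_add_le (g - 1 / u) (ζ * (g - 1 / u) * (g + 1 / u))
  have h5 : 0 ≤ δ ^ 2 / ‖u‖ ^ 3 := by positivity
  rw [mul_div_assoc]
  linarith

theorem exists_kernel {K : Set ℂ} (hK : IsCompact K) (hKn : K.Nonempty) (hKc : IsConnected Kᶜ) {c : ℂ}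
    {δ : ℝ} (hδ : 0 < δ) (hc : c ∉ K) :
    ∃ (g : ℂ → ℂ) (m : ℂ), PolyApprox K g ∧ ∀ z ∈ K, ∀ ζ, ‖ζ - c‖ ≤ 2 * δ → z ≠ ζ →
      ‖g z + (ζ - m) * (g z) ^ 2 - (z - ζ)⁻¹‖ ≤ 10 ^ 9 / (‖z - ζ‖ * (1 + (‖z - ζ‖ / δ) ^ 2)) := by
  obtain ⟨b, hb1, hb2, S, hS1, hS2, hS3, hS4⟩ := exists_goodPair hK hKn hKc hδ hc
  set m := (c + b) / 2 with hm
  set d := b - c with hd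
  have hd0 : d ≠ 0 := norm_pos_iff.mp (by linarith)
  have hmc : ‖m - c‖ ≤ δ := by
    rw [show m - c = d / 2 by rw [hm, hd]; ring, norm_div]; simp; linarith
  have hs : ∀ z, (z ∈ K ∨ 2 * δ ≤ ‖z - c‖) → ((z - b) * S z) ^ 2 = (z - m) ^ 2 - d ^ 2 / 4 := by
    intro z hz
    by_cases h : z - b = 0
    · have hzb : z = b := sub_eq_zero.mp h
      rw [h, hm, hd, hzb]; ring
    · rw [mul_pow, hS4 z hz, hm, hd]; field_simp; ring
  have hnorm : ∀ z, ‖z - c‖ - δ ≤ ‖z - m‖ ∧ ‖z - m‖ ≤ ‖z - c‖ + δ := by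
    intro z
    have h1 := norm_sub_le (z - c) (m - c)
    have h2 := norm_sub_norm_le (z - c) (m - c)
    rw [sub_sub_sub_cancel_right] at h1 h2
    constructor <;> linarith
  refine ⟨fun z => 8 / d ^ 2 * ((z - m) - (z - b) * S z), m, ?_, ?_⟩
  · refine (PolyApprox.const _).mul hK (((PolyApprox.poly (Polynomial.X - Polynomial.C m)).add
      ((PolyApprox.const (-1)).mul hK ((PolyApprox.poly (Polynomial.X - Polynomial.C b)).mul hK hS3))).congr ?_)
    intro z hz
    simp; ring
  intro z hz ζ hζ hzζ
  have hr0 : 0 < ‖z - ζ‖ := norm_pos_iff.mpr (sub_ne_zero.mpr hzζ)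
  have hζm : ‖ζ - m‖ ≤ 3 * δ := by linarith [(hnorm ζ).2]
  rw [le_div_iff₀ (by positivity)]
  have hsz := hs z (Or.inl hz)
  rcases le_or_gt ‖z - c‖ (10 * δ) with hnear | hfar
  · have hr : ‖z - ζ‖ ≤ 12 * δ := by
      have := norm_sub_le (z - c) (ζ - c)
      rw [sub_sub_sub_cancel_right] at this
      linarith
    have hu : ‖z - m‖ ≤ 11 * δ := by linarith [(hnorm z).2]
    have hsn : ‖(z - b) * S z‖ ≤ 12 * δ := by
      have h1 := congrArg norm hsz
      rw [norm_pow] at h1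
      have h2 := norm_sub_le ((z - m) ^ 2) (d ^ 2 / 4)
      rw [norm_pow, norm_div, norm_pow, show ‖(4 : ℂ)‖ = 4 by simp] at h2
      have h3 : ‖z - m‖ ^ 2 ≤ (11 * δ) ^ 2 := by gcongr
      have h4 : ‖d‖ ^ 2 ≤ (2 * δ) ^ 2 := by gcongr
      apply abs_le_of_sq_le_sq' _ (by positivity) |>.2
      nlinarith
    have hg : ‖8 / d ^ 2 * ((z - m) - (z - b) * S z)‖ ≤ 184 / δ := by
      rw [norm_mul, norm_div, norm_pow, show ‖(8 : ℂ)‖ = 8 by simp]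
      have h1 : ‖(z - m) - (z - b) * S z‖ ≤ 23 * δ := by
        refine (norm_sub_le _ _).trans (by linarith)
      calc 8 / ‖d‖ ^ 2 * ‖(z - m) - (z - b) * S z‖ ≤ 8 / δ ^ 2 * (23 * δ) := by gcongr
        _ = 184 / δ := by field_simp; norm_num
    set g := 8 / d ^ 2 * ((z - m) - (z - b) * S z)
    have hQ : ‖g + (ζ - m) * g ^ 2‖ ≤ 101752 / δ := by
      refine (norm_add_le _ _).trans ?_
      rw [norm_mul (ζ - m), norm_pow]
      calc ‖g‖ + ‖ζ - m‖ * ‖g‖ ^ 2 ≤ 184 / δ + (3 * δ) * (184 / δ) ^ 2 := by gcongr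
        _ = _ := by field_simp; norm_num
    have hx : ‖z - ζ‖ / δ ≤ 12 := by rw [div_le_iff₀ hδ]; linarith
    have hx2 : 1 + (‖z - ζ‖ / δ) ^ 2 ≤ 145 := by
      have : (‖z - ζ‖ / δ) ^ 2 ≤ 12 ^ 2 := by gcongr
      linarith
    calc ‖g + (ζ - m) * g ^ 2 - (z - ζ)⁻¹‖ * (‖z - ζ‖ * (1 + (‖z - ζ‖ / δ) ^ 2))
        ≤ (101752 / δ + ‖z - ζ‖⁻¹) * (‖z - ζ‖ * 145) := by
          gcongr
          refine (norm_sub_le _ _).trans ?_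
          rw [norm_inv]; gcongr
      _ = 101752 * (‖z - ζ‖ / δ) * 145 + 145 := by field_simp
      _ ≤ 101752 * 12 * 145 + 145 := by gcongr
      _ ≤ _ := by norm_num
  · have hu : 9 * δ ≤ ‖z - m‖ := by linarith [(hnorm z).1]
    have hre : 0 ≤ ((z - b) * S z / (z - m)).re := by
      let γ : ℝ → ℂ := fun t => c + t * (z - c)
      have hγ : Continuous γ := by fun_prop
      have hγc : ∀ t : ℝ, 1 ≤ t → 10 * δ ≤ ‖γ t - c‖ := by
        intro t ht
        simp only [γ, add_sub_cancel_left, norm_mul, Complex.norm_real]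
        rw [Real.norm_of_nonneg (by linarith)]
        nlinarith [norm_nonneg (z - c)]
      have hγm : ∀ t : ℝ, 1 ≤ t → 9 * δ ≤ ‖γ t - m‖ := fun t ht => by
        linarith [hγc t ht, (hnorm (γ t)).1]
      have hγm0 : ∀ t : ℝ, 1 ≤ t → γ t - m ≠ 0 := fun t ht => norm_pos_iff.mp (by linarith [hγm t ht])
      let ρ : ℝ → ℝ := fun t => ((γ t - b) * S (γ t) / (γ t - m)).re
      have hρc : ContinuousOn ρ (Ici 1) := by
        apply Complex.continuous_re.comp_continuousOn
        apply ContinuousOn.div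
        · apply ContinuousOn.mul (by fun_prop)
          apply hS1.comp hγ.continuousOn
          intro t ht
          have := hγc t ht
          show 2 * δ ≤ _
          linarith
        · fun_prop
        · intro t ht; exact hγm0 t ht
      have hρ0 : ∀ t ∈ Ici (1 : ℝ), ρ t ≠ 0 := by
        intro t ht h0
        have h1 := hs (γ t) (Or.inr (by linarith [hγc t ht]))
        have h2 : ((γ t - b) * S (γ t) / (γ t - m)) ^ 2 = 1 - d ^ 2 / 4 / (γ t - m) ^ 2 := by
          rw [div_pow, h1]
          have := hγm0 t ht
          field_simp
        have h3 : (((γ t - b) * S (γ t) / (γ t - m)) ^ 2).re ≤ 0 := by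
          rw [sq, Complex.mul_re]
          have h0' : ((γ t - b) * S (γ t) / (γ t - m)).re = 0 := h0
          rw [h0']
          nlinarith [sq_nonneg ((γ t - b) * S (γ t) / (γ t - m)).im]
        have h4 : ‖d ^ 2 / 4 / (γ t - m) ^ 2‖ ≤ 1 / 2 := by
          rw [norm_div, norm_div, norm_pow, norm_pow, show ‖(4 : ℂ)‖ = 4 by simp]
          have h5 := hγm t ht
          rw [div_le_iff₀ (by have : 0 < ‖γ t - m‖ := by linarith
                              positivity)]
          have h6 : ‖d‖ ^ 2 ≤ (2 * δ) ^ 2 := by gcongr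
          have h7 : (9 * δ) ^ 2 ≤ ‖γ t - m‖ ^ 2 := by gcongr
          nlinarith
        have h5 := (Complex.abs_re_le_norm (d ^ 2 / 4 / (γ t - m) ^ 2)).trans h4
        rw [h2, Complex.sub_re, Complex.one_re] at h3
        have := (abs_le.mp h5).2
        linarith
      have hγt : Tendsto γ atTop (Bornology.cobounded ℂ) := by
        rw [← tendsto_norm_atTop_iff_cobounded]
        have hzc : 0 < ‖z - c‖ := by linarith
        have h1 : Tendsto (fun t : ℝ => t * ‖z - c‖ + -‖c‖) atTop atTop :=
          tendsto_atTop_add_const_right _ _ (tendsto_id.atTop_mul_const hzc)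
        refine tendsto_atTop_mono' _ ?_ h1
        filter_upwards [eventually_ge_atTop 1] with t ht
        have h2 := norm_sub_norm_le (t * (z - c)) (-c)
        rw [norm_mul, Complex.norm_real, Real.norm_of_nonneg (by linarith), norm_neg] at h2
        have h3 : t * (z - c) - -c = γ t := by simp only [γ]; ring
        rw [h3] at h2
        linarith
      have hlim : Tendsto ρ atTop (𝓝 1) := by
        have h1 : Tendsto (fun w : ℂ => (1 + (m - b) * (w - m)⁻¹) * S w) (Bornology.cobounded ℂ) (𝓝 1) := by
          have := (tendsto_const_nhds (x := (1 : ℂ))).add ((tendsto_inv_sub_cob m).const_mul (m - b))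
          simpa using this.mul hS2
        have h2 := (Complex.continuous_re.tendsto 1).comp (h1.comp hγt)
        rw [Complex.one_re] at h2
        refine h2.congr' ?_
        filter_upwards [eventually_ge_atTop 1] with t ht
        simp only [ρ, Function.comp]
        congr 1
        have := hγm0 t ht
        field_simp
        ring
      by_contra hneg
      push Not at hneg
      have hρ1 : ρ 1 < 0 := by
        have : γ 1 = z := by simp [γ]
        simp only [ρ, this]; exact hneg
      obtain ⟨T, hT1, hT2⟩ := ((hlim.eventually (lt_mem_nhds one_pos)).and (eventually_ge_atTop 1)).exists
      have hsub : Icc (1 : ℝ) T ⊆ Ici 1 := fun t ht => ht.1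
      obtain ⟨t, ht, ht0⟩ := intermediate_value_Icc hT2 (hρc.mono hsub) ⟨hρ1.le, hT1.le⟩
      exact hρ0 t (hsub ht) ht0
    have hkey := kernel_far (ζ := ζ - m) hδ hsz hd0 hb2.le hu hζm hre
    rw [show z - m - (ζ - m) = z - ζ by ring] at hkey
    have hr : ‖z - ζ‖ ≤ 4 / 3 * ‖z - m‖ := by
      have := norm_sub_le (z - m) (ζ - m)
      rw [sub_sub_sub_cancel_right] at this
      linarith
    have hupos : 0 < ‖z - m‖ := by linarith
    have hone : 1 ≤ (‖z - m‖ / δ) ^ 2 := by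
      have : 1 ≤ ‖z - m‖ / δ := by rw [le_div_iff₀ hδ]; linarith
      nlinarith
    calc _ ≤ 16 * δ ^ 2 / ‖z - m‖ ^ 3 * ((4 / 3 * ‖z - m‖) * ((‖z - m‖ / δ) ^ 2 + (4 / 3 * ‖z - m‖ / δ) ^ 2)) := by
          gcongr
      _ = 16 * (4 / 3 * (1 + (4 / 3) ^ 2)) := by field_simp
      _ ≤ _ := by norm_num

open scoped Real in
theorem polar_ball {h : ℂ → ℂ} (hm : Measurable h) {δ : ℝ}
    (hi : IntegrableOn (fun ζ => ζ * h ζ) (ball 0 δ)) :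
    ∫ ζ in ball (0 : ℂ) δ, ζ * h ζ = ∫ r in Ioo 0 δ, (-Complex.I * r) * circleIntegral h 0 r := by
  set F : ℂ → ℂ := (ball (0 : ℂ) δ).indicator (fun ζ => ζ * h ζ) with hF
  have hFm : Measurable F := (measurable_id.mul hm).indicator measurableSet_ball
  have hFi : Integrable F := hi.integrable_indicator measurableSet_ball
  have hsm : Measurable (fun p : ℝ × ℝ => Complex.polarCoord.symm p) := by
    simp only [Complex.polarCoord_symm_apply]
    fun_prop
  have hmt : MeasurableSet (Ioi (0 : ℝ) ×ˢ Ioo (-π) π) := measurableSet_Ioi.prod measurableSet_Ioo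
  have hint : IntegrableOn (fun p : ℝ × ℝ => p.1 • F (Complex.polarCoord.symm p)) (Ioi (0 : ℝ) ×ˢ Ioo (-π) π) := by
    refine ⟨(measurable_fst.smul (hFm.comp hsm)).aestronglyMeasurable, ?_⟩
    rw [hasFiniteIntegral_iff_enorm]
    have h1 := Complex.lintegral_comp_polarCoord_symm (fun z => ‖F z‖ₑ)
    rw [polarCoord_target] at h1
    have h2 : ∫⁻ p in Ioi (0 : ℝ) ×ˢ Ioo (-π) π, ‖p.1 • F (Complex.polarCoord.symm p)‖ₑ =
        ∫⁻ p in Ioi (0 : ℝ) ×ˢ Ioo (-π) π, ENNReal.ofReal p.1 • ‖F (Complex.polarCoord.symm p)‖ₑ := by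
      apply setLIntegral_congr_fun hmt
      intro p hp
      simp only [enorm_smul, smul_eq_mul]
      rw [Real.enorm_of_nonneg (le_of_lt hp.1)]
    rw [h2, h1]
    exact hFi.2
  rw [← integral_indicator measurableSet_ball, ← hF, ← Complex.integral_comp_polarCoord_symm, polarCoord_target]
  rw [Measure.volume_eq_prod] at hint ⊢
  rw [setIntegral_prod _ hint]
  rw [← Ioi_inter_Iio (a := (0:ℝ)) (b := δ), ← setIntegral_indicator measurableSet_Iio]
  apply setIntegral_congr_fun measurableSet_Ioi
  intro r hr
  have hr0 : (0 : ℝ) < r := hr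
  have hcm : ∀ θ : ℝ, Complex.polarCoord.symm (r, θ) = circleMap 0 r θ := by
    intro θ
    rw [Complex.polarCoord_symm_apply, circleMap, Complex.exp_mul_I]; simp
  simp only [hcm]
  by_cases hrd : r < δ
  · rw [indicator_of_mem (show r ∈ Iio δ from hrd)]
    have hmem : ∀ θ, F (circleMap 0 r θ) = circleMap 0 r θ * h (circleMap 0 r θ) := by
      intro θ
      rw [hF, indicator_of_mem]
      rw [mem_ball_zero_iff]; simpa [abs_of_pos hr0] using hrd
    simp only [hmem]
    rw [circleIntegral]
    have hper : Function.Periodic (fun θ => deriv (circleMap 0 r) θ • h (circleMap 0 r θ)) (2 * π) := by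
      intro θ
      simp only [deriv_circleMap, periodic_circleMap 0 r θ]
    have h3 := hper.intervalIntegral_add_eq 0 (-π)
    rw [zero_add, show -π + 2 * π = π by ring] at h3
    rw [h3, intervalIntegral.integral_of_le (by linarith [Real.pi_pos]), integral_Ioc_eq_integral_Ioo,
      ← integral_const_mul]
    congr 1
    ext θ
    simp only [deriv_circleMap, smul_eq_mul, Complex.real_smul]
    ring_nf
    rw [Complex.I_sq]; ring
  · rw [indicator_of_notMem (show r ∉ Iio δ from hrd)]
    have hmem : ∀ θ, F (circleMap 0 r θ) = 0 := by
      intro θ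
      rw [hF, indicator_of_notMem]
      rw [mem_ball_zero_iff]; simpa [abs_of_pos hr0] using hrd
    simp [hmem]

theorem integrableOn_inv_norm (R : ℝ) : IntegrableOn (fun ζ : ℂ => ‖ζ‖⁻¹) (ball 0 R) := by
  rw [integrableOn_fun_norm_addHaar volume (f := fun y : ℝ => y⁻¹)]
  have : IntegrableOn (fun _ : ℝ => (1 : ℝ)) (Ioo 0 R) := by
    simp [integrableOn_const_iff]
  refine this.congr_fun ?_ measurableSet_Ioo
  intro y hy
  have := hy.1.ne'
  simp [Complex.finrank_real_complex, this]

/-- inverse distance is integrable on bounded sets -/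
theorem integrableOn_inv_norm_sub (z : ℂ) (R : ℝ) : IntegrableOn (fun ζ : ℂ => ‖z - ζ‖⁻¹) (ball 0 R) := by
  have h := (integrableOn_inv_norm (R + ‖z‖)).integrable_indicator measurableSet_ball
  have h2 := (h.comp_sub_left z).integrableOn (s := ball 0 R)
  refine h2.congr_fun ?_ measurableSet_ball
  intro ζ hζ
  simp only
  rw [indicator_of_mem]
  rw [mem_ball_zero_iff] at hζ ⊢
  linarith [norm_sub_le z ζ]

open scoped Real in
theorem integral_ball_mul_inv (z : ℂ) {δ : ℝ} (hδ : 0 < δ) :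
    ∫ ζ in ball (0 : ℂ) δ, ζ * (z - ζ)⁻¹ = -π * (max (δ ^ 2 - ‖z‖ ^ 2) 0 : ℝ) := by
  rw [polar_ball (h := fun ζ => (z - ζ)⁻¹) (by fun_prop)]
  · have hc : ∀ᵐ r : ℝ, r ∈ Ioo 0 δ → (-Complex.I * r) * circleIntegral (fun ζ => (z - ζ)⁻¹) 0 r =
        (Ioi ‖z‖).indicator (fun r : ℝ => ((-2 * π * r : ℝ) : ℂ)) r := by
      have h0 : ∀ᵐ r : ℝ, r ≠ ‖z‖ := by
        simp [ae_iff]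
      filter_upwards [h0] with r hr hrI
      have hneg : circleIntegral (fun ζ => (z - ζ)⁻¹) 0 r = - circleIntegral (fun ζ => (ζ - z)⁻¹) 0 r := by
        have := circleIntegral.integral_smul (-1 : ℂ) (fun ζ => (ζ - z)⁻¹) 0 r
        rw [neg_one_smul] at this
        rw [← this]
        congr 1
        ext ζ
        rw [neg_one_smul, ← inv_neg, neg_sub]
      rcases lt_or_gt_of_ne hr with hlt | hgt
      · rw [indicator_of_notMem (by simpa using hlt.le), hneg]
        rw [DiffContOnCl.circleIntegral_eq_zero hrI.1.le]
        · simp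
        · apply DifferentiableOn.diffContOnCl
          rw [closure_ball _ hrI.1.ne']
          intro ζ hζ
          apply DifferentiableAt.differentiableWithinAt
          refine DifferentiableAt.inv (by fun_prop) ?_
          intro h
          rw [sub_eq_zero.mp h, mem_closedBall_zero_iff] at hζ
          linarith
      · rw [indicator_of_mem (by simpa using hgt), hneg,
          circleIntegral.integral_sub_inv_of_mem_ball (by simpa using hgt)]
        push_cast
        ring_nf
        rw [Complex.I_sq]; ring
    rw [setIntegral_congr_ae measurableSet_Ioo hc, setIntegral_indicator measurableSet_Ioi]
    by_cases hz : ‖z‖ < δ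
    · have : Ioo 0 δ ∩ Ioi ‖z‖ = Ioo ‖z‖ δ := by
        ext r; simp only [mem_inter_iff, mem_Ioo, mem_Ioi]
        have := norm_nonneg z
        constructor
        · rintro ⟨⟨_, h⟩, h'⟩; exact ⟨h', h⟩
        · rintro ⟨h, h'⟩; exact ⟨⟨by linarith, h'⟩, h⟩
      rw [this, ← integral_Ioc_eq_integral_Ioo, ← intervalIntegral.integral_of_le hz.le,
        intervalIntegral.integral_ofReal, intervalIntegral.integral_const_mul, integral_id,
        max_eq_left (by nlinarith [norm_nonneg z])]
      push_cast; ring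
    · have : Ioo 0 δ ∩ Ioi ‖z‖ = ∅ := by
        ext r; simp only [mem_inter_iff, mem_Ioo, mem_Ioi, mem_empty_iff_false, iff_false]
        rintro ⟨⟨_, h⟩, h'⟩; linarith
      rw [this, max_eq_right (by nlinarith [norm_nonneg z])]
      simp
  · have h1 := (integrableOn_inv_norm_sub z δ).const_mul δ
    refine Integrable.mono' h1 (by fun_prop) ?_
    filter_upwards [ae_restrict_mem measurableSet_ball] with ζ hζ
    rw [mem_ball_zero_iff] at hζ
    rw [norm_mul, norm_inv]
    gcongr

theorem integral_ball_hol_zero {f : ℂ → ℂ} {x : ℂ} {δ : ℝ} (hδ : 0 < δ)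
    (hf : DifferentiableOn ℂ f (closedBall x δ)) : ∫ w in ball x δ, (x - w) * f w = 0 := by
  set h : ℂ → ℂ := (closedBall (0 : ℂ) δ).indicator (fun ζ => f (x + ζ)) with hh
  have hmaps : MapsTo (fun ζ => x + ζ) (closedBall (0 : ℂ) δ) (closedBall x δ) := by
    intro ζ hζ
    simpa [dist_eq_norm] using hζ
  have hd : DifferentiableOn ℂ (fun ζ => f (x + ζ)) (closedBall (0 : ℂ) δ) :=
    hf.comp (by fun_prop) hmaps
  have hm : Measurable h := by
    classical
    rw [hh, ← Set.piecewise_eq_indicator]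
    exact (hd.continuousOn.measurable_piecewise (g := fun _ => 0) continuousOn_const isClosed_closedBall.measurableSet)
  have hcong : ∀ w ∈ ball (0 : ℂ) δ, w * h w = w * f (x + w) := by
    intro w hw
    rw [hh, indicator_of_mem (ball_subset_closedBall hw)]
  have hI : ∫ ζ in ball (0 : ℂ) δ, ζ * h ζ = 0 := by
    rw [polar_ball hm]
    · rw [setIntegral_congr_fun (g := fun _ => 0) measurableSet_Ioo]
      · simp
      · intro r hr
        simp only
        have h1 : circleIntegral h 0 r = circleIntegral (fun ζ => f (x + ζ)) 0 r := by
          apply circleIntegral.integral_congr hr.1.le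
          intro w hw
          simp only
          rw [indicator_of_mem]
          exact closedBall_subset_closedBall hr.2.le (sphere_subset_closedBall hw)
        rw [h1, DiffContOnCl.circleIntegral_eq_zero hr.1.le, mul_zero]
        apply DifferentiableOn.diffContOnCl
        rw [closure_ball _ hr.1.ne']
        exact hd.mono (closedBall_subset_closedBall hr.2.le)
    · have : ContinuousOn (fun ζ => ζ * f (x + ζ)) (closedBall (0 : ℂ) δ) :=
        continuousOn_id.mul hd.continuousOn
      have h2 := (this.integrableOn_compact (μ := volume) (isCompact_closedBall _ _)).mono_set ball_subset_closedBall
      exact h2.congr_fun (fun w hw => (hcong w hw).symm) measurableSet_ball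
  rw [setIntegral_congr_fun measurableSet_ball hcong] at hI
  rw [← integral_indicator measurableSet_ball] at hI ⊢
  rw [← integral_add_left_eq_self _ x]
  rw [← neg_eq_zero, ← integral_neg, ← hI]
  congr 1
  ext w
  by_cases hw : w ∈ ball (0 : ℂ) δ
  · rw [indicator_of_mem hw, indicator_of_mem (by simpa using hw)]; ring
  · rw [indicator_of_notMem hw, indicator_of_notMem (by simpa using hw)]; simp

open scoped Real in
theorem integral_bump {δ : ℝ} (hδ : 0 < δ) :
    ∫ w : ℂ, max (δ ^ 2 - ‖w‖ ^ 2) 0 = π * δ ^ 4 / 2 := by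
  rw [integral_fun_norm_addHaar volume (fun y : ℝ => max (δ ^ 2 - y ^ 2) 0)]
  have h1 : ∀ y ∈ Ioi (0 : ℝ), y ^ (Module.finrank ℝ ℂ - 1) • max (δ ^ 2 - y ^ 2) 0 =
      (Iio δ).indicator (fun y => y * (δ ^ 2 - y ^ 2)) y := by
    intro y hy
    have hy0 : 0 < y := hy
    rw [Complex.finrank_real_complex]
    by_cases h : y < δ
    · rw [indicator_of_mem (by simpa using h), max_eq_left (by nlinarith)]; simp
    · rw [indicator_of_notMem (by simpa using h), max_eq_right (by nlinarith)]; simp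
  rw [setIntegral_congr_fun measurableSet_Ioi h1, setIntegral_indicator measurableSet_Iio, Ioi_inter_Iio,
    ← integral_Ioc_eq_integral_Ioo, ← intervalIntegral.integral_of_le hδ.le]
  have h2 : ∫ y in (0:ℝ)..δ, y * (δ ^ 2 - y ^ 2) = δ ^ 4 / 4 := by
    have : ∀ y : ℝ, y * (δ ^ 2 - y ^ 2) = δ ^ 2 * y - y ^ 3 := fun y => by ring
    simp only [this]
    rw [intervalIntegral.integral_sub (by apply Continuous.intervalIntegrable; fun_prop) (by apply Continuous.intervalIntegrable; fun_prop),
      intervalIntegral.integral_const_mul, integral_id, integral_pow]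
    norm_num
    ring
  rw [h2, Complex.finrank_real_complex]
  simp [Measure.real, Complex.volume_ball]
  ring

/-- the error kernel -/
noncomputable def errK (δ : ℝ) (y : ℝ) : ℝ := (y * (1 + (y / δ) ^ 2))⁻¹

open scoped Real in
theorem errK_int {δ : ℝ} (hδ : 0 < δ) : Integrable (fun ζ : ℂ => errK δ ‖ζ‖) ∧
    ∫ ζ : ℂ, errK δ ‖ζ‖ = π ^ 2 * δ := by
  have h1 : ∀ y ∈ Ioi (0 : ℝ), y ^ (Module.finrank ℝ ℂ - 1) • errK δ y = (1 + (δ⁻¹ * y) ^ 2)⁻¹ := by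
    intro y hy
    have hy0 : y ≠ 0 := (ne_of_gt hy)
    rw [Complex.finrank_real_complex, errK]
    simp only [Nat.add_one_sub_one, pow_one, smul_eq_mul]
    rw [mul_inv, ← mul_assoc, mul_inv_cancel₀ hy0, one_mul]
    congr 3; ring
  constructor
  · rw [integrable_fun_norm_addHaar volume (f := errK δ), integrableOn_congr_fun h1 measurableSet_Ioi]
    have := (integrableOn_Ioi_comp_mul_left_iff (fun x : ℝ => (1 + x ^ 2)⁻¹) 0 (inv_pos.mpr hδ)).mpr
      integrable_inv_one_add_sq.integrableOn
    exact this
  · rw [integral_fun_norm_addHaar volume (errK δ), setIntegral_congr_fun measurableSet_Ioi h1,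
      integral_comp_mul_left_Ioi (fun x : ℝ => (1 + x ^ 2)⁻¹) 0 (inv_pos.mpr hδ), mul_zero,
      integral_Ioi_inv_one_add_sq, Complex.finrank_real_complex]
    simp [Measure.real, Complex.volume_ball]
    ring

noncomputable def Psi (δ : ℝ) (h : ℂ → ℂ) (ζ : ℂ) : ℂ := ∫ w in ball ζ δ, (ζ - w) * h w

theorem psi_integrable {h : ℂ → ℂ} (hm : Measurable h) {δ B : ℝ} (hδ : 0 < δ) (ζ : ℂ)
    (hB : ∀ w, ‖h w‖ ≤ B) : IntegrableOn (fun w => (ζ - w) * h w) (ball ζ δ) := by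
  have : IntegrableOn (fun _ : ℂ => δ * B) (ball ζ δ) := integrableOn_const (by simp [Complex.volume_ball, ENNReal.mul_eq_top])
  refine Integrable.mono' this (by fun_prop) ?_
  filter_upwards [ae_restrict_mem measurableSet_ball] with w hw
  rw [mem_ball', dist_eq_norm] at hw
  rw [norm_mul]
  gcongr
  exact hB w

open scoped Real in
theorem psi_bound {h k : ℂ → ℂ} (hm : Measurable h) {δ b B : ℝ} (hδ : 0 < δ) {ζ : ℂ}
    (hB : ∀ w, ‖h w‖ ≤ B)
    (hk : DifferentiableOn ℂ k (closedBall ζ δ)) (hb : ∀ w ∈ ball ζ δ, ‖h w - k w‖ ≤ b) :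
    ‖Psi δ h ζ‖ ≤ π * δ ^ 3 * b := by
  have h1 := integral_ball_hol_zero hδ hk
  have hi1 := psi_integrable hm hδ ζ hB
  have hi2 : IntegrableOn (fun w => (ζ - w) * k w) (ball ζ δ) := by
    have : ContinuousOn (fun w => (ζ - w) * k w) (closedBall ζ δ) :=
      ContinuousOn.mul (by fun_prop) hk.continuousOn
    exact (this.integrableOn_compact (isCompact_closedBall _ _)).mono_set ball_subset_closedBall
  have h2 : Psi δ h ζ = ∫ w in ball ζ δ, ((ζ - w) * h w - (ζ - w) * k w) := by
    rw [integral_sub hi1 hi2, h1, sub_zero, Psi]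
  rw [h2]
  have := norm_setIntegral_le_of_norm_le_const (μ := volume) (s := ball ζ δ) (C := δ * b) (f := fun w => ((ζ - w) * h w - (ζ - w) * k w))
    (by simp [Complex.volume_ball, ENNReal.mul_lt_top]) (by
    intro w hw
    have hw' := hb w hw
    rw [mem_ball', dist_eq_norm] at hw
    rw [← mul_sub, norm_mul]
    gcongr)
  refine this.trans (le_of_eq ?_)
  simp [Measure.real, Complex.volume_ball, hδ.le]
  ring

theorem psi_meas {h : ℂ → ℂ} (hm : Measurable h) (δ : ℝ) : StronglyMeasurable (Psi δ h) := by
  have : Psi δ h = fun ζ => ∫ w, {p : ℂ × ℂ | dist p.2 p.1 < δ}.indicator (fun p => (p.1 - p.2) * h p.2) (ζ, w) := by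
    ext ζ
    rw [Psi, ← integral_indicator measurableSet_ball]
    rfl
  rw [this]
  apply StronglyMeasurable.integral_prod_right (f := fun ζ w => {p : ℂ × ℂ | dist p.2 p.1 < δ}.indicator (fun p => (p.1 - p.2) * h p.2) (ζ, w))
  apply Measurable.stronglyMeasurable
  apply Measurable.indicator
  · fun_prop
  · exact measurableSet_lt (by fun_prop) (by fun_prop)

theorem psi_zero {h : ℂ → ℂ} {δ R : ℝ} (hs : ∀ w, R ≤ ‖w‖ → h w = 0) {ζ : ℂ} (hζ : R + δ ≤ ‖ζ‖) :
    Psi δ h ζ = 0 := by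
  rw [Psi, setIntegral_congr_fun (g := fun _ => 0) measurableSet_ball]
  · simp
  · intro w hw
    rw [mem_ball', dist_eq_norm] at hw
    simp only
    rw [hs, mul_zero]
    linarith [norm_sub_norm_le ζ w]

theorem psi_sum {N : ℕ} {h : ℕ → ℂ → ℂ} (hm : ∀ j, Measurable (h j)) {δ B : ℝ} (hδ : 0 < δ)
    (hB : ∀ j w, ‖h j w‖ ≤ B) (a : ℕ → ℂ) (ζ : ℂ) :
    Psi δ (fun w => ∑ j ∈ Finset.range N, a j * h j w) ζ = ∑ j ∈ Finset.range N, a j * Psi δ (h j) ζ := by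
  simp only [Psi, Finset.mul_sum, ← integral_const_mul]
  rw [← integral_finsetSum]
  · congr 1; ext w
    apply Finset.sum_congr rfl
    intros; ring
  · intro j _
    exact (psi_integrable (hm j) hδ ζ (hB j)).const_mul (a j)

open scoped Real in
theorem pompeiu {h : ℂ → ℂ} (hm : Measurable h) {δ B R : ℝ} (hδ : 0 < δ)
    (hB : ∀ w, ‖h w‖ ≤ B) (hs : ∀ w, R ≤ ‖w‖ → h w = 0) (z : ℂ) :
    ∫ ζ, Psi δ h ζ * (z - ζ)⁻¹ = -π * ∫ w, ((max (δ ^ 2 - ‖z - w‖ ^ 2) 0 : ℝ) : ℂ) * h w := by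
  have hB0 : 0 ≤ B := (norm_nonneg _).trans (hB 0)
  set G : ℂ → ℂ → ℂ := fun ζ w => {p : ℂ × ℂ | dist p.2 p.1 < δ}.indicator (fun p => (p.1 - p.2) * h p.2) (ζ, w) * (z - ζ)⁻¹ with hG
  have hGm : Measurable (Function.uncurry G) := by
    have h1 : Measurable ({p : ℂ × ℂ | dist p.2 p.1 < δ}.indicator (fun p => (p.1 - p.2) * h p.2)) := by
      apply Measurable.indicator
      · fun_prop
      · exact measurableSet_lt (by fun_prop) (by fun_prop)
    have h2 : Measurable (fun p : ℂ × ℂ => (z - p.1)⁻¹) := by fun_prop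
    exact h1.mul h2
  have hGi : Integrable (Function.uncurry G) (volume.prod volume) := by
    have i1 : Integrable ((ball (0 : ℂ) (R + δ)).indicator (fun ζ => δ * B * ‖z - ζ‖⁻¹)) :=
      IntegrableOn.integrable_indicator ((integrableOn_inv_norm_sub z (R + δ)).const_mul (δ * B)) measurableSet_ball
    have i2 : Integrable ((ball (0 : ℂ) R).indicator (fun _ => (1 : ℝ))) := by
      refine IntegrableOn.integrable_indicator ?_ measurableSet_ball
      exact integrableOn_const (by simp [Complex.volume_ball, ENNReal.mul_eq_top])
    refine Integrable.mono' (i1.mul_prod i2) hGm.aestronglyMeasurable ?_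
    refine Eventually.of_forall ?_
    rintro ⟨ζ, w⟩
    simp only [Function.uncurry, hG]
    by_cases hd : dist w ζ < δ
    · rw [indicator_of_mem (show (ζ, w) ∈ {p : ℂ × ℂ | dist p.2 p.1 < δ} from hd)]
      by_cases hw : R ≤ ‖w‖
      · rw [hs w hw]
        simp only [mul_zero, zero_mul, norm_zero]
        refine mul_nonneg (indicator_nonneg (fun _ _ => by positivity) _) (indicator_nonneg (fun _ _ => by positivity) _)
      · push Not at hw
        rw [dist_comm, dist_eq_norm] at hd
        rw [indicator_of_mem (by rw [mem_ball_zero_iff]; linarith [norm_sub_norm_le ζ w]),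
          indicator_of_mem (by simpa using hw), mul_one, norm_mul, norm_mul, norm_inv]
        gcongr
        exact hB w
    · rw [indicator_of_notMem (show (ζ, w) ∉ {p : ℂ × ℂ | dist p.2 p.1 < δ} from hd)]
      simp only [zero_mul, norm_zero]
      refine mul_nonneg (indicator_nonneg (fun _ _ => by positivity) _) (indicator_nonneg (fun _ _ => by positivity) _)
  have e1 : ∀ ζ, Psi δ h ζ * (z - ζ)⁻¹ = ∫ w, G ζ w := by
    intro ζ
    rw [Psi, ← integral_indicator measurableSet_ball, ← integral_mul_const]
    rfl
  simp only [e1]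
  rw [integral_integral_swap hGi, ← integral_const_mul]
  congr 1
  ext w
  have e2 := integral_ball_mul_inv (z - w) hδ
  rw [← mul_assoc, ← e2, ← integral_mul_const, ← integral_indicator measurableSet_ball, ← integral_add_right_eq_self _ w]
  congr 1
  ext ζ
  simp only [hG]
  by_cases hd : dist w (ζ + w) < δ
  · rw [indicator_of_mem (show (ζ + w, w) ∈ {p : ℂ × ℂ | dist p.2 p.1 < δ} from hd), indicator_of_mem]
    · simp only [add_sub_cancel_right, show z - (ζ + w) = z - w - ζ by ring]; ring
    · simpa [dist_eq_norm] using hd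
  · rw [indicator_of_notMem (show (ζ + w, w) ∉ {p : ℂ × ℂ | dist p.2 p.1 < δ} from hd), indicator_of_notMem, zero_mul]
    simpa [dist_eq_norm] using hd

theorem exists_net {S : Set ℂ} (hS : Bornology.IsBounded S) (hn : S.Nonempty) {η : ℝ} (hη : 0 < η) :
    ∃ (N : ℕ) (x : ℕ → ℂ) (q : ℂ → ℕ), Measurable q ∧ (∀ w, q w < N) ∧ (∀ j, x j ∈ S) ∧
      ∀ w, ∀ a ∈ S, dist w (x (q w)) ≤ dist w a + η := by
  have hT : TotallyBounded S := (hS.isCompact_closure.totallyBounded).subset subset_closure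
  obtain ⟨t, htS, htf, ht⟩ := Metric.finite_approx_of_totallyBounded hT η hη
  have htn : t.Nonempty := by
    obtain ⟨a, ha⟩ := hn
    obtain ⟨y, hy, -⟩ := mem_iUnion₂.mp (ht ha)
    exact ⟨y, hy⟩
  obtain ⟨x, hx⟩ := htf.countable.exists_eq_range htn
  have hex : ∃ N, ∀ y ∈ t, ∃ k ≤ N, x k = y := by
    have : ∀ y ∈ t, ∃ k, x k = y := by intro y hy; rw [hx] at hy; exact hy
    choose! k hk using this
    obtain ⟨N, hN⟩ := (htf.image k).bddAbove
    exact ⟨N, fun y hy => ⟨k y, hN (mem_image_of_mem k hy), hk y hy⟩⟩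
  obtain ⟨N, hN⟩ := hex
  refine ⟨N + 1, x, SimpleFunc.nearestPtInd x N, SimpleFunc.measurable _, ?_, ?_, ?_⟩
  · intro w
    exact Nat.lt_succ_of_le (SimpleFunc.nearestPtInd_le x N w)
  · intro j
    exact htS (hx ▸ mem_range_self j)
  · intro w a ha
    obtain ⟨y, hy, hya⟩ := mem_iUnion₂.mp (ht ha)
    obtain ⟨k, hk, rfl⟩ := hN y hy
    have := SimpleFunc.edist_nearestPt_le x w hk
    rw [edist_dist, edist_dist, ENNReal.ofReal_le_ofReal_iff dist_nonneg] at this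
    have h2 : SimpleFunc.nearestPt x N w = x (SimpleFunc.nearestPtInd x N w) := rfl
    rw [h2, dist_comm] at this
    have h3 := dist_triangle w a (x k)
    rw [mem_ball] at hya
    rw [dist_comm (x k) w] at this
    linarith

open scoped Real in
theorem approx_id {h : ℂ → ℂ} (hm : Measurable h) {δ B ω : ℝ} (hδ : 0 < δ) (hB : ∀ w, ‖h w‖ ≤ B)
    {z a : ℂ} (ha : ∀ w, ‖z - w‖ < δ → ‖h w - a‖ ≤ ω) :
    ‖((2 / (π * δ ^ 4) : ℝ) : ℂ) * (∫ w, ((max (δ ^ 2 - ‖z - w‖ ^ 2) 0 : ℝ) : ℂ) * h w) - a‖ ≤ ω := by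
  set A : ℂ → ℝ := fun w => max (δ ^ 2 - ‖z - w‖ ^ 2) 0 with hA
  have hpi := Real.pi_pos
  have hA1 : ∫ w, A w = π * δ ^ 4 / 2 := by
    rw [← integral_bump hδ]
    exact integral_sub_left_eq_self (fun w : ℂ => max (δ ^ 2 - ‖w‖ ^ 2) 0) volume z
  have hA0 : ∀ w, 0 ≤ A w := fun w => le_max_right _ _
  have hAi : Integrable A := by
    by_contra hn
    rw [integral_undef hn] at hA1
    have : 0 < π * δ ^ 4 / 2 := by positivity
    linarith
  have hAc : Integrable (fun w => (A w : ℂ)) := hAi.ofReal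
  have hAh : Integrable (fun w => (A w : ℂ) * h w) :=
    hAc.mul_bdd (c := B) hm.aestronglyMeasurable (Eventually.of_forall hB)
  have e1 : a = ((2 / (π * δ ^ 4) : ℝ) : ℂ) * ∫ w, (A w : ℂ) * a := by
    have e0 : ∫ w, (A w : ℂ) = ((∫ w, A w : ℝ) : ℂ) := integral_ofReal
    rw [integral_mul_const, e0, hA1, ← mul_assoc, ← Complex.ofReal_mul]
    have : 2 / (π * δ ^ 4) * (π * δ ^ 4 / 2) = 1 := by field_simp
    rw [this]; simp
  have e2 : ((2 / (π * δ ^ 4) : ℝ) : ℂ) * (∫ w, (A w : ℂ) * h w) - a =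
      ((2 / (π * δ ^ 4) : ℝ) : ℂ) * ∫ w, ((A w : ℂ) * h w - (A w : ℂ) * a) := by
    rw [integral_sub hAh (hAc.mul_const a), mul_sub, ← e1]
  rw [e2, norm_mul, Complex.norm_real, Real.norm_of_nonneg (by positivity)]
  have h3 : ‖∫ w, ((A w : ℂ) * h w - (A w : ℂ) * a)‖ ≤ ∫ w, A w * ω := by
    apply norm_integral_le_of_norm_le (hAi.mul_const ω)
    refine Eventually.of_forall fun w => ?_
    rw [← mul_sub, norm_mul, Complex.norm_real, Real.norm_of_nonneg (hA0 w)]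
    by_cases hw : ‖z - w‖ < δ
    · exact mul_le_mul_of_nonneg_left (ha w hw) (hA0 w)
    · have : A w = 0 := by
        apply max_eq_right; push Not at hw; nlinarith
      rw [this]; simp
  rw [integral_mul_const, hA1] at h3
  calc _ ≤ 2 / (π * δ ^ 4) * (π * δ ^ 4 / 2 * ω) := by gcongr
    _ = ω := by field_simp

open scoped Real in
theorem intD {z : ℂ} {R0 δ ω1 c2 c3 : ℝ} (hz : ‖z‖ < R0) (hδ : 0 < δ) (h1 : 0 ≤ ω1) (h2 : 0 ≤ c2) :
    IntegrableOn (fun ζ => ω1 * ‖z - ζ‖⁻¹ + c2 * errK δ ‖z - ζ‖ + c3) (ball 0 (R0 + 5)) ∧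
    ∫ ζ in ball 0 (R0 + 5), (ω1 * ‖z - ζ‖⁻¹ + c2 * errK δ ‖z - ζ‖ + c3) ≤
      ω1 * (∫ ζ in ball (0 : ℂ) (2 * R0 + 5), ‖ζ‖⁻¹) + c2 * (π ^ 2 * δ) + c3 * (π * (R0 + 5) ^ 2) := by
  have i1 := integrableOn_inv_norm_sub z (R0 + 5)
  have i2 : Integrable (fun ζ => errK δ ‖z - ζ‖) := (errK_int hδ).1.comp_sub_left z
  have i3 : IntegrableOn (fun _ : ℂ => c3) (ball 0 (R0 + 5)) :=
    integrableOn_const (by simp [Complex.volume_ball, ENNReal.mul_eq_top])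
  have j1 : IntegrableOn (fun ζ => ω1 * ‖z - ζ‖⁻¹) (ball 0 (R0 + 5)) := i1.const_mul ω1
  have j2 : IntegrableOn (fun ζ => c2 * errK δ ‖z - ζ‖) (ball 0 (R0 + 5)) := i2.integrableOn.const_mul c2
  have j12 : IntegrableOn (fun ζ => ω1 * ‖z - ζ‖⁻¹ + c2 * errK δ ‖z - ζ‖) (ball 0 (R0 + 5)) := j1.add j2
  refine ⟨j12.add i3, ?_⟩
  rw [integral_add j12 i3, integral_add j1 j2, integral_const_mul, integral_const_mul]
  have hR : 0 ≤ R0 := (norm_nonneg z).trans hz.le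
  gcongr
  · have ii := (integrableOn_inv_norm (2 * R0 + 5)).integrable_indicator measurableSet_ball
    rw [← integral_indicator (s := ball (0 : ℂ) (2 * R0 + 5)) measurableSet_ball,
      ← integral_sub_left_eq_self ((ball (0 : ℂ) (2 * R0 + 5)).indicator fun ζ => ‖ζ‖⁻¹) volume z, ← integral_indicator measurableSet_ball]
    apply integral_mono (IntegrableOn.integrable_indicator i1 measurableSet_ball) (ii.comp_sub_left z)
    intro ζ
    simp only
    by_cases hζ : ζ ∈ ball (0 : ℂ) (R0 + 5)
    · rw [indicator_of_mem hζ, indicator_of_mem]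
      rw [mem_ball_zero_iff] at hζ ⊢
      linarith [norm_sub_le z ζ]
    · rw [indicator_of_notMem hζ]
      exact indicator_nonneg (fun _ _ => by positivity) _
  · have e := integral_sub_left_eq_self (fun ζ : ℂ => errK δ ‖ζ‖) volume z
    rw [(errK_int hδ).2] at e
    rw [← e]
    apply setIntegral_le_integral i2
    refine Eventually.of_forall fun ζ => ?_
    simp only [errK, Pi.zero_apply]
    positivity
  · rw [setIntegral_const]
    simp [Measure.real, Complex.volume_ball]
    rw [ENNReal.toReal_ofReal (by linarith)]
    apply le_of_eq; ring

theorem lin_id {N N' : ℕ} (u : ℕ → ℂ → ℂ) (hu : ∀ j, StronglyMeasurable (u j)) {b R : ℝ}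
    (hub : ∀ j ζ, ‖u j ζ‖ ≤ b) (q : ℂ → ℕ) (hq : Measurable q) (hqN : ∀ w, q w < N')
    (Y : Set ℂ) (hY : MeasurableSet Y) (hYb : Y ⊆ ball 0 R) (a G m : ℕ → ℂ) :
    Integrable (Y.indicator (fun ζ => (∑ j ∈ Finset.range N, a j * u j ζ) * (G (q ζ) + (ζ - m (q ζ)) * G (q ζ) ^ 2))) ∧
    ∑ j ∈ Finset.range N, a j * ∑ k ∈ Finset.range N', ((∫ ζ in Y ∩ q ⁻¹' {k}, u j ζ) * G k +
      (∫ ζ in Y ∩ q ⁻¹' {k}, u j ζ * (ζ - m k)) * G k ^ 2) =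
    ∫ ζ, Y.indicator (fun ζ => (∑ j ∈ Finset.range N, a j * u j ζ) * (G (q ζ) + (ζ - m (q ζ)) * G (q ζ) ^ 2)) ζ := by
  have hYk : ∀ k, MeasurableSet (Y ∩ q ⁻¹' {k}) := fun k => hY.inter (hq (measurableSet_singleton k))
  have fin : ∀ k, volume (Y ∩ q ⁻¹' {k}) ≠ ⊤ := fun k =>
    ne_top_of_le_ne_top (by simp [Complex.volume_ball, ENNReal.mul_eq_top]) (measure_mono (inter_subset_left.trans hYb))
  have hb : 0 ≤ b := (norm_nonneg _).trans (hub 0 0)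
  have i1 : ∀ j k, IntegrableOn (u j) (Y ∩ q ⁻¹' {k}) := by
    intro j k
    refine Measure.integrableOn_of_bounded (M := b) (fin k) (hu j).aestronglyMeasurable (Eventually.of_forall (hub j))
  have i2 : ∀ j k, IntegrableOn (fun ζ => u j ζ * (ζ - m k)) (Y ∩ q ⁻¹' {k}) := by
    intro j k
    refine Measure.integrableOn_of_bounded (M := b * (R + ‖m k‖)) (fin k)
      ((hu j).mul (by fun_prop)).aestronglyMeasurable ?_
    filter_upwards [ae_restrict_mem (hYk k)] with ζ hζ
    have := hYb hζ.1
    rw [mem_ball_zero_iff] at this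
    rw [norm_mul]
    gcongr
    · exact hub j ζ
    · linarith [norm_sub_le ζ (m k)]
  have i3 : ∀ j k, IntegrableOn (fun ζ => a j * (u j ζ * G k + u j ζ * (ζ - m k) * G k ^ 2)) (Y ∩ q ⁻¹' {k}) := by
    intro j k
    exact (((i1 j k).mul_const _).add ((i2 j k).mul_const _)).const_mul _
  have i4 : ∀ k, IntegrableOn (fun ζ => ∑ j ∈ Finset.range N, a j * (u j ζ * G k + u j ζ * (ζ - m k) * G k ^ 2)) (Y ∩ q ⁻¹' {k}) := by
    intro k
    exact integrable_finsetSum _ fun j _ => i3 j k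
  have e : (Y.indicator (fun ζ => (∑ j ∈ Finset.range N, a j * u j ζ) * (G (q ζ) + (ζ - m (q ζ)) * G (q ζ) ^ 2))) =
      fun ζ => ∑ k ∈ Finset.range N', (Y ∩ q ⁻¹' {k}).indicator (fun ζ => ∑ j ∈ Finset.range N, a j * (u j ζ * G k + u j ζ * (ζ - m k) * G k ^ 2)) ζ := by
    ext ζ
    by_cases hζ : ζ ∈ Y
    · rw [Finset.sum_eq_single (q ζ), indicator_of_mem hζ, indicator_of_mem (by simp [hζ]), Finset.sum_mul]
      · apply Finset.sum_congr rfl; intros; ring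
      · intro k _ hk
        rw [indicator_of_notMem]
        rintro ⟨_, h⟩
        exact hk h.symm
      · intro h; exact absurd (Finset.mem_range.mpr (hqN ζ)) h
    · rw [indicator_of_notMem hζ, Finset.sum_eq_zero]
      intro k _
      rw [indicator_of_notMem]
      exact fun h => hζ h.1
  have i5 : ∀ k, Integrable ((Y ∩ q ⁻¹' {k}).indicator (fun ζ => ∑ j ∈ Finset.range N, a j * (u j ζ * G k + u j ζ * (ζ - m k) * G k ^ 2))) :=
    fun k => (i4 k).integrable_indicator (hYk k)
  rw [e]
  refine ⟨integrable_finsetSum _ fun k _ => i5 k, ?_⟩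
  rw [integral_finsetSum _ fun k _ => i5 k]
  simp only [Finset.mul_sum]
  rw [Finset.sum_comm]
  apply Finset.sum_congr rfl
  intro k _
  rw [integral_indicator (hYk k), integral_finsetSum _ fun j _ => i3 j k]
  apply Finset.sum_congr rfl
  intro j _
  rw [integral_const_mul, integral_add ((i1 j k).mul_const _) ((i2 j k).mul_const _), integral_mul_const, integral_mul_const]

open scoped Real in
theorem core {K : Set ℂ} (hK : IsCompact K) (hKn : K.Nonempty) (hKc : IsConnected Kᶜ) {R0 ρ δ η : ℝ}
    (hR0 : ∀ z ∈ K, ‖z‖ < R0) (hδ : 0 < δ) (hδρ : δ ≤ ρ) (hρ : ρ ≤ 1) (hη : 0 < η) (hηδ : η ≤ δ) :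
    ∃ (N : ℕ) (x : ℕ → ℂ) (g : ℕ → ℂ → ℂ), (∀ j, x j ∈ K) ∧ (∀ j, PolyApprox K (g j)) ∧
      ∀ (f : ℂ → ℂ) (B ω1 ω2 : ℝ), (∀ z ∈ K, ‖f z‖ ≤ B) → DifferentiableOn ℂ f (interior K) →
        (∀ z ∈ K, ∀ w ∈ K, dist z w ≤ η → ‖f z - f w‖ ≤ ω1) →
        (∀ z ∈ K, ∀ w ∈ K, dist z w ≤ 5 * ρ → ‖f z - f w‖ ≤ ω2) →
        ∀ z ∈ K, ‖f z - ∑ j ∈ Finset.range N, f (x j) * g j z‖ ≤ ω2 + 2 / (π ^ 2 * δ ^ 4) *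
          (π * δ ^ 3 * (ω1 * (∫ ζ in ball (0 : ℂ) (2 * R0 + 5), ‖ζ‖⁻¹) + 10 ^ 9 * ω2 * (π ^ 2 * δ) +
            10 ^ 9 * B * (δ ^ 2 / ρ ^ 3) * (π * (R0 + 5) ^ 2))) := by
  have hpi := Real.pi_pos
  have hρ0 : 0 < ρ := hδ.trans_le hδρ
  have hR0p : 0 < R0 := by
    obtain ⟨a, ha⟩ := hKn
    exact (norm_nonneg a).trans_lt (hR0 a ha)
  obtain ⟨N, x, q, hq, hqN, hxK, hqd⟩ := exists_net hK.isBounded hKn hη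
  have hSn : (Kᶜ ∩ ball (0 : ℂ) (R0 + 10)).Nonempty := by
    refine ⟨((R0 + 1 : ℝ) : ℂ), fun h => ?_, ?_⟩
    · have := hR0 _ h
      rw [Complex.norm_real, Real.norm_of_nonneg (by linarith)] at this
      linarith
    · rw [mem_ball_zero_iff, Complex.norm_real, Real.norm_of_nonneg (by linarith)]
      linarith
  obtain ⟨N', y, q', hq', hqN', hyS, hqd'⟩ := exists_net (isBounded_ball.subset (inter_subset_right : Kᶜ ∩ ball (0 : ℂ) (R0 + 10) ⊆ _)) hSn (half_pos hδ)
  have hker := fun k => exists_kernel hK hKn hKc hδ (hyS k).1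
  choose g0 m hg0 hg0k using hker
  set P : ℕ → ℂ → ℂ := fun j => (ball (0 : ℂ) (R0 + 4) ∩ q ⁻¹' {j}).indicator (fun _ => 1) with hP
  have hPm : ∀ j, Measurable (P j) := fun j =>
    measurable_const.indicator (measurableSet_ball.inter (hq (measurableSet_singleton j)))
  have hPb : ∀ j w, ‖P j w‖ ≤ 1 := by
    intro j w
    simp only [hP, indicator]
    split_ifs <;> simp
  set Y : Set ℂ := ball (0 : ℂ) (R0 + 5) ∩ {ζ | dist ζ (y (q' ζ)) ≤ 2 * δ} with hY
  have hYm : MeasurableSet Y := by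
    refine measurableSet_ball.inter (measurableSet_le ?_ measurable_const)
    have : Measurable (fun ζ => y (q' ζ)) := (measurable_from_nat (f := y)).comp hq'
    fun_prop
  have hub : ∀ j ζ, ‖Psi δ (P j) ζ‖ ≤ π * δ ^ 3 * 1 := by
    intro j ζ
    refine psi_bound (k := fun _ => 0) (hPm j) hδ (hPb j) (differentiableOn_const 0) ?_
    intro w _
    simpa using hPb j w
  set C : ℂ := ((-2 / (π ^ 2 * δ ^ 4) : ℝ) : ℂ) with hC
  refine ⟨N, x, fun j z => C * ∑ k ∈ Finset.range N', ((∫ ζ in Y ∩ q' ⁻¹' {k}, Psi δ (P j) ζ) * g0 k z +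
      (∫ ζ in Y ∩ q' ⁻¹' {k}, Psi δ (P j) ζ * (ζ - m k)) * g0 k z ^ 2), hxK, ?_, ?_⟩
  · intro j
    refine PolyApprox.mul hK (PolyApprox.const _) ?_
    refine PolyApprox.sum _ fun k _ => ?_
    exact PolyApprox.add (PolyApprox.mul hK (PolyApprox.const _) (hg0 k)) (PolyApprox.mul hK (PolyApprox.const _) (PolyApprox.pow hK (hg0 k) 2))
  intro f B ω1 ω2 hfB hfd hω1 hω2 z hz
  have hω10 : 0 ≤ ω1 := (norm_nonneg _).trans (hω1 z hz z hz (by simpa using hη.le))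
  have hω20 : 0 ≤ ω2 := (norm_nonneg _).trans (hω2 z hz z hz (by simpa using hρ0.le))
  have hB0 : 0 ≤ B := (norm_nonneg _).trans (hfB z hz)
  set h : ℂ → ℂ := fun w => ∑ j ∈ Finset.range N, f (x j) * P j w with hh
  have hin : ∀ w, ‖w‖ < R0 + 4 → h w = f (x (q w)) := by
    intro w hw
    simp only [hh]
    rw [Finset.sum_eq_single (q w)]
    · simp only [hP]
      rw [indicator_of_mem (show w ∈ ball (0 : ℂ) (R0 + 4) ∩ q ⁻¹' {q w} from ⟨by simpa using hw, by simp⟩), mul_one]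
    · intro k _ hk
      simp only [hP]
      rw [indicator_of_notMem, mul_zero]
      rintro ⟨_, h⟩
      exact hk h.symm
    · intro h; exact absurd (Finset.mem_range.mpr (hqN w)) h
  have hout : ∀ w, R0 + 4 ≤ ‖w‖ → h w = 0 := by
    intro w hw
    simp only [hh]
    apply Finset.sum_eq_zero
    intro k _
    simp only [hP]
    rw [indicator_of_notMem, mul_zero]
    rintro ⟨h, _⟩
    rw [mem_ball_zero_iff] at h
    linarith
  have hhB : ∀ w, ‖h w‖ ≤ B := by
    intro w
    rcases lt_or_ge ‖w‖ (R0 + 4) with hw | hw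
    · rw [hin w hw]; exact hfB _ (hxK _)
    · rw [hout w hw]; simpa using hB0
  have hhm : Measurable h := by
    apply Finset.measurable_fun_sum
    intro j _
    exact (hPm j).const_mul _
  have hPsi : ∀ ζ, Psi δ h ζ = ∑ j ∈ Finset.range N, f (x j) * Psi δ (P j) ζ :=
    psi_sum hPm hδ hPb (fun j => f (x j))
  -- step 1
  have s1 := approx_id hhm hδ hhB (z := z) (a := f z) (ω := ω2) (by
    intro w hw
    have hzR := hR0 z hz
    have hwR : ‖w‖ < R0 + 4 := by
      have := norm_sub_norm_le w z
      rw [norm_sub_rev] at this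
      linarith
    rw [hin w hwR]
    refine hω2 _ (hxK _) z hz ?_
    have t1 := hqd w z hz
    have t2 := dist_triangle_left (x (q w)) z w
    rw [← dist_eq_norm, dist_comm] at hw
    linarith)
  have s2 := pompeiu hhm hδ hhB hout z
  obtain ⟨iL, s3⟩ := lin_id (N := N) (fun j => Psi δ (P j)) (fun j => psi_meas (hPm j) δ) hub q' hq' hqN' Y hYm
    inter_subset_left (fun j => f (x j)) (fun k => g0 k z) m
  -- step 2: pointwise bound
  have hpt : ∀ ζ, ζ ≠ z → ‖Psi δ h ζ * (z - ζ)⁻¹ - Y.indicator (fun ζ => (∑ j ∈ Finset.range N, f (x j) * Psi δ (P j) ζ) *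
      (g0 (q' ζ) z + (ζ - m (q' ζ)) * g0 (q' ζ) z ^ 2)) ζ‖ ≤ (ball (0 : ℂ) (R0 + 5)).indicator (fun ζ => π * δ ^ 3 * (ω1 * ‖z - ζ‖⁻¹ + 10 ^ 9 * ω2 * errK δ ‖z - ζ‖ + 10 ^ 9 * B * (δ ^ 2 / ρ ^ 3))) ζ := by
    intro ζ hζz
    have hzζ : 0 < ‖z - ζ‖ := norm_pos_iff.mpr (sub_ne_zero.mpr hζz.symm)
    have herr : 0 ≤ errK δ ‖z - ζ‖ := by rw [errK]; positivity
    by_cases hζ : ζ ∈ ball (0 : ℂ) (R0 + 5)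
    swap
    · rw [indicator_of_notMem hζ, indicator_of_notMem (fun h => hζ h.1), psi_zero hout]
      · simp
      · rw [mem_ball_zero_iff] at hζ; linarith
    rw [indicator_of_mem hζ]
    rw [mem_ball_zero_iff] at hζ
    by_cases hζY : ζ ∈ Y
    · rw [indicator_of_mem hζY, ← hPsi, ← mul_sub, norm_mul]
      have hk := hg0k (q' ζ) z hz ζ (by rw [← dist_eq_norm]; exact hζY.2) hζz.symm
      rw [norm_sub_rev] at hk
      have hk' : ‖(z - ζ)⁻¹ - (g0 (q' ζ) z + (ζ - m (q' ζ)) * g0 (q' ζ) z ^ 2)‖ ≤ 10 ^ 9 * errK δ ‖z - ζ‖ := by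
        rw [errK, ← div_eq_mul_inv]; exact hk
      by_cases hnear : ∃ a ∈ K, dist ζ a ≤ ρ
      · obtain ⟨a, haK, haρ⟩ := hnear
        have hb : ‖Psi δ h ζ‖ ≤ π * δ ^ 3 * ω2 := by
          refine psi_bound (k := fun _ => f a) hhm hδ hhB (differentiableOn_const _) ?_
          intro w hw
          rw [mem_ball] at hw
          have haR := hR0 a haK
          have hwa : dist w a < 2 * ρ := by linarith [dist_triangle w ζ a]
          have hwR : ‖w‖ < R0 + 4 := by
            rw [dist_eq_norm] at hwa
            linarith [norm_sub_norm_le w a]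
          rw [hin w hwR]
          refine hω2 _ (hxK _) a haK ?_
          have t1 := hqd w a haK
          have t2 := dist_triangle_left (x (q w)) a w
          linarith
        calc _ ≤ π * δ ^ 3 * ω2 * (10 ^ 9 * errK δ ‖z - ζ‖) := by gcongr
          _ = π * δ ^ 3 * (0 + 10 ^ 9 * ω2 * errK δ ‖z - ζ‖ + 0) := by ring
          _ ≤ _ := by gcongr <;> positivity
      · push Not at hnear
        have hb : ‖Psi δ h ζ‖ ≤ π * δ ^ 3 * B := by
          refine psi_bound (k := fun _ => 0) hhm hδ hhB (differentiableOn_const _) ?_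
          intro w _
          simpa using hhB w
        have hfar := hnear z hz
        rw [dist_comm, dist_eq_norm] at hfar
        have he : errK δ ‖z - ζ‖ ≤ δ ^ 2 / ρ ^ 3 := by
          rw [errK]
          have : (ρ * (ρ / δ) ^ 2)⁻¹ = δ ^ 2 / ρ ^ 3 := by field_simp
          rw [← this]
          apply inv_anti₀ (by positivity)
          have : (ρ / δ) ^ 2 ≤ 1 + (‖z - ζ‖ / δ) ^ 2 := by
            have : (ρ / δ) ^ 2 ≤ (‖z - ζ‖ / δ) ^ 2 := by gcongr
            linarith
          gcongr
        calc _ ≤ π * δ ^ 3 * B * (10 ^ 9 * (δ ^ 2 / ρ ^ 3)) := by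
              gcongr; exact hk'.trans (by gcongr)
          _ = π * δ ^ 3 * (0 + 0 + 10 ^ 9 * B * (δ ^ 2 / ρ ^ 3)) := by ring
          _ ≤ _ := by gcongr <;> positivity
    · rw [indicator_of_notMem hζY, sub_zero, norm_mul, norm_inv]
      have hd : 2 * δ < dist ζ (y (q' ζ)) := by
        by_contra hc
        push Not at hc
        exact hζY ⟨by simpa using hζ, hc⟩
      have hsub : ball ζ (3 / 2 * δ) ⊆ K := by
        intro a ha
        by_contra haK
        rw [mem_ball'] at ha
        have := hqd' ζ a ⟨haK, by
          rw [mem_ball_zero_iff]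
          rw [dist_comm, dist_eq_norm] at ha
          linarith [norm_sub_norm_le a ζ]⟩
        linarith
      have hsubi : closedBall ζ δ ⊆ interior K :=
        (closedBall_subset_ball (by linarith)).trans (interior_maximal hsub isOpen_ball)
      have hb : ‖Psi δ h ζ‖ ≤ π * δ ^ 3 * ω1 := by
        refine psi_bound (k := f) hhm hδ hhB (hfd.mono hsubi) ?_
        intro w hw
        have hwK : w ∈ K := interior_subset (hsubi (ball_subset_closedBall hw))
        rw [hin w (by linarith [hR0 w hwK])]
        refine hω1 _ (hxK _) w hwK ?_
        have := hqd w w hwK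
        rw [dist_self, zero_add, dist_comm] at this
        exact this
      calc _ ≤ π * δ ^ 3 * ω1 * ‖z - ζ‖⁻¹ := by gcongr
          _ = π * δ ^ 3 * (ω1 * ‖z - ζ‖⁻¹ + 0 + 0) := by ring
          _ ≤ _ := by gcongr <;> positivity
  obtain ⟨iD, hD⟩ := intD (z := z) (ω1 := ω1) (c2 := 10 ^ 9 * ω2) (c3 := 10 ^ 9 * B * (δ ^ 2 / ρ ^ 3)) (hR0 z hz) hδ hω10 (by positivity)
  have iP : Integrable (fun ζ => Psi δ h ζ * (z - ζ)⁻¹) := by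
    have i1 : Integrable ((ball (0 : ℂ) (R0 + 5)).indicator (fun ζ => π * δ ^ 3 * B * ‖z - ζ‖⁻¹)) :=
      IntegrableOn.integrable_indicator ((integrableOn_inv_norm_sub z (R0 + 5)).const_mul _) measurableSet_ball
    refine Integrable.mono' i1 ((psi_meas hhm δ).mul (by fun_prop)).aestronglyMeasurable ?_
    refine Eventually.of_forall fun ζ => ?_
    by_cases hζ : ζ ∈ ball (0 : ℂ) (R0 + 5)
    · rw [indicator_of_mem hζ, norm_mul, norm_inv]
      gcongr
      refine psi_bound (k := fun _ => 0) hhm hδ hhB (differentiableOn_const _) ?_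
      intro w _
      simpa using hhB w
    · rw [indicator_of_notMem hζ, psi_zero hout]
      · simp
      · rw [mem_ball_zero_iff] at hζ; linarith
  have s4 := norm_integral_le_of_norm_le (IntegrableOn.integrable_indicator (iD.const_mul (π * δ ^ 3)) measurableSet_ball)
    (f := fun ζ => Psi δ h ζ * (z - ζ)⁻¹ - Y.indicator (fun ζ => (∑ j ∈ Finset.range N, f (x j) * Psi δ (P j) ζ) *
      (g0 (q' ζ) z + (ζ - m (q' ζ)) * g0 (q' ζ) z ^ 2)) ζ) (by
      have : ∀ᵐ ζ : ℂ, ζ ≠ z := by simp [ae_iff]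
      filter_upwards [this] with ζ hζ
      exact hpt ζ hζ)
  rw [integral_sub iP iL, integral_indicator measurableSet_ball, integral_const_mul, ← s3, s2] at s4
  have s5 : ∑ j ∈ Finset.range N, f (x j) * (C * ∑ k ∈ Finset.range N', ((∫ ζ in Y ∩ q' ⁻¹' {k}, Psi δ (P j) ζ) * g0 k z +
      (∫ ζ in Y ∩ q' ⁻¹' {k}, Psi δ (P j) ζ * (ζ - m k)) * g0 k z ^ 2)) = C * ∑ j ∈ Finset.range N, f (x j) * (∑ k ∈ Finset.range N', ((∫ ζ in Y ∩ q' ⁻¹' {k}, Psi δ (P j) ζ) * g0 k z +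
      (∫ ζ in Y ∩ q' ⁻¹' {k}, Psi δ (P j) ζ * (ζ - m k)) * g0 k z ^ 2)) := by
    rw [Finset.mul_sum]
    apply Finset.sum_congr rfl
    intros; ring
  simp only at s5 ⊢
  rw [s5]
  generalize (∑ j ∈ Finset.range N, f (x j) * (∑ k ∈ Finset.range N', ((∫ ζ in Y ∩ q' ⁻¹' {k}, Psi δ (P j) ζ) * g0 k z +
      (∫ ζ in Y ∩ q' ⁻¹' {k}, Psi δ (P j) ζ * (ζ - m k)) * g0 k z ^ 2))) = S at s4 ⊢
  generalize (∫ w, ((max (δ ^ 2 - ‖z - w‖ ^ 2) 0 : ℝ) : ℂ) * h w) = J at s1 s4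
  have e1 : f z - C * S = -(((2 / (π * δ ^ 4) : ℝ) : ℂ) * J - f z) + C * (-π * J - S) := by
    have : C * (-π) = ((2 / (π * δ ^ 4) : ℝ) : ℂ) := by
      rw [hC, ← Complex.ofReal_neg, ← Complex.ofReal_mul]
      congr 1
      field_simp
    rw [← this]; ring
  rw [e1]
  refine (norm_add_le _ _).trans ?_
  rw [norm_neg, norm_mul]
  have hCn : ‖C‖ = 2 / (π ^ 2 * δ ^ 4) := by
    rw [hC, Complex.norm_real, neg_div, norm_neg, Real.norm_of_nonneg (by positivity)]
  rw [hCn]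
  have s6 := s4.trans (mul_le_mul_of_nonneg_left hD (by positivity : 0 ≤ π * δ ^ 3))
  gcongr

open scoped Real in
theorem mergelyan_op {K : Set ℂ} (hK : IsCompact K) (hKn : K.Nonempty) (hKc : IsConnected Kᶜ)
    {ι : Type*} (F : ι → ℂ → ℂ) (B0 : ℝ) (hB0 : ∀ i, ∀ z ∈ K, ‖F i z‖ ≤ B0)
    (heq : ∀ ε > 0, ∃ δ > 0, ∀ i, ∀ z ∈ K, ∀ w ∈ K, dist z w < δ → ‖F i z - F i w‖ ≤ ε)
    (hd : ∀ i, DifferentiableOn ℂ (F i) (interior K)) {ε : ℝ} (hε : 0 < ε) :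
    ∃ (N : ℕ) (x : ℕ → ℂ) (p : ℕ → Polynomial ℂ), (∀ j, x j ∈ K) ∧
      ∀ i, ∀ z ∈ K, ‖F i z - ∑ j ∈ Finset.range N, F i (x j) * (p j).eval z‖ ≤ ε := by
  have hpi := Real.pi_pos
  set B : ℝ := |B0| + 1 with hBdef
  have hBp : 0 < B := by positivity
  have hB : ∀ i, ∀ z ∈ K, ‖F i z‖ ≤ B := fun i z hz => (hB0 i z hz).trans (by linarith [le_abs_self B0])
  obtain ⟨R0, hR00, hR0⟩ : ∃ R0 : ℝ, 0 < R0 ∧ ∀ z ∈ K, ‖z‖ < R0 := by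
    obtain ⟨R, hR0, hR⟩ := hK.isBounded.exists_pos_norm_lt
    exact ⟨R, hR0, hR⟩
  set I : ℝ := ∫ ζ in ball (0 : ℂ) (2 * R0 + 5), ‖ζ‖⁻¹ with hI
  have hI0 : 0 ≤ I := integral_nonneg fun _ => by positivity
  set ω2 : ℝ := ε / (4 * (1 + 2 * π * 10 ^ 9)) with hω2
  have hω2p : 0 < ω2 := by positivity
  obtain ⟨r, hr, hr'⟩ := heq ω2 hω2p
  obtain ⟨ρ, hρ0, hρ1, hρr⟩ : ∃ ρ : ℝ, 0 < ρ ∧ ρ ≤ 1 ∧ 5 * ρ < r :=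
    ⟨min 1 (r / 6), by positivity, min_le_left _ _, by linarith [min_le_right 1 (r / 6)]⟩
  obtain ⟨δ, hδ0, hδρ, hδ⟩ : ∃ δ : ℝ, 0 < δ ∧ δ ≤ ρ ∧ δ ≤ ε * ρ ^ 3 / (8 * 10 ^ 9 * B * (R0 + 5) ^ 2) :=
    ⟨min ρ _, lt_min hρ0 (by positivity), min_le_left _ _, min_le_right _ _⟩
  set ω1 : ℝ := ε * δ * π / (8 * (I + 1)) with hω1
  have hω1p : 0 < ω1 := by positivity
  obtain ⟨r1, hr1, hr1'⟩ := heq ω1 hω1p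
  obtain ⟨η, hη0, hηδ, hηr⟩ : ∃ η : ℝ, 0 < η ∧ η ≤ δ ∧ η < r1 :=
    ⟨min δ (r1 / 2), by positivity, min_le_left _ _, by linarith [min_le_right δ (r1 / 2)]⟩
  obtain ⟨N, x, g, hx, hg, hmain⟩ := core hK hKn hKc hR0 hδ0 hδρ hρ1 hη0 hηδ
  have hε' : 0 < ε / (4 * (N + 1) * B) := by positivity
  choose p hp using fun j => hg j _ hε'
  refine ⟨N, x, p, hx, ?_⟩
  intro i z hz
  have h1 := hmain (F i) B ω1 ω2 (hB i) (hd i) (fun z hz w hw hzw => hr1' i z hz w hw (hzw.trans_lt hηr))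
    (fun z hz w hw hzw => hr' i z hz w hw (hzw.trans_lt hρr)) z hz
  rw [← hI] at h1
  have b2 : ω2 * (1 + 2 * π * 10 ^ 9) = ε / 4 := by
    rw [hω2]; field_simp
  have b1 : 2 / (π * δ) * ω1 * I ≤ ε / 4 := by
    have : 2 / (π * δ) * ω1 * I = ε / 4 * (I / (I + 1)) := by
      rw [hω1]; field_simp; ring
    rw [this]
    have : I / (I + 1) ≤ 1 := by rw [div_le_one (by positivity)]; linarith
    nlinarith
  have b3 : 2 * 10 ^ 9 * B * (R0 + 5) ^ 2 * δ / ρ ^ 3 ≤ ε / 4 := by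
    rw [div_le_iff₀ (by positivity)]
    rw [le_div_iff₀ (by positivity)] at hδ
    linarith
  have e : ω2 + 2 / (π ^ 2 * δ ^ 4) * (π * δ ^ 3 * (ω1 * I + 10 ^ 9 * ω2 * (π ^ 2 * δ) +
      10 ^ 9 * B * (δ ^ 2 / ρ ^ 3) * (π * (R0 + 5) ^ 2))) =
      ω2 * (1 + 2 * π * 10 ^ 9) + 2 / (π * δ) * ω1 * I + 2 * 10 ^ 9 * B * (R0 + 5) ^ 2 * δ / ρ ^ 3 := by
    field_simp
    ring
  rw [e] at h1
  have h2 : ‖∑ j ∈ Finset.range N, F i (x j) * g j z - ∑ j ∈ Finset.range N, F i (x j) * (p j).eval z‖ ≤ ε / 4 := by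
    rw [← Finset.sum_sub_distrib]
    refine (norm_sum_le _ _).trans ?_
    have : ∀ j ∈ Finset.range N, ‖F i (x j) * g j z - F i (x j) * (p j).eval z‖ ≤ B * (ε / (4 * (N + 1) * B)) := by
      intro j _
      rw [← mul_sub, norm_mul, norm_sub_rev]
      gcongr
      · exact hB i _ (hx j)
      · exact hp j z hz
    refine (Finset.sum_le_sum this).trans ?_
    rw [Finset.sum_const, Finset.card_range, nsmul_eq_mul]
    have : (N : ℝ) * (B * (ε / (4 * (N + 1) * B))) = ε / 4 * (N / (N + 1)) := by
      field_simp
    rw [this]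
    have : (N : ℝ) / (N + 1) ≤ 1 := by rw [div_le_one (by positivity)]; linarith
    nlinarith
  have := norm_sub_le_norm_sub_add_norm_sub (F i z) (∑ j ∈ Finset.range N, F i (x j) * g j z) (∑ j ∈ Finset.range N, F i (x j) * (p j).eval z)
  linarith

theorem unif_fin {I : Type*} {X : Set (I → ℂ)} (hX : IsCompact X) {f : (I → ℂ) → ℂ} (hf : ContinuousOn f X)
    {ε : ℝ} (hε : 0 < ε) : ∃ (s : Finset I) (δ : ℝ), 0 < δ ∧ ∀ z ∈ X, ∀ w ∈ X, (∀ i ∈ s, dist (z i) (w i) < δ) →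
      dist (f z) (f w) < ε := by
  have h := hX.uniformContinuousOn_of_continuous hf
  have h1 := h (Metric.dist_mem_uniformity hε)
  rw [mem_map, mem_inf_principal, Pi.uniformity, mem_iInf] at h1
  obtain ⟨S, hS, V, hV, hU⟩ := h1
  have h2 : ∀ i : S, ∃ δ > 0, ∀ z w : I → ℂ, dist (z i) (w i) < δ → (z, w) ∈ V i := by
    intro i
    obtain ⟨t, ht, htV⟩ := mem_comap.mp (hV i)
    obtain ⟨δ, hδ, hδt⟩ := Metric.mem_uniformity_dist.mp ht
    exact ⟨δ, hδ, fun z w hzw => htV (hδt hzw)⟩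
  choose d hd hd' using h2
  have : Finite S := hS
  obtain ⟨δ, hδ, hδd⟩ : ∃ δ > 0, ∀ i, δ ≤ d i := by
    cases isEmpty_or_nonempty S
    · exact ⟨1, one_pos, fun i => (IsEmpty.false i).elim⟩
    · obtain ⟨i0, hi0⟩ := Finite.exists_min d
      exact ⟨d i0, hd i0, hi0⟩
  refine ⟨hS.toFinset, δ, hδ, fun z hz w hw hzw => ?_⟩
  have : (z, w) ∈ ⋂ i, V i := mem_iInter.mpr fun i => hd' i z w ((hzw i (by simp)).trans_le (hδd i))
  rw [← hU] at this
  exact this ⟨hz, hw⟩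

theorem upd_mem {I : Type*} [DecidableEq I] {K : I → Set ℂ} {z : I → ℂ} (hz : z ∈ Set.pi univ K) {i : I} {w : ℂ}
    (hw : w ∈ K i) : Function.update z i w ∈ Set.pi univ K := by
  intro j _
  by_cases h : j = i
  · subst h; simpa using hw
  · rw [Function.update_of_ne h]; exact hz j trivial

theorem sep_hol {I : Type*} [DecidableEq I] (Ω : I → Set ℂ)
    (hΩo : ∀ i, IsOpen (Ω i)) (hX : IsCompact (Set.pi univ fun i => closure (Ω i)))
    (f : (I → ℂ) → ℂ)
    (hfc : ContinuousOn f (Set.pi Set.univ fun i => closure (Ω i)))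
    (hfd : ∀ z ∈ Set.pi Set.univ Ω, ∀ i : I,
      DifferentiableAt ℂ (fun w => f (Function.update z i w)) (z i))
    (z : I → ℂ) (hz : z ∈ Set.pi univ fun i => closure (Ω i)) (i : I) :
    DifferentiableOn ℂ (fun w => f (Function.update z i w)) (Ω i) := by
  have hne : (𝓝[Set.pi univ Ω] z).NeBot := by
    rw [← mem_closure_iff_nhdsWithin_neBot, closure_pi_set]
    exact hz
  have hsub : Set.pi univ Ω ⊆ Set.pi univ fun i => closure (Ω i) := Set.pi_mono fun i _ => subset_closure
  have hT : TendstoUniformlyOn (fun (y : I → ℂ) w => f (Function.update y i w)) (fun w => f (Function.update z i w))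
      (𝓝[Set.pi univ Ω] z) (Ω i) := by
    rw [Metric.tendstoUniformlyOn_iff]
    intro ε hε
    obtain ⟨s, δ, hδ, hs⟩ := unif_fin hX hfc hε
    have h1 : ∀ᶠ y in 𝓝[Set.pi univ Ω] z, ∀ j ∈ s, dist (y j) (z j) < δ := by
      rw [Filter.eventually_all_finset]
      intro j _
      exact nhdsWithin_le_nhds ((continuous_apply j).continuousAt.eventually (ball_mem_nhds (z j) hδ))
    filter_upwards [h1, self_mem_nhdsWithin] with y hy hyΩ w hw
    refine hs _ (upd_mem hz (subset_closure hw)) _ (upd_mem (hsub hyΩ) (subset_closure hw)) ?_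
    intro j hj
    by_cases h : j = i
    · subst h; simpa using hδ
    · rw [Function.update_of_ne h, Function.update_of_ne h, dist_comm]; exact hy j hj
  refine hT.tendstoLocallyUniformlyOn.differentiableOn ?_ (hΩo i)
  filter_upwards [self_mem_nhdsWithin] with y hy w hw
  have := hfd _ (upd_mem hy hw) i
  simp only [Function.update_self, Function.update_idem] at this
  exact this.differentiableWithinAt

theorem fin_approx {I : Type*} [DecidableEq I] (Ω : I → Set ℂ)
    (hX : IsCompact (Set.pi univ fun i => closure (Ω i))) (hΩn : ∀ i, (Ω i).Nonempty)
    (hΩb : ∀ i, Bornology.IsBounded (Ω i))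
    (hreg : ∀ i, interior (closure (Ω i)) = Ω i)
    (hcc : ∀ i, IsConnected (closure (Ω i))ᶜ) (s : Finset I) :
    ∀ f : (I → ℂ) → ℂ, ContinuousOn f (Set.pi univ fun i => closure (Ω i)) →
      (∀ z ∈ Set.pi univ fun i => closure (Ω i), ∀ i, DifferentiableOn ℂ (fun w => f (Function.update z i w)) (Ω i)) →
      (∀ z w, (∀ i ∈ s, z i = w i) → f z = f w) →
      ∀ ε > 0, ∃ P : MvPolynomial I ℂ, ∀ z ∈ Set.pi Set.univ fun i => closure (Ω i), ‖MvPolynomial.eval z P - f z‖ ≤ ε := by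
  induction s using Finset.induction_on with
  | empty =>
    intro f _ _ hdep ε hε
    refine ⟨MvPolynomial.C (f 0), fun z _ => ?_⟩
    rw [MvPolynomial.eval_C, hdep z 0 (by simp)]
    simpa using hε.le
  | insert i s his ih =>
    intro f hfc hfd hdep ε hε
    set X : Set (I → ℂ) := Set.pi univ fun i => closure (Ω i) with hXdef
    have hK : IsCompact (closure (Ω i)) := (hΩb i).isCompact_closure
    obtain ⟨B, hB⟩ := hX.exists_bound_of_continuousOn hfc
    obtain ⟨N, x, p, hx, hp⟩ := mergelyan_op hK (hΩn i).closure (hcc i)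
      (fun (z : X) w => f (Function.update z.1 i w)) B (fun z w hw => hB _ (upd_mem z.2 hw))
      (by
        intro ε hε
        obtain ⟨t, δ, hδ, ht⟩ := unif_fin hX hfc hε
        refine ⟨δ, hδ, fun z a ha b hb hab => ?_⟩
        rw [← dist_eq_norm]
        refine (ht _ (upd_mem z.2 ha) _ (upd_mem z.2 hb) ?_).le
        intro j _
        by_cases h : j = i
        · subst h; simpa using hab
        · rw [Function.update_of_ne h, Function.update_of_ne h]; simpa using hδ)
      (by
        intro z
        rw [hreg i]
        exact hfd z z.2 i) (half_pos hε)
    obtain ⟨M, hM0, hM⟩ : ∃ M : ℝ, 0 < M ∧ ∀ j ∈ Finset.range N, ∀ w ∈ closure (Ω i), ‖(p j).eval w‖ ≤ M := by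
      have : ∀ j, ∃ C, ∀ w ∈ closure (Ω i), ‖(p j).eval w‖ ≤ C := fun j =>
        hK.exists_bound_of_continuousOn (p j).continuous.continuousOn
      choose C hC using this
      refine ⟨1 + ∑ j ∈ Finset.range N, |C j|, by positivity, fun j hj w hw => (hC j w hw).trans ?_⟩
      have := Finset.single_le_sum (f := fun j => |C j|) (fun j _ => abs_nonneg _) hj
      linarith [le_abs_self (C j)]
    have hεM : 0 < ε / (2 * (N + 1) * M) := by positivity
    have hih : ∀ j, ∃ P : MvPolynomial I ℂ, ∀ z ∈ X, ‖MvPolynomial.eval z P - f (Function.update z i (x j))‖ ≤ ε / (2 * (N + 1) * M) := by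
      intro j
      refine ih (fun z => f (Function.update z i (x j))) ?_ ?_ ?_ _ hεM
      · refine hfc.comp (by fun_prop) ?_
        intro z hz
        exact upd_mem hz (hx j)
      · intro z hz k
        by_cases hk : k = i
        · subst hk
          simp only [Function.update_idem]
          exact differentiableOn_const _
        · have := hfd _ (upd_mem hz (hx j)) k
          refine this.congr fun w _ => ?_
          rw [Function.update_comm hk]
      · intro z w hzw
        apply hdep
        intro k hk
        by_cases h : k = i
        · subst h; simp
        · rw [Function.update_of_ne h, Function.update_of_ne h]
          exact hzw k (Finset.mem_of_mem_insert_of_ne hk h)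
    choose Q hQ using hih
    refine ⟨∑ j ∈ Finset.range N, Q j * Polynomial.aeval (MvPolynomial.X i) (p j), fun z hz => ?_⟩
    have hzi : z i ∈ closure (Ω i) := hz i trivial
    have he : MvPolynomial.eval z (∑ j ∈ Finset.range N, Q j * Polynomial.aeval (MvPolynomial.X i) (p j)) =
        ∑ j ∈ Finset.range N, MvPolynomial.eval z (Q j) * (p j).eval (z i) := by
      rw [map_sum]
      apply Finset.sum_congr rfl
      intro j _
      rw [map_mul]
      congr 1
      have := Polynomial.aeval_algHom_apply (MvPolynomial.aeval (R := ℂ) z) (MvPolynomial.X i) (p j)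
      rw [MvPolynomial.aeval_X, MvPolynomial.aeval_eq_eval] at this
      simpa using this.symm
    rw [he]
    have h1 := hp ⟨z, hz⟩ (z i) hzi
    simp only [Function.update_eq_self] at h1
    have h2 : ‖∑ j ∈ Finset.range N, MvPolynomial.eval z (Q j) * (p j).eval (z i) -
        ∑ j ∈ Finset.range N, f (Function.update z i (x j)) * (p j).eval (z i)‖ ≤ ε / 2 := by
      rw [← Finset.sum_sub_distrib]
      refine (norm_sum_le _ _).trans ?_
      have : ∀ j ∈ Finset.range N, ‖MvPolynomial.eval z (Q j) * (p j).eval (z i) - f (Function.update z i (x j)) * (p j).eval (z i)‖ ≤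
          ε / (2 * (N + 1) * M) * M := by
        intro j hj
        rw [← sub_mul, norm_mul]
        gcongr
        · exact hQ j z hz
        · exact hM j hj _ hzi
      refine (Finset.sum_le_sum this).trans ?_
      rw [Finset.sum_const, Finset.card_range, nsmul_eq_mul]
      have : (N : ℝ) * (ε / (2 * (N + 1) * M) * M) = ε / 2 * (N / (N + 1)) := by
        field_simp
      rw [this]
      have : (N : ℝ) / (N + 1) ≤ 1 := by rw [div_le_one (by positivity)]; linarith
      nlinarith
    rw [norm_sub_rev] at h1
    have := norm_sub_le_norm_sub_add_norm_sub (∑ j ∈ Finset.range N, MvPolynomial.eval z (Q j) * (p j).eval (z i)) (∑ j ∈ Finset.range N, f (Function.update z i (x j)) * (p j).eval (z i)) (f z)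
    linarith

theorem stmt7_aux {I : Type*} [DecidableEq I] (Ω : I → Set ℂ)
    (hΩo : ∀ i, IsOpen (Ω i)) (hΩc : ∀ i, IsConnected (Ω i))
    (hΩb : ∀ i, Bornology.IsBounded (Ω i))
    (hreg : ∀ i, interior (closure (Ω i)) = Ω i)
    (hcc : ∀ i, IsConnected (closure (Ω i))ᶜ)
    (f : (I → ℂ) → ℂ)
    (hfc : ContinuousOn f (Set.pi Set.univ fun i => closure (Ω i)))
    (hfd : ∀ z ∈ Set.pi Set.univ Ω, ∀ i : I,
      DifferentiableAt ℂ (fun w => f (Function.update z i w)) (z i)) :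
    ∀ ε > 0, ∃ P : MvPolynomial I ℂ,
      ∀ z ∈ Set.pi Set.univ fun i => closure (Ω i),
        ‖MvPolynomial.eval z P - f z‖ < ε := by
  intro ε hε
  have hX : IsCompact (Set.pi univ fun i => closure (Ω i)) := isCompact_univ_pi fun i => (hΩb i).isCompact_closure
  have hsh := sep_hol Ω hΩo hX f hfc hfd
  obtain ⟨s, δ, hδ, hs⟩ := unif_fin hX hfc (half_pos hε)
  choose x0 hx0 using fun i => (hΩc i).nonempty
  set T : (I → ℂ) → (I → ℂ) := fun z i => if i ∈ s then z i else x0 i with hT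
  have hTX : ∀ z ∈ Set.pi univ fun i => closure (Ω i), T z ∈ Set.pi univ fun i => closure (Ω i) := by
    intro z hz i _
    simp only [hT]
    split_ifs
    · exact hz i trivial
    · exact subset_closure (hx0 i)
  have hTc : Continuous T := by
    refine continuous_pi fun i => ?_
    simp only [hT]
    split_ifs <;> fun_prop
  obtain ⟨P, hP⟩ := fin_approx Ω hX (fun i => (hΩc i).nonempty) hΩb hreg hcc s (fun z => f (T z))
    (hfc.comp hTc.continuousOn hTX) (by
      intro z hz i
      by_cases hi : i ∈ s
      · refine (hsh _ (hTX z hz) i).congr fun w _ => ?_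
        congr 1
        ext j
        by_cases hj : j = i
        · subst hj; simp [hT, hi]
        · simp [hT, Function.update_of_ne hj]
      · refine (differentiableOn_const (f (T z))).congr fun w _ => ?_
        congr 1
        ext j
        by_cases hj : j = i
        · subst hj; simp [hT, hi]
        · simp [hT, Function.update_of_ne hj]) (by
      intro z w hzw
      congr 1
      ext j
      simp only [hT]
      split_ifs with hj
      · exact hzw j hj
      · rfl) (ε / 3) (by positivity)
  refine ⟨P, fun z hz => ?_⟩
  have h1 := hP z hz
  have h2 := hs (T z) (hTX z hz) z hz (by
    intro i hi
    simp [hT, hi, hδ])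
  rw [dist_eq_norm] at h2
  have := norm_sub_le_norm_sub_add_norm_sub (MvPolynomial.eval z P) (f (T z)) (f z)
  linarith

end Aux

/-- **Polynomials are dense in `A(∏ᵢ Ωᵢ)`.** Let `I` be an arbitrary index set and `Ωᵢ ⊂ ℂ`
bounded domains with `(closure Ωᵢ)° = Ωᵢ`, `ℂ \ closure Ωᵢ` connected, and constants `Mᵢ` so
that any two points of `Ωᵢ` can be joined in `Ωᵢ` by a path of length at most `Mᵢ`. Then every
`f : ∏ᵢ closure Ωᵢ → ℂ` continuous in the product topology and separately holomorphic on
`∏ᵢ Ωᵢ` is a uniform limit of polynomials (an `MvPolynomial` automatically depends on only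
finitely many of the variables). -/
theorem stmt7 {I : Type*} [DecidableEq I] (Ω : I → Set ℂ)
    (hΩo : ∀ i, IsOpen (Ω i)) (hΩc : ∀ i, IsConnected (Ω i))
    (hΩb : ∀ i, Bornology.IsBounded (Ω i))
    (hreg : ∀ i, interior (closure (Ω i)) = Ω i)
    (hcc : ∀ i, IsConnected (closure (Ω i))ᶜ)
    (M : I → ℝ) (hjoin : ∀ i, ∀ z ∈ Ω i, ∀ w ∈ Ω i, JoinedLe (Ω i) (M i) z w)
    (f : (I → ℂ) → ℂ)
    (hfc : ContinuousOn f (Set.pi Set.univ fun i => closure (Ω i)))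
    (hfd : ∀ z ∈ Set.pi Set.univ Ω, ∀ i : I,
      DifferentiableAt ℂ (fun w => f (Function.update z i w)) (z i)) :
    ∀ ε > 0, ∃ P : MvPolynomial I ℂ,
      ∀ z ∈ Set.pi Set.univ fun i => closure (Ω i),
        ‖MvPolynomial.eval z P - f z‖ < ε := by
  exact stmt7_aux Ω hΩo hΩc hΩb hreg hcc f hfc hfd
end

section
/- Let G ⊂ ℂ be a Jordan domain and φ : G → 𝔻 a conformal (biholomorphic) map onto the open unit disc. Then φ extends to a homeomorphism of closure(G) onto the closed unit disc. -/
/-- A Jordan domain: the bounded connected component of the complement of a Jordan curve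
(a homeomorphic image of the unit circle) in `ℂ`. -/
def IsJordanDomain (G : Set ℂ) : Prop :=
  ∃ C : Set ℂ, Nonempty (↥(Metric.sphere (0:ℂ) 1) ≃ₜ ↥C) ∧
    Bornology.IsBounded G ∧ ∃ z ∈ Cᶜ, G = connectedComponentIn Cᶜ z

section OC
open Set Filter Topology Metric Complex


lemma oc_log_forward {A : Set ℂ} (hA : IsClosed A) {S : Set ℂ} (hS : IsPreconnected S)
    (hSA : S ⊆ Aᶜ) {p q : ℂ} (hp : p ∈ S) (hq : q ∈ S) :
    ∃ g : ℂ → ℂ, ContinuousOn g A ∧ ∀ z ∈ A, exp (g z) = (z - p) / (z - q) := by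
  have hne : ∀ x ∈ S, ∀ z ∈ A, z - x ≠ 0 := by
    intro x hx z hz h
    rw [sub_eq_zero] at h
    exact hSA hx (h ▸ hz)
  have := hS.induction₂' (fun p q => q ∈ S → p ∈ S → ∃ g : ℂ → ℂ, ContinuousOn g A ∧ ∀ z ∈ A, exp (g z) = (z - p) / (z - q)) ?_ ?_ hp hq hq hp
  · exact this
  · intro x hx
    obtain ⟨r, hr, hb⟩ := Metric.isOpen_iff.1 hA.isOpen_compl x (hSA hx)
    have key : ∀ y ∈ ball x r, ∀ z ∈ A, ‖(z - y) / (z - x) - 1‖ < 1 := by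
      intro y hy z hz
      have h0 := hne x hx z hz
      have : (z - y) / (z - x) - 1 = (x - y) / (z - x) := by field_simp; ring
      rw [this, norm_div, div_lt_one (norm_pos_iff.2 h0)]
      have h1 : z ∉ ball x r := fun h => hb h hz
      rw [mem_ball, dist_comm, dist_eq] at hy
      rw [mem_ball, dist_eq, not_lt] at h1
      linarith
    have slit : ∀ u : ℂ, ‖u - 1‖ < 1 → u ∈ slitPlane := by
      intro u hu
      have := Complex.mem_slitPlane_of_norm_lt_one hu
      simpa using this
    have main : ∀ y ∈ ball x r, ∃ g : ℂ → ℂ, ContinuousOn g A ∧ ∀ z ∈ A, exp (g z) = (z - y) / (z - x) := by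
      intro y hy
      refine ⟨fun z => log ((z - y) / (z - x)), ?_, ?_⟩
      · refine ContinuousOn.clog ?_ (fun z hz => slit _ (key y hy z hz))
        exact ContinuousOn.div (by fun_prop) (by fun_prop) (hne x hx)
      · intro z hz
        exact exp_log (slitPlane_ne_zero (slit _ (key y hy z hz)))
    filter_upwards [mem_nhdsWithin_of_mem_nhds (ball_mem_nhds x hr)] with y hy
    refine ⟨fun _ _ => ?_, fun _ _ => main y hy⟩
    obtain ⟨g, hg, hg'⟩ := main y hy
    refine ⟨fun z => - g z, hg.neg, fun z hz => ?_⟩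
    rw [exp_neg, hg' z hz, inv_div]
  · intro x y z hx hy hz h1 h2 _ _
    obtain ⟨g, hg, hg'⟩ := h1 hy hx
    obtain ⟨k, hk, hk'⟩ := h2 hz hy
    refine ⟨fun w => g w + k w, hg.add hk, fun w hw => ?_⟩
    rw [exp_add, hg' w hw, hk' w hw, div_mul_div_cancel₀ (hne y hy w hw)]

lemma oc_exp_one_const {X : Type*} [TopologicalSpace X] {E : Set X} (hE : IsPreconnected E) {d : X → ℂ} (hd : ContinuousOn d E)
    (h1 : ∀ z ∈ E, exp (d z) = 1) : ∀ x ∈ E, ∀ y ∈ E, d x = d y := by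
  intro x hx y hy
  have hint : ∀ z ∈ E, ∃ n : ℤ, d z = n * (2 * Real.pi * I) := fun z hz => exp_eq_one_iff.1 (h1 z hz)
  have := hE.induction₂' (fun p q => p ∈ E → q ∈ E → d p = d q) ?_ ?_ hx hy hx hy
  · exact this
  · intro x hx
    have := (hd x hx) (ball_mem_nhds (d x) Real.pi_pos)
    filter_upwards [this, self_mem_nhdsWithin] with y hy hyE
    have : d x = d y := by
      obtain ⟨n, hn⟩ := hint x hx
      obtain ⟨m, hm⟩ := hint y hyE
      have hy' : dist (d y) (d x) < Real.pi := hy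
      rw [dist_eq, hn, hm, ← sub_mul, norm_mul] at hy'
      have e : ‖(2 * Real.pi * I : ℂ)‖ = 2 * Real.pi := by
        simp [abs_of_pos Real.pi_pos]
      rw [e, ← Int.cast_sub, norm_intCast] at hy'
      have h2 : |((m - n : ℤ) : ℝ)| < 1 := by
        by_contra h
        push Not at h
        nlinarith [Real.pi_pos]
      have h3 : |m - n| < 1 := by exact_mod_cast h2
      have : m = n := by
        have := Int.abs_lt_one_iff.1 h3
        omega
      rw [hn, hm, this]
    exact ⟨fun _ _ => this, fun _ _ => this.symm⟩
  · intro x y z hx hy hz h1 h2 _ _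
    exact (h1 hx hy).trans (h2 hy hz)

lemma oc_no_log {F : ℂ → ℂ} (hF : Continuous F) (h0 : ∀ z, F z ≠ 0) {p : ℂ} {R : ℝ} (hR : 0 < R)
    (h : ∀ z, dist z p = R → F z = z - p) : False := by
  have hsc : IsSimplyConnected (univ : Set ℂ) := by
    have : ContractibleSpace (univ : Set ℂ) := convex_univ.contractibleSpace univ_nonempty
    unfold IsSimplyConnected
    infer_instance
  obtain ⟨g, hg, hg'⟩ := exists_continuousOn_eqOn_exp_comp (X := ℂ) (U := univ)
    hsc isOpen_univ hF.continuousOn (by simpa using h0)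
  rw [continuousOn_univ] at hg
  have hR' : (R : ℂ) ≠ 0 := by exact_mod_cast hR.ne'
  have e : ∀ θ : ℝ, exp (g (p + R * exp (θ * I))) = R * exp (θ * I) := by
    intro θ
    have h1 := hg' (mem_univ (p + R * exp (θ * I)))
    simp only [Function.comp] at h1
    rw [h1, h]
    · ring
    · rw [dist_eq]; simp [norm_exp_ofReal_mul_I, abs_of_pos hR]
  have := oc_exp_one_const (X := ℝ) (E := univ) isPreconnected_univ
    (d := fun θ => g (p + R * exp (θ * I)) - θ * I - log R)
    (by fun_prop) (by
      intro θ _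
      rw [exp_sub, exp_sub, e, exp_log hR']
      field_simp) 0 (mem_univ _) (2 * Real.pi) (mem_univ _)
  simp [exp_two_pi_mul_I] at this
  have h2 : (2 * Real.pi * I : ℂ) = 0 := by linear_combination this
  exact two_pi_I_ne_zero h2

lemma oc_mem_component {W : Set ℂ} (hW : IsOpen W) {p x : ℂ}
    (hx : x ∈ closure (connectedComponentIn W p)) (hxW : x ∈ W) : x ∈ connectedComponentIn W p := by
  have h1 : IsOpen (connectedComponentIn W x) := hW.connectedComponentIn
  obtain ⟨y, hy1, hy2⟩ := mem_closure_iff.1 hx _ h1 (mem_connectedComponentIn hxW)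
  rw [connectedComponentIn_eq hy2, ← connectedComponentIn_eq hy1]
  exact mem_connectedComponentIn hxW

lemma oc_log_backward {K : Set ℂ} (hK : IsClosed K) {p q : ℂ} (hp : p ∉ K) (hq : q ∉ K)
    {g : ℂ → ℂ} (hg : ContinuousOn g K) (hg' : ∀ z ∈ K, exp (g z) = (z - p) / (z - q))
    (hb : Bornology.IsBounded (connectedComponentIn Kᶜ p)) : q ∈ connectedComponentIn Kᶜ p := by
  classical
  by_contra hqU
  set U := connectedComponentIn Kᶜ p with hU
  have hUo : IsOpen U := hK.isOpen_compl.connectedComponentIn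
  have hpU : p ∈ U := mem_connectedComponentIn hp
  have hcl : ∀ x ∈ closure U, x ∈ U ∨ x ∈ K := by
    intro x hx
    by_cases hxK : x ∈ K
    · exact Or.inr hxK
    · exact Or.inl (oc_mem_component hK.isOpen_compl hx hxK)
  obtain ⟨G, hG⟩ := ContinuousMap.exists_restrict_eq hK ⟨_, hg.domRestrict⟩
  have hG' : ∀ z ∈ K, G z = g z := fun z hz => by
    have := congrArg (fun k => k ⟨z, hz⟩) hG
    simpa using this
  have hqc : ∀ z ∈ closure U, z - q ≠ 0 := by
    intro z hz h
    rw [sub_eq_zero] at h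
    subst h
    rcases hcl _ hz with h | h
    · exact hqU h
    · exact hq h
  let F : ℂ → ℂ := U.piecewise (fun z => exp (G z) * (z - q)) (fun z => z - p)
  have hFc : Continuous F := by
    refine Continuous.piecewise ?_ (by fun_prop) (by fun_prop)
    intro z hz
    have hzU : z ∉ U := by
      have := hz.2
      rwa [hUo.interior_eq] at this
    have hzK : z ∈ K := (hcl z hz.1).resolve_left hzU
    rw [hG' z hzK, hg' z hzK, div_mul_cancel₀ _ (hqc z hz.1)]
  obtain ⟨R, hR⟩ := hb.subset_ball p
  have hRpos : 0 < R := by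
    have := hR hpU
    simpa using this
  refine oc_no_log hFc ?_ (p := p) hRpos ?_
  · intro z
    by_cases hz : z ∈ U
    · simp only [F, piecewise_eq_of_mem _ _ _ hz]
      exact mul_ne_zero (exp_ne_zero _) (hqc z (subset_closure hz))
    · simp only [F, piecewise_eq_of_notMem _ _ _ hz]
      intro h
      rw [sub_eq_zero] at h
      exact hz (h ▸ hpU)
  · intro z hz
    have : z ∉ U := fun h => by
      have := hR h
      rw [mem_ball, hz] at this
      exact lt_irrefl _ this
    simp only [F, piecewise_eq_of_notMem _ _ _ this]

lemma oc_preconn_compl_closedBall (c : ℂ) (R : ℝ) : IsPreconnected (closedBall c R)ᶜ := by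
  rcases lt_or_ge R 0 with hR | hR
  · rw [closedBall_eq_empty.2 hR, compl_empty]; exact isPreconnected_univ
  have : (closedBall c R)ᶜ = (fun x : ℝ × ℝ => c + x.1 * exp (x.2 * I)) '' (Ioi R ×ˢ univ) := by
    ext z
    simp only [mem_compl_iff, mem_closedBall, not_le, mem_image, mem_prod, mem_Ioi, mem_univ, and_true,
      Prod.exists]
    constructor
    · intro h
      refine ⟨‖z - c‖, arg (z - c), by rwa [dist_eq] at h, ?_⟩
      rw [norm_mul_exp_arg_mul_I]; ring
    · rintro ⟨a, b, h, rfl⟩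
      rw [dist_eq]
      simp only [add_sub_cancel_left, norm_mul, norm_exp_ofReal_mul_I, mul_one, norm_real]
      exact h.trans_le (le_abs_self a)
  rw [this]
  refine IsPreconnected.image (isPreconnected_Ioi.prod isPreconnected_univ) _ ?_
  fun_prop

lemma oc_log_backward' {K : Set ℂ} (hK : IsCompact K) {p q : ℂ} (hp : p ∉ K) (hq : q ∉ K)
    {g : ℂ → ℂ} (hg : ContinuousOn g K) (hg' : ∀ z ∈ K, exp (g z) = (z - p) / (z - q)) :
    q ∈ connectedComponentIn Kᶜ p := by
  by_cases hbp : Bornology.IsBounded (connectedComponentIn Kᶜ p)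
  · exact oc_log_backward hK.isClosed hp hq hg hg' hbp
  by_cases hbq : Bornology.IsBounded (connectedComponentIn Kᶜ q)
  · have := oc_log_backward hK.isClosed hq hp (g := fun z => - g z) hg.neg
      (fun z hz => by rw [exp_neg, hg' z hz, inv_div]) hbq
    rw [← connectedComponentIn_eq this]
    exact mem_connectedComponentIn hq
  obtain ⟨R, hR⟩ := hK.isBounded.subset_closedBall 0
  have hmeet : ∀ x, ¬ Bornology.IsBounded (connectedComponentIn Kᶜ x) →
      ∃ y ∈ connectedComponentIn Kᶜ x, y ∈ (closedBall (0:ℂ) R)ᶜ := by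
    intro x hx
    by_contra h
    push Not at h
    apply hx
    refine (isBounded_closedBall (x := (0:ℂ)) (r := R)).subset fun y hy => ?_
    have := h y hy
    simpa using this
  obtain ⟨a, ha, ha'⟩ := hmeet p hbp
  obtain ⟨b, hb, hb'⟩ := hmeet q hbq
  have := (oc_preconn_compl_closedBall 0 R).subset_connectedComponentIn ha' (compl_subset_compl.2 hR) hb'
  rw [connectedComponentIn_eq ha, connectedComponentIn_eq this, ← connectedComponentIn_eq hb]
  exact mem_connectedComponentIn hq

lemma oc_janiszewski {A B : Set ℂ} (hA : IsCompact A) (hB : IsCompact B) (hAB : IsPreconnected (A ∩ B))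
    {p q : ℂ} {S T : Set ℂ} (hS : IsPreconnected S) (hSA : S ⊆ Aᶜ) (hpS : p ∈ S) (hqS : q ∈ S)
    (hT : IsPreconnected T) (hTB : T ⊆ Bᶜ) (hpT : p ∈ T) (hqT : q ∈ T) :
    q ∈ connectedComponentIn (A ∪ B)ᶜ p := by
  classical
  obtain ⟨g, hg, hg'⟩ := oc_log_forward hA.isClosed hS hSA hpS hqS
  obtain ⟨k, hk, hk'⟩ := oc_log_forward hB.isClosed hT hTB hpT hqT
  have hc : ∃ c : ℂ, exp c = 1 ∧ ∀ z ∈ A ∩ B, g z = k z + c := by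
    rcases (A ∩ B).eq_empty_or_nonempty with h | ⟨x, hx⟩
    · exact ⟨0, exp_zero, by simp [h]⟩
    · have h1 : ∀ z ∈ A ∩ B, exp (g z - k z) = 1 := by
        intro z hz
        rw [exp_sub, hg' z hz.1, ← hk' z hz.2, div_self (exp_ne_zero _)]
      refine ⟨g x - k x, h1 x hx, fun z hz => ?_⟩
      have := oc_exp_one_const hAB (d := fun z => g z - k z)
        ((hg.mono inter_subset_left).sub (hk.mono inter_subset_right)) h1 z hz x hx
      rw [← this]; ring
  obtain ⟨c, hc1, hc⟩ := hc
  let G : ℂ → ℂ := A.piecewise g (fun z => k z + c)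
  have hGA : EqOn G g A := piecewise_eqOn _ _ _
  have hGB : EqOn G (fun z => k z + c) B := by
    intro z hz
    by_cases hzA : z ∈ A
    · rw [hGA hzA]; exact hc z ⟨hzA, hz⟩
    · exact piecewise_eq_of_notMem _ _ _ hzA
  refine oc_log_backward' (hA.union hB) (g := G) ?_ ?_ ?_ ?_
  · rintro (h | h)
    exacts [hSA hpS h, hTB hpT h]
  · rintro (h | h)
    exacts [hSA hqS h, hTB hqT h]
  · exact (hg.congr hGA).union_of_isClosed ((hk.add continuousOn_const).congr hGB) hA.isClosed hB.isClosed
  · rintro z (h | h)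
    · rw [hGA h, hg' z h]
    · rw [hGB h]; simp only; rw [exp_add, hc1, mul_one, hk' z h]

lemma oc_inverse {G V : Set ℂ} (hG : IsOpen G) (hV : IsOpen V) {φ : ℂ → ℂ} (hφ : DifferentiableOn ℂ φ G)
    (hb : BijOn φ G V) : ∃ f : ℂ → ℂ, DifferentiableOn ℂ f V ∧ MapsTo f V G ∧
      (∀ s ∈ V, φ (f s) = s) ∧ ∀ w ∈ G, f (φ w) = w := by
  let f := Function.invFunOn φ G
  have hinv := hb.invOn_invFunOn
  have hmap : MapsTo f V G := hb.surjOn.mapsTo_invFunOn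
  have h1 : ∀ s ∈ V, φ (f s) = s := fun s hs => hinv.2 hs
  have h2 : ∀ w ∈ G, f (φ w) = w := fun w hw => hinv.1 hw
  refine ⟨f, ?_, hmap, h1, h2⟩
  have hnc : ∀ w ∈ G, ¬ ∀ᶠ z in 𝓝 w, φ z = φ w := by
    intro w hw h
    have h3 : ∀ᶠ z in 𝓝 w, z = w := by
      filter_upwards [h, hG.mem_nhds hw] with z hz hzG
      exact hb.injOn hzG hw hz
    have h4 : ∀ᶠ z in 𝓝[≠] w, z = w := h3.filter_mono nhdsWithin_le_nhds
    have h5 : ∀ᶠ z in 𝓝[≠] w, False := by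
      filter_upwards [h4, self_mem_nhdsWithin] with z hz hz'
      exact hz' hz
    exact h5.exists.elim (fun _ h => h)
  have han : ∀ w ∈ G, AnalyticAt ℂ φ w := fun w hw => hφ.analyticAt (hG.mem_nhds hw)
  have hcont : ∀ s ∈ V, ContinuousAt f s := by
    intro s hs
    have h3 := ((han (f s) (hmap hs)).eventually_constant_or_nhds_le_map_nhds).resolve_left
      (hnc _ (hmap hs))
    rw [h1 s hs] at h3
    have : Tendsto f (map φ (𝓝 (f s))) (𝓝 (f s)) := by
      rw [tendsto_map'_iff]
      refine tendsto_id.congr' ?_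
      filter_upwards [hG.mem_nhds (hmap hs)] with z hz
      exact (h2 z hz).symm
    exact this.mono_left h3
  intro s hs
  refine (Complex.analyticAt_of_differentiable_on_punctured_nhds_of_continuousAt ?_
    (hcont s hs)).differentiableAt.differentiableWithinAt
  have hd := (han (f s) (hmap hs)).deriv
  rcases hd.eventually_eq_zero_or_eventually_ne_zero with h | h
  · exfalso
    apply hnc _ (hmap hs)
    obtain ⟨r, hr, hball⟩ := Metric.eventually_nhds_iff_ball.1 (h.and (hG.mem_nhds (hmap hs)))
    filter_upwards [ball_mem_nhds (f s) hr] with z hz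
    refine (isOpen_ball : IsOpen (ball (f s) r)).is_const_of_deriv_eq_zero (𝕜 := ℂ) (convex_ball (f s) r).isPreconnected
      (fun y hy => ((han y (hball y hy).2).differentiableAt).differentiableWithinAt) ?_ hz (mem_ball_self hr)
    intro y hy
    exact (hball y hy).1
  · have ht : Tendsto f (𝓝[≠] s) (𝓝[≠] (f s)) := by
      refine tendsto_nhdsWithin_iff.2 ⟨(hcont s hs).mono_left nhdsWithin_le_nhds, ?_⟩
      filter_upwards [self_mem_nhdsWithin, nhdsWithin_le_nhds (hV.mem_nhds hs)] with t ht htV heq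
      apply ht
      have := congrArg φ heq
      rwa [h1 t htV, h1 s hs] at this
    filter_upwards [ht.eventually h, nhdsWithin_le_nhds (hV.mem_nhds hs)] with t ht htV
    refine (HasDerivAt.of_local_left_inverse (hcont t htV)
      (han _ (hmap htV)).differentiableAt.hasDerivAt ht ?_).differentiableAt
    filter_upwards [hV.mem_nhds htV] with y hy using h1 y hy

lemma oc_det (a : ℂ) : |((ContinuousLinearMap.toSpanSingleton ℂ a).restrictScalars ℝ).det| = ‖a‖ ^ 2 := by
  simp [ContinuousLinearMap.det, LinearMap.det_restrictScalars, Algebra.norm_complex_apply, normSq_eq_norm_sq]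

lemma oc_area {Ω : Set ℂ} (hΩ : IsOpen Ω) {g : ℂ → ℂ} (hg : DifferentiableOn ℂ g Ω) (hi : InjOn g Ω)
    (hb : Bornology.IsBounded (g '' Ω)) :
    ∫⁻ x : ℝ, ∫⁻ y : ℝ, Ω.indicator (fun w => ENNReal.ofReal (‖deriv g w‖ ^ 2)) (x + y * I) ≠ ⊤ := by
  have h1 := MeasureTheory.lintegral_abs_det_fderiv_eq_addHaar_image MeasureTheory.volume hΩ.measurableSet
    (f := g) (f' := fun w => (ContinuousLinearMap.toSpanSingleton ℂ (deriv g w)).restrictScalars ℝ)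
    (fun w hw => ((hg.differentiableAt (hΩ.mem_nhds hw)).hasDerivAt.hasFDerivAt.restrictScalars ℝ).hasFDerivWithinAt) hi
  simp only [oc_det] at h1
  have h2 : MeasureTheory.volume (g '' Ω) ≠ ⊤ := hb.measure_lt_top.ne
  rw [← h1, ← MeasureTheory.lintegral_indicator hΩ.measurableSet,
    ← Complex.volume_preserving_equiv_real_prod.symm.lintegral_comp_emb
      (Complex.measurableEquivRealProd.symm.measurableEmbedding)] at h2
  have hm : Measurable (Ω.indicator (fun w => ENNReal.ofReal (‖deriv g w‖ ^ 2))) := by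
    refine Measurable.indicator ?_ hΩ.measurableSet
    have := measurable_deriv g
    fun_prop
  rw [MeasureTheory.Measure.volume_eq_prod, MeasureTheory.lintegral_prod _ (by
    exact (hm.comp (Complex.measurableEquivRealProd.symm.measurable)).aemeasurable)] at h2
  convert h2 using 6 with x y
  simp [Complex.measurableEquivRealProd, Complex.ext_iff]

lemma oc_norm_one_sub_exp (w : ℂ) : ‖1 - exp w‖ < 1 ↔ Real.exp w.re < 2 * Real.cos w.im := by
  have h : ‖1 - exp w‖ ^ 2 = 1 + Real.exp w.re * (Real.exp w.re - 2 * Real.cos w.im) := by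
    rw [← normSq_eq_norm_sq, normSq_apply]
    simp only [sub_re, one_re, exp_re, sub_im, one_im, exp_im]
    linear_combination (Real.exp w.re)^2 * Real.sin_sq_add_cos_sq w.im
  have hp := Real.exp_pos w.re
  rw [← sq_lt_one_iff₀ (norm_nonneg _), h]
  constructor
  · intro h1
    by_contra h2
    push Not at h2
    have := mul_nonneg hp.le (sub_nonneg.2 h2)
    linarith
  · intro h1
    have := mul_pos hp (sub_pos.2 h1)
    nlinarith

lemma oc_exists_small {H : ℝ → ENNReal} (hH : ∫⁻ x, H x ≠ ⊤) (x₀ : ℝ) {η : ℝ} (hη : 0 < η) :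
    ∃ x < x₀, H x < ENNReal.ofReal η := by
  by_contra h
  push Not at h
  apply hH
  rw [eq_top_iff]
  calc (⊤ : ENNReal) = ∫⁻ x in Iio x₀, ENNReal.ofReal η := by
        rw [MeasureTheory.setLIntegral_const, Real.volume_Iio, ENNReal.mul_top]
        simpa using hη
    _ ≤ ∫⁻ x in Iio x₀, H x := MeasureTheory.setLIntegral_mono' measurableSet_Iio (fun x hx => h x hx)
    _ ≤ ∫⁻ x, H x := MeasureTheory.setLIntegral_le_lintegral _ _

lemma oc_seg_bound {g : ℂ → ℂ} {Ω : Set ℂ} (hΩ : IsOpen Ω) (hg : DifferentiableOn ℂ g Ω) {x a b ε : ℝ}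
    (hε : 0 < ε) (hab : a ≤ b) (hba : b - a ≤ Real.pi) (hseg : ∀ y ∈ Icc a b, (x + y * I : ℂ) ∈ Ω)
    (hl : ∫⁻ y : ℝ, Ω.indicator (fun w => ENNReal.ofReal (‖deriv g w‖ ^ 2)) (x + y * I)
      < ENNReal.ofReal (ε ^ 2 / Real.pi)) :
    ‖g (x + b * I) - g (x + a * I)‖ ≤ ε := by
  have hpi := Real.pi_pos
  have hdc : ContinuousOn (fun y : ℝ => deriv g (x + y * I)) (Icc a b) := by
    have h1 : ContinuousOn (deriv g) Ω := (hg.deriv hΩ).continuousOn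
    exact h1.comp (by fun_prop) hseg
  have hder : ∀ y ∈ uIcc a b, HasDerivAt (fun y : ℝ => g (x + y * I)) (deriv g (x + y * I) * I) y := by
    intro y hy
    rw [uIcc_of_le hab] at hy
    have h1 := (hg.differentiableAt (hΩ.mem_nhds (hseg y hy))).hasDerivAt
    have h2 : HasDerivAt (fun y : ℝ => (x + y * I : ℂ)) I y := by
      have := ((hasDerivAt_id y).ofReal_comp.mul_const I).const_add (x : ℂ)
      simpa using this
    exact HasDerivAt.comp y h1 h2
  have hftc := intervalIntegral.integral_eq_sub_of_hasDerivAt hder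
    (ContinuousOn.intervalIntegrable (by rw [uIcc_of_le hab]; exact hdc.mul continuousOn_const))
  rw [← hftc]
  have hsq : ∫ y in a..b, ‖deriv g (x + y * I)‖ ^ 2 ≤ ε ^ 2 / Real.pi := by
    rw [intervalIntegral.integral_of_le hab]
    rw [← ENNReal.ofReal_le_ofReal_iff (by positivity), MeasureTheory.ofReal_integral_eq_lintegral_ofReal]
    · refine le_trans ?_ hl.le
      rw [← MeasureTheory.lintegral_indicator measurableSet_Ioc]
      refine MeasureTheory.lintegral_mono fun y => ?_
      by_cases hy : y ∈ Ioc a b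
      · rw [indicator_of_mem hy, indicator_of_mem (hseg y (Ioc_subset_Icc_self hy))]
      · rw [indicator_of_notMem hy]; exact zero_le
    · exact ((hdc.norm.pow 2).integrableOn_Icc).mono_set Ioc_subset_Icc_self
    · exact Filter.Eventually.of_forall fun y => by positivity
  calc ‖∫ y in a..b, deriv g (x + y * I) * I‖ ≤ ∫ y in a..b, ‖deriv g (x + y * I) * I‖ :=
        intervalIntegral.norm_integral_le_integral_norm hab
    _ ≤ ∫ y in a..b, (ε / Real.pi / 2 + Real.pi / (2 * ε) * ‖deriv g (x + y * I)‖ ^ 2) := by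
        refine intervalIntegral.integral_mono_on hab ?_ ?_ ?_
        · exact ContinuousOn.intervalIntegrable (by rw [uIcc_of_le hab]; exact (hdc.mul continuousOn_const).norm)
        · exact ContinuousOn.intervalIntegrable (by
            rw [uIcc_of_le hab]
            exact continuousOn_const.add (continuousOn_const.mul (hdc.norm.pow 2)))
        · intro y _
          rw [norm_mul, norm_I, mul_one]
          set t := ‖deriv g (x + y * I)‖
          have : ε / Real.pi / 2 + Real.pi / (2 * ε) * t ^ 2 - t = (Real.pi / (2 * ε)) * (t - ε / Real.pi) ^ 2 := by
            field_simp; ring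
          have h2 : 0 ≤ (Real.pi / (2 * ε)) * (t - ε / Real.pi) ^ 2 := by positivity
          linarith
    _ = (b - a) * (ε / Real.pi / 2) + Real.pi / (2 * ε) * ∫ y in a..b, ‖deriv g (x + y * I)‖ ^ 2 := by
        rw [intervalIntegral.integral_add, intervalIntegral.integral_const, intervalIntegral.integral_const_mul]
        · simp
        · exact intervalIntegrable_const
        · exact ContinuousOn.intervalIntegrable (by
            rw [uIcc_of_le hab]
            exact (continuousOn_const.mul (hdc.norm.pow 2)))
    _ ≤ Real.pi * (ε / Real.pi / 2) + Real.pi / (2 * ε) * (ε ^ 2 / Real.pi) := by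
        gcongr
    _ = ε := by field_simp; ring

lemma oc_length {f : ℂ → ℂ} (hf : DifferentiableOn ℂ f (ball 0 1)) (hi : InjOn f (ball 0 1))
    (hb : Bornology.IsBounded (f '' ball 0 1)) {ζ : ℂ} (hζ : ‖ζ‖ = 1) {ε δ : ℝ} (hε : 0 < ε) (hδ : 0 < δ) :
    ∃ r, 0 < r ∧ r < δ ∧ ∀ s ∈ ball (0:ℂ) 1, ∀ t ∈ ball (0:ℂ) 1, dist s ζ = r → dist t ζ = r →
      dist (f s) (f t) ≤ ε := by
  have hζ0 : ζ ≠ 0 := by rintro rfl; simp at hζ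
  let Ω : Set ℂ := {w | |w.im| < Real.pi / 2 ∧ Real.exp w.re < 2 * Real.cos w.im}
  have hΩo : IsOpen Ω := by
    have h1 : IsOpen {w : ℂ | |w.im| < Real.pi / 2} := isOpen_lt (by fun_prop) (by fun_prop)
    have h2 : IsOpen {w : ℂ | Real.exp w.re < 2 * Real.cos w.im} := isOpen_lt (by fun_prop) (by fun_prop)
    exact h1.inter h2
  let u : ℂ → ℂ := fun w => ζ * (1 - exp w)
  have hmaps : MapsTo u Ω (ball 0 1) := by
    intro w hw
    rw [mem_ball_zero_iff, norm_mul, hζ, one_mul]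
    exact (oc_norm_one_sub_exp w).2 hw.2
  have hui : InjOn u Ω := by
    intro w hw z hz h
    have h1 : exp w = exp z := by
      have := mul_left_cancel₀ hζ0 h
      linear_combination -this
    have hw1 := abs_lt.1 hw.1
    have hz1 := abs_lt.1 hz.1
    exact exp_inj_of_neg_pi_lt_of_le_pi (by linarith) (by linarith [Real.pi_pos]) (by linarith) (by linarith [Real.pi_pos]) h1
  let g := f ∘ u
  have hgd : DifferentiableOn ℂ g Ω := hf.comp (by fun_prop) hmaps
  have hgi : InjOn g Ω := hi.comp hui hmaps
  have hgb : Bornology.IsBounded (g '' Ω) := hb.subset (by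
    rw [image_comp]; exact image_mono hmaps.image_subset)
  obtain ⟨x, hx, hxl⟩ := oc_exists_small (oc_area hΩo hgd hgi hgb) (Real.log δ) (η := ε ^ 2 / Real.pi) (by have := Real.pi_pos; positivity)
  refine ⟨Real.exp x, Real.exp_pos x, (Real.lt_log_iff_exp_lt hδ).1 hx, ?_⟩
  have key : ∀ s ∈ ball (0:ℂ) 1, dist s ζ = Real.exp x → ∃ y : ℝ, (x + y * I : ℂ) ∈ Ω ∧ u (x + y * I) = s := by
    intro s hs hd
    have hn : ‖1 - s / ζ‖ = Real.exp x := by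
      have : 1 - s / ζ = (ζ - s) / ζ := by field_simp
      rw [this, norm_div, hζ, div_one, ← hd, dist_comm, dist_eq]
    have hne : 1 - s / ζ ≠ 0 := by
      rw [← norm_pos_iff, hn]; exact Real.exp_pos x
    have hlog : (x + arg (1 - s / ζ) * I : ℂ) = log (1 - s / ζ) := by
      rw [log, hn, Real.log_exp]
    have hu : u (x + arg (1 - s / ζ) * I) = s := by
      simp only [u]
      rw [hlog, exp_log hne]
      field_simp; ring
    refine ⟨arg (1 - s / ζ), ⟨?_, ?_⟩, hu⟩
    · simp only [add_im, ofReal_im, mul_im, ofReal_re, I_re, I_im, mul_zero, mul_one, zero_add, add_zero]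
      rw [abs_arg_lt_pi_div_two_iff]
      left
      have h1 : ‖s / ζ‖ < 1 := by
        rw [norm_div, hζ, div_one]; simpa using hs
      have h2 := re_le_norm (s / ζ)
      simp only [sub_re, one_re]
      linarith
    · rw [← oc_norm_one_sub_exp]
      have h1 : ‖u (x + arg (1 - s / ζ) * I)‖ < 1 := by rw [hu]; simpa using hs
      simpa [u, norm_mul, hζ] using h1
  have main : ∀ a b : ℝ, a ≤ b → (x + a * I : ℂ) ∈ Ω → (x + b * I : ℂ) ∈ Ω → ‖g (x + b * I) - g (x + a * I)‖ ≤ ε := by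
    intro a b hab ha hb
    have hΩ' : ∀ y : ℝ, (x + y * I : ℂ) ∈ Ω ↔ |y| < Real.pi / 2 ∧ Real.exp x < 2 * Real.cos y := by
      intro y
      simp [Ω]
    rw [hΩ'] at ha hb
    have ha1 := abs_lt.1 ha.1
    have hb1 := abs_lt.1 hb.1
    refine oc_seg_bound hΩo hgd hε hab (by linarith) ?_ hxl
    intro y hy
    rw [hΩ']
    refine ⟨abs_lt.2 ⟨by linarith [hy.1], by linarith [hy.2]⟩, ?_⟩
    rcases le_total 0 y with h | h
    · have := Real.cos_le_cos_of_nonneg_of_le_pi h (by linarith) hy.2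
      linarith [hb.2]
    · have := Real.cos_le_cos_of_nonneg_of_le_pi (x := -y) (y := -a) (by linarith) (by linarith) (by linarith [hy.1])
      rw [Real.cos_neg, Real.cos_neg] at this
      linarith [ha.2]
  intro s hs t ht hds hdt
  obtain ⟨a, ha, rfl⟩ := key s hs hds
  obtain ⟨b, hb, rfl⟩ := key t ht hdt
  rcases le_total a b with h | h
  · rw [dist_comm, dist_eq]; exact main a b h ha hb
  · rw [dist_eq]; exact main b a h hb ha

lemma oc_arc_const {F : ℂ → ℂ} (hF : ContinuousOn F (closedBall 0 1)) (hd : DifferentiableOn ℂ F (ball 0 1))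
    {ζ a : ℂ} (hζ : ‖ζ‖ = 1) {r : ℝ} (hr : 0 < r) (h : ∀ z : ℂ, ‖z‖ = 1 → dist z ζ < r → F z = a) : F 0 = a := by
  obtain ⟨n, hn⟩ := exists_nat_gt (2 * Real.pi / r)
  have hpi := Real.pi_pos
  have hζ0 : ζ ≠ 0 := by rintro rfl; simp at hζ
  have hn0 : (0:ℝ) < n := lt_trans (by positivity) hn
  let ω : ℂ := exp ((2 * Real.pi / n : ℝ) * I)
  have hω : ∀ k : ℕ, ‖ω ^ k‖ = 1 := by
    intro k
    rw [norm_pow, norm_exp_ofReal_mul_I, one_pow]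
  let P : ℂ → ℂ := fun z => ∏ k ∈ Finset.range n, (F (ω ^ k * z) - a)
  have hfr : frontier (ball (0:ℂ) 1) = sphere 0 1 := frontier_ball _ one_ne_zero
  have hcl : closure (ball (0:ℂ) 1) = closedBall 0 1 := closure_ball _ one_ne_zero
  have hP : DiffContOnCl ℂ P (ball 0 1) := by
    constructor
    · refine DifferentiableOn.fun_finsetProd fun k _ => ?_
      refine DifferentiableOn.sub_const ?_ _
      refine hd.comp (by fun_prop) fun z hz => ?_
      rw [mem_ball_zero_iff, norm_mul, hω, one_mul]
      simpa using hz
    · rw [hcl]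
      refine continuousOn_finsetProd _ fun k _ => ?_
      refine ContinuousOn.sub ?_ continuousOn_const
      refine hF.comp (by fun_prop) fun z hz => ?_
      rw [mem_closedBall_zero_iff, norm_mul, hω, one_mul]
      simpa using hz
  have hP0 : ∀ z ∈ frontier (ball (0:ℂ) 1), ‖P z‖ ≤ 0 := by
    intro z hz
    rw [hfr, mem_sphere_zero_iff_norm] at hz
    have hz0 : z ≠ 0 := by rintro rfl; simp at hz
    obtain ⟨θ, h0, h1, hθ⟩ : ∃ θ : ℝ, 0 ≤ θ ∧ θ < 2 * Real.pi ∧ z * exp (θ * I) = ζ := by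
      have hn1 : ‖ζ / z‖ = 1 := by rw [norm_div, hζ, hz, div_one]
      have he : exp (arg (ζ / z) * I) = ζ / z := by
        have := norm_mul_exp_arg_mul_I (ζ / z)
        rwa [hn1, ofReal_one, one_mul] at this
      have hm := neg_pi_lt_arg (ζ / z)
      have hM := arg_le_pi (ζ / z)
      rcases le_or_gt 0 (arg (ζ / z)) with h | h
      · exact ⟨arg (ζ / z), h, by linarith, by rw [he]; field_simp⟩
      · refine ⟨arg (ζ / z) + 2 * Real.pi, by linarith, by linarith, ?_⟩
        push_cast
        rw [add_mul, exp_add, exp_two_pi_mul_I, mul_one, he]; field_simp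
    let k := ⌊n * θ / (2 * Real.pi)⌋₊
    have hk1 : (k : ℝ) ≤ n * θ / (2 * Real.pi) := Nat.floor_le (by positivity)
    have hk2 : n * θ / (2 * Real.pi) < k + 1 := Nat.lt_floor_add_one _
    have hkn : k < n := by
      have : n * θ / (2 * Real.pi) < n := by
        rw [div_lt_iff₀ (by positivity)]
        nlinarith
      exact_mod_cast lt_of_le_of_lt hk1 this
    have hdist : dist (ω ^ k * z) ζ < r := by
      have e1 : ω ^ k = exp (((2 * Real.pi * k / n - θ : ℝ) : ℂ) * I) * exp (θ * I) := by
        rw [← exp_add, ← exp_nat_mul]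
        congr 1
        push_cast
        ring
      have e2 : ω ^ k * z - ζ = ζ * (exp (I * ((2 * Real.pi * k / n - θ : ℝ) : ℂ)) - 1) := by
        rw [e1, ← hθ, mul_comm I]; ring
      rw [dist_eq, e2, norm_mul, hζ, one_mul]
      refine lt_of_le_of_lt (Real.norm_exp_I_mul_ofReal_sub_one_le) ?_
      have : |2 * Real.pi * k / n - θ| ≤ 2 * Real.pi / n := by
        rw [le_div_iff₀ (by positivity)] at hk1
        rw [div_lt_iff₀ (by positivity)] at hk2
        rw [abs_le]
        constructor
        · have : θ ≤ 2 * Real.pi * k / n + 2 * Real.pi / n := by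
            rw [← add_div, le_div_iff₀ hn0]; nlinarith
          linarith
        · have : 2 * Real.pi * k / n ≤ θ := by
            rw [div_le_iff₀ hn0]; nlinarith
          have : 0 ≤ 2 * Real.pi / n := by positivity
          linarith
      refine lt_of_le_of_lt this ?_
      rw [div_lt_iff₀ hr] at hn
      rw [div_lt_iff₀ hn0]
      linarith
    have : P z = 0 := by
      refine Finset.prod_eq_zero (Finset.mem_range.2 hkn) ?_
      rw [h _ (by rw [norm_mul, hω, one_mul, hz]) hdist, sub_self]
    rw [this, norm_zero]
  have := Complex.norm_le_of_forall_mem_frontier_norm_le isBounded_ball hP hP0 (subset_closure (mem_ball_self one_pos))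
  have h2 : P 0 = 0 := by simpa using this
  obtain ⟨k, _, hk⟩ := Finset.prod_eq_zero_iff.1 h2
  simpa [sub_eq_zero] using hk

lemma oc_circle_exp {u v : ℂ} (hu : ‖u‖ = 1) (hv : ‖v‖ = 1) : u * exp (arg (v / u) * I) = v := by
  have hu0 : u ≠ 0 := by rintro rfl; simp at hu
  have hn1 : ‖v / u‖ = 1 := by rw [norm_div, hu, hv, div_one]
  have := norm_mul_exp_arg_mul_I (v / u)
  rw [hn1, ofReal_one, one_mul] at this
  rw [this]; field_simp

/-- the point `u * exp (i θ)` on the unit circle -/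
noncomputable def ocPt (u : sphere (0:ℂ) 1) (θ : ℝ) : sphere (0:ℂ) 1 :=
  ⟨u * exp (θ * I), by
    have := u.2
    rw [mem_sphere_zero_iff_norm] at this ⊢
    rw [norm_mul, this, norm_exp_ofReal_mul_I, one_mul]⟩

lemma ocPt_continuous (u : sphere (0:ℂ) 1) : Continuous (ocPt u) := by
  unfold ocPt
  fun_prop

lemma oc_arc {C : Set ℂ} (γ : sphere (0:ℂ) 1 ≃ₜ C) {ε : ℝ} (hε : 0 < ε) :
    ∃ δ > 0, ∀ E ⊆ C, E.Nonempty → (∀ x ∈ E, ∀ y ∈ E, dist x y ≤ δ) →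
      ∃ T, IsCompact T ∧ IsPreconnected T ∧ T ⊆ C ∧ E ⊆ T ∧ ∀ x ∈ T, ∀ y ∈ T, dist x y ≤ ε := by
  have : CompactSpace C := γ.compactSpace
  obtain ⟨η, hη, h1⟩ := Metric.uniformContinuous_iff.1
    (CompactSpace.uniformContinuous_of_continuous γ.continuous) (ε / 2) (by positivity)
  have harg : ∀ᶠ z in 𝓝 (1:ℂ), |arg z| < η / 2 := by
    have h2 : ContinuousAt arg 1 := continuousAt_arg one_mem_slitPlane
    have h3 := h2.abs
    have : |arg 1| < η / 2 := by simp [hη]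
    exact h3.eventually (gt_mem_nhds this)
  obtain ⟨δ', hδ', h2⟩ := Metric.eventually_nhds_iff.1 harg
  obtain ⟨δ, hδ, h3⟩ := Metric.uniformContinuous_iff.1
    (CompactSpace.uniformContinuous_of_continuous γ.symm.continuous) δ' hδ'
  refine ⟨δ / 2, by positivity, fun E hEC ⟨x₀, hx₀⟩ hE => ?_⟩
  set u := γ.symm ⟨x₀, hEC hx₀⟩ with hu
  have hun : ‖(u : ℂ)‖ = 1 := by simp
  have hu0 : (u : ℂ) ≠ 0 := by intro h; simp [h] at hun
  let q : ℝ → ℂ := fun θ => γ (ocPt u θ)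
  have hq : Continuous q := continuous_subtype_val.comp (γ.continuous.comp (ocPt_continuous u))
  have hqd : ∀ θ ∈ Icc (-(η/2)) (η/2), dist (q θ) (γ u) < ε / 2 := by
    intro θ hθ
    refine h1 ?_
    rw [Subtype.dist_eq, dist_eq]
    have : ((ocPt u θ : ℂ) - u) = u * (exp (I * θ) - 1) := by
      simp only [ocPt]; rw [mul_comm I]; ring
    rw [this, norm_mul, hun, one_mul]
    refine lt_of_le_of_lt (Real.norm_exp_I_mul_ofReal_sub_one_le) ?_
    have := abs_le.2 hθ
    rw [Real.norm_eq_abs]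
    linarith
  refine ⟨q '' Icc (-(η/2)) (η/2), isCompact_Icc.image hq, isPreconnected_Icc.image _ hq.continuousOn, ?_, ?_, ?_⟩
  · rintro _ ⟨θ, _, rfl⟩; exact (γ (ocPt u θ)).2
  · intro y hy
    set v := γ.symm ⟨y, hEC hy⟩ with hv
    have hvn : ‖(v : ℂ)‖ = 1 := by simp
    have hd : dist v u < δ' := h3 (by
      rw [Subtype.dist_eq]
      exact lt_of_le_of_lt (hE y hy x₀ hx₀) (by linarith))
    rw [Subtype.dist_eq, dist_eq] at hd
    have ha := h2 (y := (v / u : ℂ)) (by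
      rw [dist_eq]
      have : (v / u - 1 : ℂ) = (v - u) / u := by field_simp
      rw [this, norm_div, hun, div_one]; exact hd)
    refine ⟨arg (v / u : ℂ), abs_le.1 ha.le, ?_⟩
    have : ocPt u (arg (v / u : ℂ)) = v := Subtype.ext (oc_circle_exp hun hvn)
    simp only [q]
    rw [this, hv]; simp
  · rintro _ ⟨θ, hθ, rfl⟩ _ ⟨θ', hθ', rfl⟩
    have := dist_triangle_right (q θ) (q θ') (γ u)
    linarith [hqd θ hθ, hqd θ' hθ']

lemma oc_punctured {C : Set ℂ} (γ : sphere (0:ℂ) 1 ≃ₜ C) {a : ℂ} (ha : a ∈ C) : IsPreconnected (C \ {a}) := by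
  set u := γ.symm ⟨a, ha⟩ with hu
  have hun : ‖(u : ℂ)‖ = 1 := by simp
  have hu0 : (u : ℂ) ≠ 0 := by intro h; simp [h] at hun
  let q : ℝ → ℂ := fun θ => γ (ocPt u θ)
  have hq : Continuous q := continuous_subtype_val.comp (γ.continuous.comp (ocPt_continuous u))
  have hpi := Real.pi_pos
  have : C \ {a} = q '' Ioo 0 (2 * Real.pi) := by
    ext y
    constructor
    · rintro ⟨hy, hya⟩
      set v := γ.symm ⟨y, hy⟩ with hv
      have hvn : ‖(v : ℂ)‖ = 1 := by simp
      have he := oc_circle_exp (u := -u) (v := v) (by rw [norm_neg, hun]) hvn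
      have hpt : ocPt u (arg (v / (-u) : ℂ) + Real.pi) = v := by
        apply Subtype.ext
        simp only [ocPt]
        push_cast
        rw [add_mul, exp_add, exp_pi_mul_I]; linear_combination he
      have hqy : q (arg (v / (-u) : ℂ) + Real.pi) = y := by
        simp only [q]; rw [hpt, hv]; simp
      refine ⟨_, ⟨by linarith [neg_pi_lt_arg (v / (-u) : ℂ)], ?_⟩, hqy⟩
      refine lt_of_le_of_ne (by linarith [arg_le_pi (v / (-u) : ℂ)]) ?_
      intro h
      apply hya
      rw [mem_singleton_iff, ← hqy, h]
      have : ocPt u (2 * Real.pi) = u := by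
        apply Subtype.ext
        simp [ocPt, exp_two_pi_mul_I]
      simp only [q]; rw [this, hu]; simp
    · rintro ⟨θ, hθ, rfl⟩
      refine ⟨(γ (ocPt u θ)).2, fun h => ?_⟩
      have h1 : γ (ocPt u θ) = γ u := by
        apply Subtype.ext
        rw [hu]; simpa [q] using h
      have h2 := congrArg Subtype.val (γ.injective h1)
      simp only [ocPt] at h2
      have h3 : exp (θ * I) = 1 := mul_left_cancel₀ hu0 (by rw [h2, mul_one])
      obtain ⟨n, hn⟩ := exp_eq_one_iff.1 h3
      have h4 : (θ : ℂ) = n * (2 * Real.pi) := by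
        apply mul_right_cancel₀ I_ne_zero
        rw [hn]; ring
      have h5 : θ = n * (2 * Real.pi) := by exact_mod_cast h4
      have hn0 : 0 < (n : ℝ) := by
        by_contra hc; push Not at hc
        nlinarith [hθ.1]
      have hn1 : (n : ℝ) < 1 := by
        by_contra hc; push Not at hc
        nlinarith [hθ.2]
      have : 0 < n := by exact_mod_cast hn0
      have : n < 1 := by exact_mod_cast hn1
      omega
  rw [this]
  exact isPreconnected_Ioo.image _ hq.continuousOn

lemma oc_cauchy {C G : Set ℂ} (γ : sphere (0:ℂ) 1 ≃ₜ C) (hC : IsCompact C) {z₀ : ℂ}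
    (hG : G = connectedComponentIn Cᶜ z₀) (hGb : Bornology.IsBounded G) (hGo : IsOpen G)
    {φ f : ℂ → ℂ} (hφ : ContinuousOn φ G) (hφm : MapsTo φ G (ball 0 1))
    (hf : DifferentiableOn ℂ f (ball 0 1)) (hfm : MapsTo f (ball 0 1) G)
    (h1 : ∀ s ∈ ball (0:ℂ) 1, φ (f s) = s) (h2 : ∀ w ∈ G, f (φ w) = w)
    {ζ : ℂ} (hζ : ‖ζ‖ = 1) {ε : ℝ} (hε : 0 < ε) :
    ∃ r > 0, ∀ s ∈ ball (0:ℂ) 1, ∀ t ∈ ball (0:ℂ) 1, dist s ζ < r → dist t ζ < r → dist (f s) (f t) ≤ ε := by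
  have h0 : (0:ℂ) ∈ ball (0:ℂ) 1 := mem_ball_self one_pos
  have hp0 : f 0 ∈ G := hfm h0
  obtain ⟨ρ₀, hρ₀, hball⟩ := Metric.nhds_basis_closedBall.mem_iff.1 (hGo.mem_nhds hp0)
  obtain ⟨ρ, hρ1, hρ⟩ : ∃ ρ < 1, ∀ w ∈ closedBall (f 0) ρ₀, ‖φ w‖ ≤ ρ := by
    obtain ⟨w, hw, hmax⟩ := (isCompact_closedBall (f 0) ρ₀).exists_isMaxOn
      ⟨f 0, mem_closedBall_self hρ₀.le⟩ ((hφ.mono hball).norm)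
    exact ⟨‖φ w‖, by simpa using hφm (hball hw), fun y hy => hmax hy⟩
  have hρ0 : 0 ≤ ρ := (norm_nonneg _).trans (hρ (f 0) (mem_closedBall_self hρ₀.le))
  set ε₁ := min ε ρ₀ / 4 with hε₁
  have hε₁0 : 0 < ε₁ := by have := lt_min hε hρ₀; positivity
  have hε₁a : 4 * ε₁ ≤ ε := by rw [hε₁]; linarith [min_le_left ε ρ₀]
  have hε₁b : 4 * ε₁ ≤ ρ₀ := by rw [hε₁]; linarith [min_le_right ε ρ₀]
  obtain ⟨δ₁, hδ₁, harc⟩ := oc_arc γ hε₁0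
  set ε₂ := min ε₁ δ₁ with hε₂
  have hε₂0 : 0 < ε₂ := lt_min hε₁0 hδ₁
  have hfi : InjOn f (ball 0 1) := fun s hs t ht h => by rw [← h1 s hs, h, h1 t ht]
  obtain ⟨r, hr0, hr, hlen⟩ := oc_length hf hfi (hGb.subset hfm.image_subset) hζ hε₂0 (sub_pos.2 hρ1)
  set X := f '' {s | s ∈ ball (0:ℂ) 1 ∧ dist s ζ = r} with hX
  have hXX : ∀ x ∈ X, ∀ y ∈ X, dist x y ≤ ε₂ := by
    rintro _ ⟨s, ⟨hs, hs'⟩, rfl⟩ _ ⟨t, ⟨ht, ht'⟩, rfl⟩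
    exact hlen s hs t ht hs' ht'
  have hr1 : r < 1 := by linarith
  set s₀ : ℂ := (1 - r : ℝ) * ζ with hs₀
  have hs₀b : s₀ ∈ ball (0:ℂ) 1 := by
    rw [mem_ball_zero_iff, hs₀, norm_mul, hζ, norm_real, Real.norm_eq_abs, abs_of_pos (by linarith)]
    linarith
  have hs₀d : dist s₀ ζ = r := by
    have : s₀ - ζ = (-r : ℝ) * ζ := by rw [hs₀]; push_cast; ring
    rw [dist_eq, this, norm_mul, hζ, norm_real, Real.norm_eq_abs, abs_neg, abs_of_pos hr0, mul_one]
  have hcX : f s₀ ∈ X := ⟨s₀, ⟨hs₀b, hs₀d⟩, rfl⟩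
  set A := closure X with hA
  have hAA : ∀ x ∈ A, ∀ y ∈ A, dist x y ≤ ε₂ := by
    have step : ∀ x ∈ X, ∀ y ∈ A, dist y x ≤ ε₂ := by
      intro x hx y hy
      exact closure_minimal (fun z hz => mem_closedBall.2 (hXX z hz x hx)) isClosed_closedBall hy
    intro x hx y hy
    exact closure_minimal (fun z hz => by
      rw [mem_closedBall, dist_comm]; exact step z hz y hy) (isClosed_closedBall (x := y) (ε := ε₂)) hx
  have hcA : f s₀ ∈ A := subset_closure hcX
  have hAc : IsCompact A := by
    refine (isCompact_closedBall (f s₀) ε₂).of_isClosed_subset isClosed_closure fun x hx => ?_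
    exact hAA x hx _ hcA
  obtain ⟨T, hTc, hTp, hTC, hAT, hTb⟩ : ∃ T, IsCompact T ∧ IsPreconnected T ∧ T ⊆ C ∧ A ∩ C ⊆ T ∧
      T ⊆ closedBall (f s₀) (2 * ε₁) := by
    rcases (A ∩ C).eq_empty_or_nonempty with h | h
    · exact ⟨∅, isCompact_empty, isPreconnected_empty, empty_subset _, h.subset, empty_subset _⟩
    · obtain ⟨T, hTc, hTp, hTC, hAT, hTT⟩ := harc (A ∩ C) inter_subset_right h
        (fun x hx y hy => (hAA x hx.1 y hy.1).trans (min_le_right _ _))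
      refine ⟨T, hTc, hTp, hTC, hAT, fun x hx => ?_⟩
      obtain ⟨e, he⟩ := h
      have t1 := hTT x hx e (hAT he)
      have t2 := (hAA e he.1 _ hcA).trans (min_le_left _ _)
      have := dist_triangle x e (f s₀)
      rw [mem_closedBall]; linarith
  have hsub : A ∪ T ⊆ closedBall (f s₀) (2 * ε₁) := by
    refine union_subset (fun x hx => ?_) hTb
    have := (hAA x hx _ hcA).trans (min_le_left _ _)
    rw [mem_closedBall]; linarith
  have hint : (A ∪ T) ∩ C = T := by
    ext x
    constructor
    · rintro ⟨h | h, hx⟩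
      exacts [hAT ⟨h, hx⟩, h]
    · intro h; exact ⟨Or.inr h, hTC h⟩
  have hfar : f 0 ∈ (closedBall (f s₀) (2 * ε₁))ᶜ := by
    intro h
    rw [mem_closedBall] at h
    have h3 := hρ (f s₀) (by rw [mem_closedBall, dist_comm]; linarith)
    rw [h1 s₀ hs₀b, hs₀, norm_mul, hζ, norm_real, Real.norm_eq_abs, abs_of_pos (by linarith)] at h3
    linarith
  have hGC : G ⊆ Cᶜ := by rw [hG]; exact connectedComponentIn_subset _ _
  have hGp : IsPreconnected G := by rw [hG]; exact isPreconnected_connectedComponentIn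
  have hGeq : ∀ w ∈ G, connectedComponentIn Cᶜ w = G := by
    intro w hw
    rw [hG] at hw ⊢
    exact (connectedComponentIn_eq hw).symm
  have claim : ∀ s ∈ ball (0:ℂ) 1, dist s ζ < r → f s ∈ closedBall (f s₀) (2 * ε₁) := by
    intro s hs hsr
    by_contra hcon
    have hJ := oc_janiszewski (hAc.union hTc) hC (by rw [hint]; exact hTp)
      (oc_preconn_compl_closedBall (f s₀) (2 * ε₁)) (compl_subset_compl.2 hsub) hfar hcon
      hGp hGC hp0 (hfm hs)
    set K := connectedComponentIn ((A ∪ T) ∪ C)ᶜ (f 0) with hK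
    have hKsub : K ⊆ ((A ∪ T) ∪ C)ᶜ := connectedComponentIn_subset _ _
    have hKp : IsPreconnected K := isPreconnected_connectedComponentIn
    have hp0K : f 0 ∈ K := mem_connectedComponentIn (by
      rintro (h | h)
      · exact hfar (hsub h)
      · exact hGC hp0 h)
    have hKG : K ⊆ G := by
      rw [← hGeq _ hp0]
      exact hKp.subset_connectedComponentIn hp0K (hKsub.trans (compl_subset_compl.2 subset_union_right))
    have hcont : ContinuousOn (fun w => dist (φ w) ζ) K := ((continuous_id.dist continuous_const).comp_continuousOn (hφ.mono hKG) :)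
    have hivt := hKp.intermediate_value hJ hp0K hcont
    have hmem : r ∈ Icc (dist (φ (f s)) ζ) (dist (φ (f 0)) ζ) := by
      rw [h1 s hs, h1 0 h0]
      refine ⟨hsr.le, ?_⟩
      rw [dist_zero_left, hζ]; exact hr1.le
    obtain ⟨w, hwK, hw⟩ := hivt hmem
    apply hKsub hwK
    left; left
    exact subset_closure ⟨φ w, ⟨hφm (hKG hwK), hw⟩, h2 w (hKG hwK)⟩
  refine ⟨r, hr0, fun s hs t ht hsr htr => ?_⟩
  have c1 := mem_closedBall.1 (claim s hs hsr)
  have c2 := mem_closedBall.1 (claim t ht htr)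
  have := dist_triangle_right (f s) (f t) (f s₀)
  linarith

lemma oc_side {F : ℂ → ℂ} (hF : ContinuousOn F (closedBall 0 1)) (hd : DifferentiableOn ℂ F (ball 0 1))
    {a ζ₁ ζ₂ : ℂ} (ha : F 0 ≠ a) (hζ₁ : ‖ζ₁‖ = 1) (hζ₂ : ‖ζ₂‖ = 1) (hne : ζ₁ ≠ ζ₂) :
    ∃ ζ : ℂ, ‖ζ‖ = 1 ∧ 0 < ((ζ - ζ₁) * (starRingEnd ℂ) (ζ₂ - ζ₁)).im ∧ F ζ ≠ a := by
  by_contra hcon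
  push Not at hcon
  set d := ζ₂ - ζ₁ with hd'
  have hd0 : 0 < ‖d‖ := norm_pos_iff.2 (sub_ne_zero.2 hne.symm)
  set ζ : ℂ := I * d / ‖d‖ with hζ
  have hd0' : (‖d‖ : ℂ) ≠ 0 := by exact_mod_cast hd0.ne'
  have hζn : ‖ζ‖ = 1 := by
    rw [hζ, norm_div, norm_mul, norm_I, one_mul, norm_real, norm_norm, div_self hd0.ne']
  have hpos : 0 < ((ζ - ζ₁) * (starRingEnd ℂ) d).im := by
    have e1 : ζ * (starRingEnd ℂ) d = I * ‖d‖ := by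
      rw [hζ, div_mul_eq_mul_div, mul_assoc, mul_conj, normSq_eq_norm_sq]
      push_cast
      field_simp
    rw [sub_mul, e1, sub_im]
    have e2 : (I * (‖d‖ : ℂ)).im = ‖d‖ := by simp
    rw [e2]
    set m := ζ₁ * (starRingEnd ℂ) d with hm
    have hmn : ‖m‖ = ‖d‖ := by rw [hm, norm_mul, hζ₁, one_mul, norm_conj]
    have hre : m.re ≠ 0 := by
      have n1 : normSq ζ₁ = 1 := by rw [normSq_eq_norm_sq, hζ₁]; norm_num
      have n2 : normSq ζ₂ = 1 := by rw [normSq_eq_norm_sq, hζ₂]; norm_num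
      have n3 : 0 < normSq d := by rw [normSq_eq_norm_sq]; positivity
      rw [normSq_apply] at n1 n2 n3
      rw [hm]
      simp only [mul_re, conj_re, conj_im, hd', sub_re, sub_im] at n3 ⊢
      nlinarith
    have hlt : |m.im| < ‖m‖ := abs_im_lt_norm.2 hre
    have := le_abs_self m.im
    linarith
  have hopen : IsOpen {z : ℂ | 0 < ((z - ζ₁) * (starRingEnd ℂ) d).im} := by
    refine isOpen_lt continuous_const ?_
    fun_prop
  obtain ⟨r, hr, hb⟩ := Metric.isOpen_iff.1 hopen ζ hpos
  exact ha (oc_arc_const hF hd hζn hr fun z hz hzr => hcon z hz (hb hzr))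

lemma oc_inj {C G : Set ℂ} (γ : sphere (0:ℂ) 1 ≃ₜ C) (hC : IsCompact C) {z₀ : ℂ}
    (hG : G = connectedComponentIn Cᶜ z₀)
    {φ F : ℂ → ℂ} (hφ : ContinuousOn φ G) (hφm : MapsTo φ G (ball 0 1))
    (hFc : ContinuousOn F (closedBall 0 1))
    (hF : DifferentiableOn ℂ F (ball 0 1)) (hFm : MapsTo F (ball 0 1) G)
    (hFs : ∀ z : ℂ, ‖z‖ = 1 → F z ∈ C)
    (h1 : ∀ s ∈ ball (0:ℂ) 1, φ (F s) = s) (h2 : ∀ w ∈ G, F (φ w) = w)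
    {ζ₁ ζ₂ : ℂ} (hζ₁ : ‖ζ₁‖ = 1) (hζ₂ : ‖ζ₂‖ = 1) (heq : F ζ₁ = F ζ₂) : ζ₁ = ζ₂ := by
  by_contra hne
  have hGC : G ⊆ Cᶜ := by rw [hG]; exact connectedComponentIn_subset _ _
  have hGp : IsPreconnected G := by rw [hG]; exact isPreconnected_connectedComponentIn
  have hGeq : ∀ w ∈ G, connectedComponentIn Cᶜ w = G := by
    intro w hw
    rw [hG] at hw ⊢
    exact (connectedComponentIn_eq hw).symm
  set a := F ζ₁ with ha
  have haC : a ∈ C := hFs _ hζ₁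
  have h0a : F 0 ≠ a := fun h => hGC (hFm (mem_ball_self one_pos)) (h ▸ haC)
  have hb1 : ζ₁ ∈ closedBall (0:ℂ) 1 := by simp [hζ₁]
  have hb2 : ζ₂ ∈ closedBall (0:ℂ) 1 := by simp [hζ₂]
  set L := segment ℝ ζ₁ ζ₂ with hL
  have hLb : L ⊆ closedBall (0:ℂ) 1 := (convex_closedBall 0 1).segment_subset hb1 hb2
  have hLc : IsCompact L := by
    rw [hL, segment_eq_image_lineMap]
    exact isCompact_Icc.image AffineMap.lineMap_continuous
  have hLin : ∀ s ∈ L, s = ζ₁ ∨ s = ζ₂ ∨ s ∈ ball (0:ℂ) 1 := by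
    intro s hs
    rw [hL, ← insert_endpoints_openSegment] at hs
    rcases hs with h | h | h
    · exact Or.inl h
    · exact Or.inr (Or.inl h)
    · right; right
      have := (strictConvex_closedBall ℝ (0:ℂ) 1).openSegment_subset hb1 hb2 hne h
      rwa [interior_closedBall _ one_ne_zero] at this
  set J := F '' L with hJ
  have hJc : IsCompact J := hLc.image_of_continuousOn (hFc.mono hLb)
  have haJ : a ∈ J := ⟨ζ₁, left_mem_segment _ _ _, rfl⟩
  have hJC : J ∩ C = {a} := by
    ext x
    constructor
    · rintro ⟨⟨s, hs, rfl⟩, hx⟩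
      rcases hLin s hs with rfl | rfl | h
      · exact rfl
      · exact heq.symm
      · exact absurd hx (hGC (hFm h))
    · rintro rfl; exact ⟨haJ, haC⟩
  have hCa : C \ {a} ⊆ Jᶜ := by
    rintro x ⟨hx, hxa⟩ hxJ
    exact hxa (hJC ▸ (⟨hxJ, hx⟩ : x ∈ J ∩ C))
  obtain ⟨ξ₁, hξ₁, hp1, hξ₁a⟩ := oc_side hFc hF h0a hζ₁ hζ₂ hne
  obtain ⟨ξ₂, hξ₂, hp2, hξ₂a⟩ := oc_side hFc hF h0a hζ₂ hζ₁ (Ne.symm hne)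
  let ℓ : ℂ → ℝ := fun s => ((s - ζ₁) * (starRingEnd ℂ) (ζ₂ - ζ₁)).im
  have hℓc : Continuous ℓ := by fun_prop
  have hℓ2 : ℓ ξ₂ < 0 := by
    have : ((ξ₂ - ζ₂) * (starRingEnd ℂ) (ζ₁ - ζ₂)).im = - ℓ ξ₂ := by
      simp only [ℓ, mul_im, conj_re, conj_im, sub_re, sub_im]; ring
    rw [this] at hp2
    linarith
  set V := connectedComponentIn Jᶜ (F ξ₁) with hV
  have hVo : IsOpen V := hJc.isClosed.isOpen_compl.connectedComponentIn
  have hξ₁C : F ξ₁ ∈ C \ {a} := ⟨hFs _ hξ₁, hξ₁a⟩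
  have hξ₂C : F ξ₂ ∈ C \ {a} := ⟨hFs _ hξ₂, hξ₂a⟩
  have hCV : C \ {a} ⊆ V := (oc_punctured γ haC).subset_connectedComponentIn hξ₁C hCa
  have near : ∀ ξ : ℂ, ‖ξ‖ = 1 → F ξ ∈ V → ∀ U : Set ℂ, IsOpen U → ξ ∈ U →
      ∃ s ∈ ball (0:ℂ) 1, s ∈ U ∧ F s ∈ V := by
    intro ξ hξ hξV U hU hξU
    have hcl : ξ ∈ closure (ball (0:ℂ) 1) := by
      rw [closure_ball _ one_ne_zero]; simp [hξ]
    have hne : (𝓝[ball (0:ℂ) 1] ξ).NeBot := mem_closure_iff_nhdsWithin_neBot.1 hcl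
    have hc : Tendsto F (𝓝[ball (0:ℂ) 1] ξ) (𝓝 (F ξ)) :=
      (hFc ξ (by simp [hξ])).mono_left (nhdsWithin_mono _ ball_subset_closedBall)
    have e2 : ∀ᶠ x in 𝓝[ball (0:ℂ) 1] ξ, x ∈ U := mem_nhdsWithin_of_mem_nhds (hU.mem_nhds hξU)
    have e3 : ∀ᶠ x in 𝓝[ball (0:ℂ) 1] ξ, x ∈ ball (0:ℂ) 1 := self_mem_nhdsWithin
    obtain ⟨s, hs⟩ := ((hc.eventually (hVo.mem_nhds hξV)).and (e2.and e3)).exists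
    exact ⟨s, hs.2.2, hs.2.1, hs.1⟩
  obtain ⟨s₁, hs₁, hs₁ℓ, hs₁V⟩ := near ξ₁ hξ₁ (hCV hξ₁C) {s | 0 < ℓ s} (isOpen_lt continuous_const hℓc) hp1
  obtain ⟨s₂, hs₂, hs₂ℓ, hs₂V⟩ := near ξ₂ hξ₂ (hCV hξ₂C) {s | ℓ s < 0} (isOpen_lt hℓc continuous_const) hℓ2
  have hjan := oc_janiszewski hJc hC (by rw [hJC]; exact isPreconnected_singleton)
    (isPreconnected_connectedComponentIn : IsPreconnected V) (connectedComponentIn_subset _ _) hs₁V hs₂V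
    hGp hGC (hFm hs₁) (hFm hs₂)
  set K := connectedComponentIn (J ∪ C)ᶜ (F s₁) with hK
  have hKsub : K ⊆ (J ∪ C)ᶜ := connectedComponentIn_subset _ _
  have hKp : IsPreconnected K := isPreconnected_connectedComponentIn
  have hsK : F s₁ ∈ K := mem_connectedComponentIn (by
    rintro (h | h)
    · exact connectedComponentIn_subset _ _ hs₁V h
    · exact hGC (hFm hs₁) h)
  have hKG : K ⊆ G := by
    rw [← hGeq _ (hFm hs₁)]
    exact hKp.subset_connectedComponentIn hsK (hKsub.trans (compl_subset_compl.2 subset_union_right))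
  have hcont : ContinuousOn (fun w => ℓ (φ w)) K := hℓc.comp_continuousOn (hφ.mono hKG)
  obtain ⟨w, hwK, hw⟩ := hKp.intermediate_value hjan hsK hcont (show (0:ℝ) ∈ Icc _ _ by
    simp only [h1 s₁ hs₁, h1 s₂ hs₂]
    exact ⟨le_of_lt hs₂ℓ, le_of_lt hs₁ℓ⟩)
  apply hKsub hwK
  left
  refine ⟨φ w, ?_, h2 w (hKG hwK)⟩
  -- a point of the disc on the line is on the segment
  have hin := hφm (hKG hwK)
  simp only at hw
  generalize φ w = s at hw hin
  set d := ζ₂ - ζ₁ with hd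
  have hd0 : d ≠ 0 := sub_ne_zero.2 (Ne.symm hne)
  set τ : ℝ := ((s - ζ₁) / d).re with hτ
  have him : ((s - ζ₁) / d).im = 0 := by
    have hn : (normSq d : ℂ) ≠ 0 := by exact_mod_cast (normSq_pos.2 hd0).ne'
    have : (s - ζ₁) / d = ((s - ζ₁) * (starRingEnd ℂ) d) * ((normSq d)⁻¹ : ℝ) := by
      rw [div_eq_mul_inv, inv_def]; ring
    have hw' : ((s - ζ₁) * (starRingEnd ℂ) d).im = 0 := hw
    rw [this, mul_im, ofReal_im, ofReal_re, hw']; ring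
  have hs : s = ζ₁ + τ * d := by
    have : (s - ζ₁) / d = τ := by
      apply Complex.ext
      · simp [hτ]
      · simpa using him
    rw [← this]; field_simp; ring
  have hsn : normSq s < 1 := by
    rw [normSq_eq_norm_sq]
    have : ‖s‖ < 1 := by simpa using hin
    nlinarith [norm_nonneg s]
  have n1 : normSq ζ₁ = 1 := by rw [normSq_eq_norm_sq, hζ₁]; norm_num
  have n2 : normSq ζ₂ = 1 := by rw [normSq_eq_norm_sq, hζ₂]; norm_num
  have hkey : normSq s = 1 - τ * (1 - τ) * normSq d := by
    rw [hs]
    rw [normSq_apply] at n1 n2 ⊢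
    simp only [normSq_apply, add_re, add_im, re_ofReal_mul, im_ofReal_mul, hd, sub_re, sub_im]
    linear_combination (1 - τ) * n1 + τ * n2
  have hdp := normSq_pos.2 hd0
  have hττ : 0 < τ * (1 - τ) := by
    by_contra hc
    push Not at hc
    nlinarith
  have hτ0 : 0 ≤ τ := by by_contra hc; push Not at hc; nlinarith
  have hτ1 : τ ≤ 1 := by by_contra hc; push Not at hc; nlinarith
  rw [hL, segment_eq_image']
  exact ⟨τ, ⟨hτ0, hτ1⟩, by rw [hs]; simp [hd]⟩

end OC

open Set Filter Topology Metric Complex in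
/-- **Osgood–Carathéodory theorem.** A conformal (biholomorphic) map `φ` of a Jordan domain
`G` onto the open unit disc extends to a homeomorphism of `closure G` onto the closed unit
disc. -/
theorem stmt19 (G : Set ℂ) (hG : IsJordanDomain G)
    (φ : ℂ → ℂ) (hφd : DifferentiableOn ℂ φ G)
    (hφbij : Set.BijOn φ G (Metric.ball (0:ℂ) 1)) :
    ∃ h : ↥(closure G) ≃ₜ ↥(Metric.closedBall (0:ℂ) 1),
      ∀ z : ↥(closure G), (z : ℂ) ∈ G → (h z : ℂ) = φ z := by
  classical
  obtain ⟨C, ⟨γ⟩, hGb, z₀, hz₀, hGeq⟩ := hG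
  have hCc : IsCompact C := by
    have : CompactSpace C := γ.compactSpace
    exact isCompact_iff_compactSpace.2 this
  have hCo : IsOpen Cᶜ := hCc.isClosed.isOpen_compl
  have hGo : IsOpen G := by rw [hGeq]; exact hCo.connectedComponentIn
  have hGC : G ⊆ Cᶜ := by rw [hGeq]; exact connectedComponentIn_subset _ _
  obtain ⟨f, hf, hfm, h1, h2⟩ := oc_inverse hGo isOpen_ball hφd hφbij
  have hφc : ContinuousOn φ G := hφd.continuousOn
  have hφm : MapsTo φ G (ball 0 1) := hφbij.mapsTo
  have hcl : closure (ball (0:ℂ) 1) = closedBall 0 1 := closure_ball _ one_ne_zero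
  have hlim : ∀ x ∈ closedBall (0:ℂ) 1, ∃ y, Tendsto f (𝓝[ball (0:ℂ) 1] x) (𝓝 y) := by
    intro x hx
    by_cases hxb : x ∈ ball (0:ℂ) 1
    · exact ⟨f x, hf.continuousOn x hxb⟩
    have hxn : ‖x‖ = 1 := by
      rw [mem_ball_zero_iff, not_lt] at hxb
      rw [mem_closedBall_zero_iff] at hx
      exact le_antisymm hx hxb
    have hne : (𝓝[ball (0:ℂ) 1] x).NeBot := mem_closure_iff_nhdsWithin_neBot.1 (by rw [hcl]; exact hx)
    apply cauchy_map_iff_exists_tendsto.1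
    rw [Metric.cauchy_iff]
    refine ⟨hne.map f, fun ε hε => ?_⟩
    obtain ⟨r, hr, hrr⟩ := oc_cauchy γ hCc hGeq hGb hGo hφc hφm hf hfm h1 h2 hxn (half_pos hε)
    refine ⟨f '' (ball (0:ℂ) 1 ∩ ball x r), image_mem_map
      (inter_mem self_mem_nhdsWithin (mem_nhdsWithin_of_mem_nhds (ball_mem_nhds x hr))), ?_⟩
    rintro _ ⟨s, hs, rfl⟩ _ ⟨t, ht, rfl⟩
    have := hrr s hs.1 t ht.1 hs.2 ht.2
    linarith
  set F := extendFrom (ball (0:ℂ) 1) f with hF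
  have hFc : ContinuousOn F (closedBall 0 1) := continuousOn_extendFrom (by rw [hcl]) hlim
  have hFf : ∀ s ∈ ball (0:ℂ) 1, F s = f s := extendFrom_extends hf.continuousOn
  have hFd : DifferentiableOn ℂ F (ball 0 1) := hf.congr hFf
  have hFm : MapsTo F (ball 0 1) G := fun s hs => by rw [hFf s hs]; exact hfm hs
  have hF1 : ∀ s ∈ ball (0:ℂ) 1, φ (F s) = s := fun s hs => by rw [hFf s hs]; exact h1 s hs
  have hF2 : ∀ w ∈ G, F (φ w) = w := fun w hw => by rw [hFf _ (hφm hw)]; exact h2 w hw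
  have hFcl : MapsTo F (closedBall 0 1) (closure G) := by
    intro x hx
    have hne : (𝓝[ball (0:ℂ) 1] x).NeBot := mem_closure_iff_nhdsWithin_neBot.1 (by rw [hcl]; exact hx)
    refine mem_closure_of_tendsto (tendsto_extendFrom (hlim x hx)) ?_
    filter_upwards [self_mem_nhdsWithin] with s hs using hfm hs
  have hFnG : ∀ x : ℂ, ‖x‖ = 1 → F x ∉ G := by
    intro x hx hxG
    have hxc : x ∈ closedBall (0:ℂ) 1 := by simp [hx]
    have hne : (𝓝[ball (0:ℂ) 1] x).NeBot := mem_closure_iff_nhdsWithin_neBot.1 (by rw [hcl]; exact hxc)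
    have t1 : Tendsto f (𝓝[ball (0:ℂ) 1] x) (𝓝 (F x)) := tendsto_extendFrom (hlim x hxc)
    have t2 : Tendsto φ (𝓝 (F x)) (𝓝 (φ (F x))) := hφc.continuousAt (hGo.mem_nhds hxG)
    have t3 : Tendsto (fun s : ℂ => s) (𝓝[ball (0:ℂ) 1] x) (𝓝 (φ (F x))) := by
      refine (t2.comp t1).congr' ?_
      filter_upwards [self_mem_nhdsWithin] with s hs using h1 s hs
    have t4 : Tendsto (fun s : ℂ => s) (𝓝[ball (0:ℂ) 1] x) (𝓝 x) := tendsto_id.mono_left nhdsWithin_le_nhds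
    have e := tendsto_nhds_unique t3 t4
    have := hφm hxG
    rw [e, mem_ball_zero_iff, hx] at this
    exact lt_irrefl _ this
  have hFs : ∀ x : ℂ, ‖x‖ = 1 → F x ∈ C := by
    intro x hx
    by_contra hxC
    apply hFnG x hx
    have h3 : F x ∈ closure G := hFcl (by simp [hx])
    rw [hGeq] at h3 ⊢
    exact oc_mem_component hCo h3 hxC
  have hFi : InjOn F (closedBall 0 1) := by
    intro x hx y hy hxy
    have dich : ∀ x ∈ closedBall (0:ℂ) 1, x ∈ ball (0:ℂ) 1 ∨ ‖x‖ = 1 := by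
      intro x hx
      rw [mem_closedBall_zero_iff] at hx
      rw [mem_ball_zero_iff]
      exact lt_or_eq_of_le hx
    rcases dich x hx with h | h <;> rcases dich y hy with h' | h'
    · rw [← hF1 x h, hxy, hF1 y h']
    · exact absurd (hxy ▸ hFm h) (hFnG y h')
    · exact absurd (hxy.symm ▸ hFm h') (hFnG x h)
    · exact oc_inj γ hCc hGeq hφc hφm hFc hFd hFm hFs hF1 hF2 h h' hxy
  have hFsurj : SurjOn F (closedBall 0 1) (closure G) := by
    have : IsClosed (F '' closedBall 0 1) := ((isCompact_closedBall _ _).image_of_continuousOn hFc).isClosed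
    refine closure_minimal (fun w hw => ?_) this
    exact ⟨φ w, ball_subset_closedBall (hφm hw), hF2 w hw⟩
  let e : closedBall (0:ℂ) 1 ≃ closure G := BijOn.equiv F ⟨hFcl, hFi, hFsurj⟩
  have he : ∀ x : closedBall (0:ℂ) 1, (e x : ℂ) = F x := fun x => rfl
  have hec : Continuous e := by
    rw [continuous_induced_rng]
    exact continuousOn_iff_continuous_domRestrict.1 hFc
  have : CompactSpace (closedBall (0:ℂ) 1) := isCompact_iff_compactSpace.1 (isCompact_closedBall _ _)
  refine ⟨(Continuous.homeoOfEquivCompactToT2 hec).symm, fun z hz => ?_⟩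
  have hz' : e ⟨φ z, ball_subset_closedBall (hφm hz)⟩ = z := Subtype.ext (by rw [he]; exact hF2 z hz)
  have : (Continuous.homeoOfEquivCompactToT2 hec).symm z = ⟨φ z, ball_subset_closedBall (hφm hz)⟩ := by
    rw [Homeomorph.symm_apply_eq]; exact hz'.symm
  rw [this]
end
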